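/- (Local well-posedness of the parabolic regularized equation.) Let ε ∈ (0,1], let s ∈ ℕ with s ≥ 4, and let φ ∈ H^s(𝕋) be real-valued. Then there exist T > 0 (depending on ε, s and ‖φ‖_{H⁴}) and a unique real-valued u ∈ C([0,T]; H^s(𝕋)) satisfying ∂_t u + ε∂_x⁴u + γ₀∂_x⁵u + γ₁∂_x³u + γ₂∂_x u = N(∂_x³u,∂_x²u,∂_xu,u) on [0,T]×𝕋 (equivalently, the associated Duhamel integral equation u(t) = U_ε(t)φ + ∫₀^t U_ε(t−t')N(u(t')) dt', where U_ε(t) is the Fourier multiplier with symbol exp(−εtk⁴ − it(γ₀k⁵ − γ₁k³ + γ₂k))) with u(0,·) = φ. Moreover, the solution extends uniquely to a maximal interval [0,T_ε) on which u ∈ C([0,T_ε); H^s(𝕋)), and either T_ε = ∞ or liminf_{t→T_ε} ‖u(t)‖_{H⁴} = ∞. -/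

import Mathlib

/- Local well-posedness of the parabolic regularized fifth order equation
   ∂_t u + ε∂_x⁴u + γ₀∂_x⁵u + γ₁∂_x³u + γ₂∂_x u = N(∂_x³u,∂_x²u,∂_xu,u). -/

namespace FifthOrderStmt14

/-- Fourier coefficient of a `2π`-periodic function `f : ℝ → ℝ`:
`f̂(k) = (1/2π) ∫_0^{2π} f(x) e^{-ikx} dx`. -/
noncomputable def fc (f : ℝ → ℝ) (k : ℤ) : ℂ :=
  (Complex.ofReal (2 * Real.pi))⁻¹ *
    ∫ x in (0:ℝ)..(2 * Real.pi), (f x : ℂ) * Complex.exp (-Complex.I * (k : ℂ) * (x : ℂ))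

/-- Sobolev norm `‖f‖_{H^s} = (Σ_k (1+k²)^s |f̂(k)|²)^{1/2}`. -/
noncomputable def hsNorm (s : ℕ) (f : ℝ → ℝ) : ℝ :=
  Real.sqrt (∑' k : ℤ, (1 + (k : ℝ) ^ 2) ^ s * ‖fc f k‖ ^ 2)

/-- `f` belongs to `H^s(𝕋)` (continuous representative, `2π`-periodic, finite `H^s` norm). -/
def MemHs (s : ℕ) (f : ℝ → ℝ) : Prop :=
  Continuous f ∧ Function.Periodic f (2 * Real.pi) ∧
    Summable (fun k : ℤ => (1 + (k : ℝ) ^ 2) ^ s * ‖fc f k‖ ^ 2)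

/-- The nonlinearity `N(∂_x³f, ∂_x²f, ∂_xf, f) = Σ_j λ_j (∂_x³f)^{a_j}(∂_x²f)^{b_j}(∂_xf)^{c_j}f^{d_j}`. -/
noncomputable def Nfun (j0 : ℕ) (lam : Fin j0 → ℝ) (a b c d : Fin j0 → ℕ)
    (f : ℝ → ℝ) (x : ℝ) : ℝ :=
  ∑ j : Fin j0, lam j * (iteratedDeriv 3 f x) ^ (a j) * (iteratedDeriv 2 f x) ^ (b j) *
    (deriv f x) ^ (c j) * (f x) ^ (d j)

/-- The functional `P_N(f) = Σ_j (λ_j b_j / 2π) ∫_𝕋 (∂_x³f)^{a_j}(∂_x²f)^{b_j-1}(∂_xf)^{c_j}f^{d_j} dx`. -/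
noncomputable def PN (j0 : ℕ) (lam : Fin j0 → ℝ) (a b c d : Fin j0 → ℕ) (f : ℝ → ℝ) : ℝ :=
  ∑ j : Fin j0, (lam j * (b j : ℝ) / (2 * Real.pi)) *
    ∫ x in (0:ℝ)..(2 * Real.pi),
      (iteratedDeriv 3 f x) ^ (a j) * (iteratedDeriv 2 f x) ^ (b j - 1) *
        (deriv f x) ^ (c j) * (f x) ^ (d j)

/-- `u` is a (distributional) solution of the regularized equation
`∂_t u + ε∂_x⁴u + γ₀∂_x⁵u + γ₁∂_x³u + γ₂∂_x u = N(∂_x³u,∂_x²u,∂_xu,u)` on `[T₁,T₂] × 𝕋`.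
(The even-order term `ε∂_x⁴` picks up sign `+` under four integrations by parts, hence the
`- ε ∂_x⁴ψ` in the identity below.) -/
def IsSolutionReg (ε γ0 γ1 γ2 : ℝ) (j0 : ℕ) (lam : Fin j0 → ℝ) (a b c d : Fin j0 → ℕ)
    (T1 T2 : ℝ) (u : ℝ → ℝ → ℝ) : Prop :=
  (∀ t ∈ Set.Icc T1 T2, ContDiff ℝ 3 (u t) ∧ Function.Periodic (u t) (2 * Real.pi)) ∧
  ∀ ψ : ℝ → ℝ → ℝ, ContDiff ℝ (⊤ : ℕ∞) (Function.uncurry ψ) →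
    (∀ t : ℝ, Function.Periodic (ψ t) (2 * Real.pi)) →
    (∀ t : ℝ, t ∉ Set.Ioo T1 T2 → ∀ x : ℝ, ψ t x = 0) →
    (∫ t in T1..T2, ∫ x in (0:ℝ)..(2 * Real.pi),
      (u t x * (deriv (fun τ : ℝ => ψ τ x) t
        - ε * iteratedDeriv 4 (ψ t) x
        + γ0 * iteratedDeriv 5 (ψ t) x
        + γ1 * iteratedDeriv 3 (ψ t) x
        + γ2 * deriv (ψ t) x)
      + Nfun j0 lam a b c d (u t) x * ψ t x)) = 0

/-- `t ↦ u(t)` is continuous from `A` into `H^s(𝕋)`. -/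
def ContInHs (s : ℕ) (A : Set ℝ) (u : ℝ → ℝ → ℝ) : Prop :=
  ∀ t₀ ∈ A, ∀ ε > 0, ∃ δ > 0, ∀ t ∈ A, |t - t₀| < δ →
    hsNorm s (fun x => u t x - u t₀ x) < ε

/-!
In Fourier variables the equation reads `y' = l y + F(y)`, mode by mode, with
`Re (l k) = -ε |k|⁴` and `F` built from convolutions. In the norm `∑ (1 + |k|)³ |y k|`, with the
supremum over time taken inside the sum, `F` is Lipschitz on bounded sets up to a loss of three
derivatives. Duhamel's formula gains four, and gaining only three leaves a factor which is small on
short time intervals. A fixed point therefore exists for a time depending only on this norm of the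
datum, hence only on its `H⁴` norm, which yields the blow-up alternative. The spare derivative makes
the nonlinear part of the solution smooth enough to carry the `H^s` regularity of the datum.

For uniqueness, testing a distributional solution against `χ(t) e^{-ikx}` shows that its Fourier
coefficients solve the same ordinary differential equations. Integrating the difference of two
solutions in time against `e^{-qt}` turns the parabolic gain into a contraction for large `q`.
-/

section WienerNorm

open scoped ENNReal NNReal

/-- The frequency weight `1 + |k|`. Unlike `(1 + k²)^{1/2}` it is submultiplicative with constant
one, which makes the weighted `ℓ¹` spaces below into algebras for convolution. -/
def weight (k : ℤ) : ℝ≥0 := 1 + ‖k‖₊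

lemma one_le_weight (k : ℤ) : 1 ≤ weight k := by simp [weight]

lemma coe_weight (k : ℤ) : (weight k : ℝ) = 1 + |(k : ℝ)| := by
  simp [weight, Int.norm_eq_abs]

lemma weight_add_le (m n : ℤ) : weight (m + n) ≤ weight m * weight n := by
  have h := nnnorm_add_le m n
  calc weight (m + n) ≤ 1 + (‖m‖₊ + ‖n‖₊) := by unfold weight; gcongr
    _ ≤ (1 + (‖m‖₊ + ‖n‖₊)) + ‖m‖₊ * ‖n‖₊ := le_self_add
    _ = weight m * weight n := by unfold weight; ring

variable {E F : Type*} [NormedAddCommGroup E] [NormedAddCommGroup F]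

/-- The weighted `ℓ¹` norm `∑ (1 + |k|)^r ‖a k‖`, i.e. the norm of `r` derivatives in the Wiener
algebra. It takes the value `⊤` on sequences outside the space. -/
noncomputable def wienerNorm (r : ℕ) (a : ℤ → E) : ℝ≥0∞ :=
  ∑' k, (weight k : ℝ≥0∞) ^ r * ‖a k‖ₑ

lemma wienerNorm_mono_left {r r' : ℕ} (h : r ≤ r') (a : ℤ → E) :
    wienerNorm r a ≤ wienerNorm r' a := by
  refine ENNReal.tsum_le_tsum fun k => ?_
  gcongr
  exact_mod_cast one_le_weight k

lemma wienerNorm_ne_top_of_le {r r' : ℕ} (h : r ≤ r') {a : ℤ → E} (ha : wienerNorm r' a ≠ ⊤) :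
    wienerNorm r a ≠ ⊤ := ne_top_of_le_ne_top ha (wienerNorm_mono_left h a)

lemma wienerNorm_le_of_norm_le (r : ℕ) {a : ℤ → E} {b : ℤ → F} (h : ∀ k, ‖a k‖ ≤ ‖b k‖) :
    wienerNorm r a ≤ wienerNorm r b := by
  refine ENNReal.tsum_le_tsum fun k => ?_
  gcongr
  exact enorm_le_iff_norm_le.2 (h k)

lemma enorm_le_wienerNorm (r : ℕ) (a : ℤ → E) (k : ℤ) : ‖a k‖ₑ ≤ wienerNorm r a := by
  calc ‖a k‖ₑ ≤ (weight k : ℝ≥0∞) ^ r * ‖a k‖ₑ :=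
        le_mul_of_one_le_left zero_le (one_le_pow₀ (by exact_mod_cast one_le_weight k))
    _ ≤ wienerNorm r a := ENNReal.le_tsum (f := fun k => (weight k : ℝ≥0∞) ^ r * ‖a k‖ₑ) k

lemma wienerNorm_zero (r : ℕ) : wienerNorm r (0 : ℤ → E) = 0 := by simp [wienerNorm]

lemma wienerNorm_add_le (r : ℕ) (a b : ℤ → E) :
    wienerNorm r (a + b) ≤ wienerNorm r a + wienerNorm r b := by
  unfold wienerNorm
  rw [← ENNReal.tsum_add]
  refine ENNReal.tsum_le_tsum fun k => ?_
  rw [← mul_add]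
  gcongr
  exact enorm_add_le _ _

lemma wienerNorm_sub_le (r : ℕ) (a b : ℤ → E) :
    wienerNorm r (a - b) ≤ wienerNorm r a + wienerNorm r b := by
  have hneg : wienerNorm r (-b) = wienerNorm r b := by simp [wienerNorm]
  rw [sub_eq_add_neg, ← hneg]
  exact wienerNorm_add_le _ _ _

lemma wienerNorm_sub_ne_top {r : ℕ} {a b : ℤ → E} (ha : wienerNorm r a ≠ ⊤)
    (hb : wienerNorm r b ≠ ⊤) : wienerNorm r (a - b) ≠ ⊤ :=
  ne_top_of_le_ne_top (ENNReal.add_ne_top.2 ⟨ha, hb⟩) (wienerNorm_sub_le _ _ _)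

lemma wienerNorm_sum_le {ι : Type*} (s : Finset ι) (r : ℕ) (a : ι → ℤ → E) :
    wienerNorm r (∑ i ∈ s, a i) ≤ ∑ i ∈ s, wienerNorm r (a i) := by
  classical
  induction s using Finset.induction_on with
  | empty => simp [wienerNorm_zero]
  | insert i s hi ih =>
    rw [Finset.sum_insert hi, Finset.sum_insert hi]
    exact (wienerNorm_add_le _ _ _).trans (by gcongr)

lemma wienerNorm_const_smul {𝕜 : Type*} [NormedField 𝕜] [NormedSpace 𝕜 E] (r : ℕ) (c : 𝕜)
    (a : ℤ → E) : wienerNorm r (c • a) = ‖c‖ₑ * wienerNorm r a := by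
  unfold wienerNorm
  rw [← ENNReal.tsum_mul_left]
  refine tsum_congr fun k => ?_
  rw [Pi.smul_apply, enorm_smul]
  ring

lemma wienerNorm_ne_top_iff {r : ℕ} {a : ℤ → E} :
    wienerNorm r a ≠ ⊤ ↔ Summable fun k => (weight k : ℝ) ^ r * ‖a k‖ := by
  have h : wienerNorm r a = ∑' k, (((weight k) ^ r * ‖a k‖₊ : ℝ≥0) : ℝ≥0∞) := by
    simp [wienerNorm, enorm_eq_nnnorm]
  rw [h, ENNReal.tsum_coe_ne_top_iff_summable, ← NNReal.summable_coe]
  simp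

lemma wienerNorm_zero_ne_top_iff {a : ℤ → E} :
    wienerNorm 0 a ≠ ⊤ ↔ Summable fun k => ‖a k‖ := by
  simpa using wienerNorm_ne_top_iff (r := 0) (a := a)

end WienerNorm

section Convolution

open scoped ENNReal NNReal

variable {B : Type*} [NormedCommRing B]

/-- Convolution of two sequences, the coefficients of the product of two Fourier series. -/
noncomputable def conv (a b : ℤ → B) (n : ℤ) : B := ∑' m, a m * b (n - m)

/-- The unit for convolution. -/
def convOne (k : ℤ) : B := if k = 0 then 1 else 0

/-- The `n`-fold convolution of a sequence with itself. -/
noncomputable def convPow (a : ℤ → B) : ℕ → ℤ → B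
  | 0 => convOne
  | n + 1 => conv a (convPow a n)

lemma weight_pow_mul_enorm_mul_le (r : ℕ) (a b : ℤ → B) (m n : ℤ) :
    (weight n : ℝ≥0∞) ^ r * ‖a m * b (n - m)‖ₑ ≤
      ((weight m : ℝ≥0∞) ^ r * ‖a m‖ₑ) * ((weight (n - m) : ℝ≥0∞) ^ r * ‖b (n - m)‖ₑ) := by
  have hw : (weight n : ℝ≥0∞) ≤ weight m * weight (n - m) := by
    have := weight_add_le m (n - m)
    rw [add_sub_cancel] at this
    exact_mod_cast this
  have hmul : ‖a m * b (n - m)‖ₑ ≤ ‖a m‖ₑ * ‖b (n - m)‖ₑ := by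
    simp only [enorm_eq_nnnorm, ← ENNReal.coe_mul]
    exact_mod_cast nnnorm_mul_le _ _
  calc (weight n : ℝ≥0∞) ^ r * ‖a m * b (n - m)‖ₑ
      ≤ (weight m * weight (n - m) : ℝ≥0∞) ^ r * (‖a m‖ₑ * ‖b (n - m)‖ₑ) := by gcongr
    _ = _ := by rw [mul_pow]; ring

lemma wienerNorm_conv_le (r : ℕ) (a b : ℤ → B) :
    wienerNorm r (conv a b) ≤ wienerNorm r a * wienerNorm r b := by
  calc wienerNorm r (conv a b)
      ≤ ∑' n, ∑' m, (weight n : ℝ≥0∞) ^ r * ‖a m * b (n - m)‖ₑ := by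
        refine ENNReal.tsum_le_tsum fun n => ?_
        rw [ENNReal.tsum_mul_left]
        gcongr
        exact enorm_tsum_le_tsum_enorm
    _ ≤ ∑' n, ∑' m, ((weight m : ℝ≥0∞) ^ r * ‖a m‖ₑ) *
          ((weight (n - m) : ℝ≥0∞) ^ r * ‖b (n - m)‖ₑ) :=
        ENNReal.tsum_le_tsum fun n => ENNReal.tsum_le_tsum fun m =>
          weight_pow_mul_enorm_mul_le r a b m n
    _ = ∑' m, ∑' n, ((weight m : ℝ≥0∞) ^ r * ‖a m‖ₑ) *
          ((weight (n - m) : ℝ≥0∞) ^ r * ‖b (n - m)‖ₑ) := ENNReal.tsum_comm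
    _ = ∑' m, ((weight m : ℝ≥0∞) ^ r * ‖a m‖ₑ) * wienerNorm r b := by
        refine tsum_congr fun m => ?_
        rw [ENNReal.tsum_mul_left]
        congr 1
        exact (Equiv.subRight m).tsum_eq (fun n => (weight n : ℝ≥0∞) ^ r * ‖b n‖ₑ)
    _ = wienerNorm r a * wienerNorm r b := by rw [ENNReal.tsum_mul_right]; rfl

lemma wienerNorm_conv_ne_top {r : ℕ} {a b : ℤ → B} (ha : wienerNorm r a ≠ ⊤)
    (hb : wienerNorm r b ≠ ⊤) : wienerNorm r (conv a b) ≠ ⊤ :=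
  ne_top_of_le_ne_top (ENNReal.mul_ne_top ha hb) (wienerNorm_conv_le r a b)

lemma wienerNorm_convOne (r : ℕ) : wienerNorm r (convOne : ℤ → B) = ‖(1 : B)‖ₑ := by
  rw [wienerNorm, tsum_eq_single 0 (by intro k hk; simp [convOne, hk])]
  simp [convOne, weight]

lemma wienerNorm_convPow_ne_top {r : ℕ} {u : ℤ → B} (hu : wienerNorm r u ≠ ⊤) (n : ℕ) :
    wienerNorm r (convPow u n) ≠ ⊤ := by
  induction n with
  | zero => rw [convPow, wienerNorm_convOne]; exact enorm_ne_top
  | succ n ih => exact wienerNorm_conv_ne_top hu ih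

variable [CompleteSpace B]

lemma summable_conv {a b : ℤ → B} (ha : wienerNorm 0 a ≠ ⊤) (hb : wienerNorm 0 b ≠ ⊤) (n : ℤ) :
    Summable fun m => a m * b (n - m) := by
  rw [wienerNorm_zero_ne_top_iff] at ha hb
  refine Summable.of_norm_bounded (ha.mul_right (∑' k, ‖b k‖)) fun m => ?_
  exact (norm_mul_le _ _).trans (by gcongr; exact hb.le_tsum _ fun _ _ => norm_nonneg _)

lemma conv_sub_conv {a a' b b' : ℤ → B} (ha : wienerNorm 0 a ≠ ⊤) (ha' : wienerNorm 0 a' ≠ ⊤)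
    (hb : wienerNorm 0 b ≠ ⊤) (hb' : wienerNorm 0 b' ≠ ⊤) :
    conv a b - conv a' b' = conv (a - a') b + conv a' (b - b') := by
  funext n
  rw [Pi.sub_apply, Pi.add_apply, conv, conv, conv, conv,
    ← (summable_conv ha hb n).tsum_sub (summable_conv ha' hb' n),
    ← Summable.tsum_add (summable_conv (wienerNorm_sub_ne_top ha ha') hb n)
      (summable_conv ha' (wienerNorm_sub_ne_top hb hb') n)]
  refine tsum_congr fun m => ?_
  simp only [Pi.sub_apply]
  ring

variable {B' : Type*} [NormedCommRing B'] [NormedSpace ℂ B] [NormedSpace ℂ B']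

lemma map_conv (e : B →L[ℂ] B') (he : ∀ x y, e (x * y) = e x * e y) {a b : ℤ → B}
    (ha : wienerNorm 0 a ≠ ⊤) (hb : wienerNorm 0 b ≠ ⊤) (n : ℤ) :
    e (conv a b n) = conv (fun k => e (a k)) (fun k => e (b k)) n := by
  simp only [conv]
  rw [e.map_tsum (summable_conv ha hb n)]
  exact tsum_congr fun m => he _ _

lemma map_convPow (e : B →L[ℂ] B') (he : ∀ x y, e (x * y) = e x * e y) (he1 : e 1 = 1)
    {a : ℤ → B} (ha : wienerNorm 0 a ≠ ⊤) (m : ℕ) (n : ℤ) :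
    e (convPow a m n) = convPow (fun k => e (a k)) m n := by
  induction m generalizing n with
  | zero => by_cases h : n = 0 <;> simp [convPow, convOne, h, he1]
  | succ m ih =>
    rw [convPow, convPow, map_conv e he ha (wienerNorm_convPow_ne_top ha m), funext ih]

end Convolution

section Derivatives

open scoped ENNReal NNReal

variable {E : Type*} [NormedAddCommGroup E] [NormedSpace ℂ E]

/-- The Fourier multiplier of `∂_x^i`. -/
noncomputable def fourierDeriv (i : ℕ) (a : ℤ → E) (k : ℤ) : E :=
  (Complex.I * (k : ℂ)) ^ i • a k

lemma fourierDeriv_zero (a : ℤ → E) : fourierDeriv 0 a = a := by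
  funext k; simp [fourierDeriv]

lemma fourierDeriv_fourierDeriv (i j : ℕ) (a : ℤ → E) :
    fourierDeriv i (fourierDeriv j a) = fourierDeriv (j + i) a := by
  funext k
  simp only [fourierDeriv, smul_smul, ← pow_add, add_comm]

lemma fourierDeriv_sub (i : ℕ) (a b : ℤ → E) :
    fourierDeriv i (a - b) = fourierDeriv i a - fourierDeriv i b := by
  funext k
  simp [fourierDeriv, smul_sub]

lemma wienerNorm_fourierDeriv_le (i r : ℕ) (a : ℤ → E) :
    wienerNorm r (fourierDeriv i a) ≤ wienerNorm (r + i) a := by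
  refine ENNReal.tsum_le_tsum fun k => ?_
  rw [fourierDeriv, enorm_smul, pow_add, mul_assoc]
  gcongr
  rw [← ENNReal.coe_pow, enorm_eq_nnnorm, ENNReal.coe_le_coe, nnnorm_pow]
  gcongr
  rw [← NNReal.coe_le_coe, coe_weight]
  simp [Int.norm_eq_abs]

lemma wienerNorm_fourierDeriv_ne_top {i r r' : ℕ} (h : r + i ≤ r') {a : ℤ → E}
    (ha : wienerNorm r' a ≠ ⊤) : wienerNorm r (fourierDeriv i a) ≠ ⊤ :=
  ne_top_of_le_ne_top (wienerNorm_ne_top_of_le h ha) (wienerNorm_fourierDeriv_le i r a)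

end Derivatives

section LipschitzLoss

open scoped ENNReal NNReal

/-- Nonlinear maps between sequence spaces which lose `p` derivatives: Lipschitz on bounded sets
from weight `p` to weight `0`, and mapping weight `r + p` to weight `r` for every `r`. -/
structure LipschitzLoss {E F : Type*} [NormedAddCommGroup E] [NormedAddCommGroup F] (p : ℕ)
    (Φ : (ℤ → E) → ℤ → F) : Prop where
  lipschitz : ∀ R : ℝ≥0, ∃ K : ℝ≥0, ∀ u v : ℤ → E, wienerNorm p u ≤ R → wienerNorm p v ≤ R →
    wienerNorm 0 (Φ u) ≤ K ∧ wienerNorm 0 (Φ u - Φ v) ≤ K * wienerNorm p (u - v)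
  regular : ∀ r u, wienerNorm (r + p) u ≠ ⊤ → wienerNorm r (Φ u) ≠ ⊤

namespace LipschitzLoss

variable {E F B : Type*} [NormedAddCommGroup E] [NormedAddCommGroup F] [NormedCommRing B] {p : ℕ}

lemma convOne : LipschitzLoss p (fun _ : ℤ → E => (convOne : ℤ → B)) where
  lipschitz R := ⟨‖(1 : B)‖₊, fun u v _ _ =>
    ⟨by rw [wienerNorm_convOne]; rfl, by simp [wienerNorm_zero]⟩⟩
  regular r u _ := by rw [wienerNorm_convOne]; exact enorm_ne_top

lemma fourierDeriv [NormedSpace ℂ E] {i : ℕ} (hi : i ≤ p) :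
    LipschitzLoss p (fun u : ℤ → E => fourierDeriv i u) where
  lipschitz R := by
    have hle (w : ℤ → E) :
        wienerNorm 0 (FifthOrderStmt14.fourierDeriv i w) ≤ wienerNorm p w :=
      (wienerNorm_fourierDeriv_le i 0 w).trans (wienerNorm_mono_left (by omega) w)
    refine ⟨R + 1, fun u v hu _ => ⟨(hle u).trans (hu.trans ?_), ?_⟩⟩
    · exact_mod_cast le_self_add
    · rw [← fourierDeriv_sub]
      refine (hle _).trans (le_mul_of_one_le_left zero_le ?_)
      exact_mod_cast le_add_self
  regular r u hu := wienerNorm_fourierDeriv_ne_top (by omega) hu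

lemma smul [NormedSpace ℂ F] {Φ : (ℤ → E) → ℤ → F} (hΦ : LipschitzLoss p Φ) (c : ℂ) :
    LipschitzLoss p (fun u => c • Φ u) where
  lipschitz R := by
    obtain ⟨K, hK⟩ := hΦ.lipschitz R
    refine ⟨‖c‖₊ * K, fun u v hu hv => ⟨?_, ?_⟩⟩
    · rw [wienerNorm_const_smul, ENNReal.coe_mul]
      exact mul_le_mul' le_rfl (hK u v hu hv).1
    · rw [← smul_sub, wienerNorm_const_smul, ENNReal.coe_mul, mul_assoc]
      exact mul_le_mul' le_rfl (hK u v hu hv).2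
  regular r u hu := by
    rw [wienerNorm_const_smul]
    exact ENNReal.mul_ne_top enorm_ne_top (hΦ.regular r u hu)

lemma sum {ι : Type*} (s : Finset ι) {Φ : ι → (ℤ → E) → ℤ → F}
    (hΦ : ∀ i, LipschitzLoss p (Φ i)) : LipschitzLoss p (fun u => ∑ i ∈ s, Φ i u) where
  lipschitz R := by
    choose K hK using fun i => (hΦ i).lipschitz R
    refine ⟨∑ i ∈ s, K i, fun u v hu hv => ⟨?_, ?_⟩⟩
    · refine (wienerNorm_sum_le _ _ _).trans ?_
      push_cast
      exact Finset.sum_le_sum fun i _ => (hK i u v hu hv).1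
    · rw [← Finset.sum_sub_distrib]
      refine (wienerNorm_sum_le _ _ _).trans ?_
      push_cast
      rw [Finset.sum_mul]
      exact Finset.sum_le_sum fun i _ => (hK i u v hu hv).2
  regular r u hu := ne_top_of_le_ne_top
    (ENNReal.sum_ne_top.2 fun i _ => (hΦ i).regular r u hu) (wienerNorm_sum_le _ _ _)

variable [CompleteSpace B]

lemma conv {Φ Ψ : (ℤ → E) → ℤ → B} (hΦ : LipschitzLoss p Φ) (hΨ : LipschitzLoss p Ψ) :
    LipschitzLoss p (fun u => conv (Φ u) (Ψ u)) where
  lipschitz R := by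
    obtain ⟨K, hK⟩ := hΦ.lipschitz R
    obtain ⟨L, hL⟩ := hΨ.lipschitz R
    refine ⟨K * L + K * L, fun u v hu hv => ⟨?_, ?_⟩⟩
    · refine (wienerNorm_conv_le 0 _ _).trans ?_
      refine (mul_le_mul' (hK u v hu hv).1 (hL u v hu hv).1).trans ?_
      exact_mod_cast le_self_add
    · have hfin {x : ℝ≥0∞} {M : ℝ≥0} (h : x ≤ M) : x ≠ ⊤ :=
        ne_top_of_le_ne_top ENNReal.coe_ne_top h
      rw [conv_sub_conv (hfin (hK u v hu hv).1) (hfin (hK v u hv hu).1) (hfin (hL u v hu hv).1)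
        (hfin (hL v u hv hu).1)]
      calc _ ≤ _ := wienerNorm_add_le _ _ _
        _ ≤ wienerNorm 0 (Φ u - Φ v) * wienerNorm 0 (Ψ u)
            + wienerNorm 0 (Φ v) * wienerNorm 0 (Ψ u - Ψ v) :=
          add_le_add (wienerNorm_conv_le _ _ _) (wienerNorm_conv_le _ _ _)
        _ ≤ (K * wienerNorm p (u - v)) * L + K * (L * wienerNorm p (u - v)) := by
          gcongr
          · exact (hK u v hu hv).2
          · exact (hL u v hu hv).1
          · exact (hK v u hv hu).1
          · exact (hL u v hu hv).2
        _ = _ := by push_cast; ring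
  regular r u hu := wienerNorm_conv_ne_top (hΦ.regular r u hu) (hΨ.regular r u hu)

lemma convPow {Φ : (ℤ → E) → ℤ → B} (hΦ : LipschitzLoss p Φ) (n : ℕ) :
    LipschitzLoss p (fun u => convPow (Φ u) n) := by
  induction n with
  | zero => exact LipschitzLoss.convOne
  | succ n ih => exact hΦ.conv ih

end LipschitzLoss

end LipschitzLoss

section Nonlinearity

open scoped ENNReal NNReal

variable {B : Type*} [NormedCommRing B] [NormedAlgebra ℂ B]

/-- The Fourier coefficients of the monomial `(∂_x³u)^{n₃} (∂_x²u)^{n₂} (∂_xu)^{n₁} u^{n₀}`. -/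
noncomputable def monomialSeq (n₃ n₂ n₁ n₀ : ℕ) (u : ℤ → B) : ℤ → B :=
  conv (convPow (fourierDeriv 3 u) n₃) (conv (convPow (fourierDeriv 2 u) n₂)
    (conv (convPow (fourierDeriv 1 u) n₁) (convPow (fourierDeriv 0 u) n₀)))

/-- The nonlinearity acting on sequences of Fourier coefficients. The coefficients live in `ℂ` for
a function of `x`, and in the bounded continuous functions of `t` for a function of `(t, x)`. -/
noncomputable def nonlinSeq (j0 : ℕ) (lam : Fin j0 → ℝ) (a b c d : Fin j0 → ℕ)
    (u : ℤ → B) : ℤ → B :=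
  ∑ j, (lam j : ℂ) • monomialSeq (a j) (b j) (c j) (d j) u

variable [CompleteSpace B]

lemma lipschitzLoss_monomialSeq (n₃ n₂ n₁ n₀ : ℕ) :
    LipschitzLoss 3 (monomialSeq n₃ n₂ n₁ n₀ : (ℤ → B) → ℤ → B) := by
  have hpow {i : ℕ} (hi : i ≤ 3) (n : ℕ) :
      LipschitzLoss 3 fun u : ℤ → B => convPow (fourierDeriv i u) n :=
    (LipschitzLoss.fourierDeriv hi).convPow n
  exact (hpow le_rfl n₃).conv ((hpow (by norm_num) n₂).conv
    ((hpow (by norm_num) n₁).conv (hpow (by norm_num) n₀)))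

lemma lipschitzLoss_nonlinSeq (j0 : ℕ) (lam : Fin j0 → ℝ) (a b c d : Fin j0 → ℕ) :
    LipschitzLoss 3 (nonlinSeq j0 lam a b c d : (ℤ → B) → ℤ → B) :=
  LipschitzLoss.sum _ fun j => (lipschitzLoss_monomialSeq (a j) (b j) (c j) (d j)).smul (lam j : ℂ)

lemma map_monomialSeq {B' : Type*} [NormedCommRing B'] [NormedAlgebra ℂ B'] (e : B →L[ℂ] B')
    (he : ∀ x y, e (x * y) = e x * e y) (he1 : e 1 = 1) (n₃ n₂ n₁ n₀ : ℕ) {u : ℤ → B}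
    (hu : wienerNorm 3 u ≠ ⊤) (k : ℤ) :
    e (monomialSeq n₃ n₂ n₁ n₀ u k) = monomialSeq n₃ n₂ n₁ n₀ (fun k => e (u k)) k := by
  have hderiv {i : ℕ} (hi : i ≤ 3) : wienerNorm 0 (fourierDeriv i u) ≠ ⊤ :=
    wienerNorm_fourierDeriv_ne_top (by omega) hu
  have hpow {i : ℕ} (hi : i ≤ 3) (n : ℕ) : wienerNorm 0 (convPow (fourierDeriv i u) n) ≠ ⊤ :=
    wienerNorm_convPow_ne_top (hderiv hi) n
  have hmap {i : ℕ} (hi : i ≤ 3) (n : ℕ) : (fun k => e (convPow (fourierDeriv i u) n k)) =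
      convPow (fourierDeriv i fun k => e (u k)) n := by
    funext k
    rw [map_convPow e he he1 (hderiv hi)]
    congr 1
    funext m
    simp [fourierDeriv]
  have h0 := hpow (i := 0) (by norm_num) n₀
  have h1 := wienerNorm_conv_ne_top (hpow (i := 1) (by norm_num) n₁) h0
  have h2 := wienerNorm_conv_ne_top (hpow (i := 2) (by norm_num) n₂) h1
  rw [monomialSeq, monomialSeq, map_conv e he (hpow le_rfl _) h2, hmap le_rfl,
    funext (map_conv e he (hpow (by norm_num) _) h1), hmap (by norm_num),
    funext (map_conv e he (hpow (by norm_num) _) h0), hmap (by norm_num), hmap (by norm_num)]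

lemma map_nonlinSeq {B' : Type*} [NormedCommRing B'] [NormedAlgebra ℂ B'] (e : B →L[ℂ] B')
    (he : ∀ x y, e (x * y) = e x * e y) (he1 : e 1 = 1) (j0 : ℕ) (lam : Fin j0 → ℝ)
    (a b c d : Fin j0 → ℕ) {u : ℤ → B} (hu : wienerNorm 3 u ≠ ⊤) (k : ℤ) :
    e (nonlinSeq j0 lam a b c d u k) = nonlinSeq j0 lam a b c d (fun k => e (u k)) k := by
  simp only [nonlinSeq, Finset.sum_apply, Pi.smul_apply, map_sum, map_smul,
    map_monomialSeq e he he1 _ _ _ _ hu]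

end Nonlinearity

section FourierSeries

open scoped ENNReal NNReal

/-- The plane wave `e^{ikx}`. -/
noncomputable def wave (k : ℤ) (x : ℝ) : ℂ := Complex.exp (Complex.I * k * x)

lemma norm_wave (k : ℤ) (x : ℝ) : ‖wave k x‖ = 1 := by
  have : Complex.I * k * x = ((k * x : ℝ) : ℂ) * Complex.I := by push_cast; ring
  rw [wave, this, Complex.norm_exp_ofReal_mul_I]

lemma wave_zero (x : ℝ) : wave 0 x = 1 := by simp [wave]

lemma wave_add (m n : ℤ) (x : ℝ) : wave (m + n) x = wave m x * wave n x := by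
  rw [wave, wave, wave, ← Complex.exp_add]
  congr 1; push_cast; ring

lemma star_wave (k : ℤ) (x : ℝ) : star (wave k x) = wave (-k) x := by
  simp only [wave, Complex.star_def, ← Complex.exp_conj]
  congr 1
  simp

lemma contDiff_wave (k : ℤ) {n : ℕ∞} : ContDiff ℝ n (wave k) :=
  (contDiff_const.mul Complex.ofRealCLM.contDiff).cexp

lemma continuous_wave (k : ℤ) : Continuous (wave k) := (contDiff_wave k (n := 0)).continuous

lemma hasDerivAt_wave (k : ℤ) (x : ℝ) : HasDerivAt (wave k) (Complex.I * k * wave k x) x := by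
  have h : HasDerivAt (fun y : ℝ => Complex.I * k * (y : ℂ)) (Complex.I * k) x := by
    simpa using (Complex.ofRealCLM.hasDerivAt (x := x)).const_mul (Complex.I * (k : ℂ))
  convert! h.cexp using 1
  rw [wave, mul_comm]

lemma periodic_wave (k : ℤ) : Function.Periodic (wave k) (2 * Real.pi) := by
  intro x
  rw [wave, wave, Complex.exp_eq_exp_iff_exists_int]
  exact ⟨k, by push_cast; ring⟩

lemma integral_wave (k : ℤ) :
    ∫ x in (0 : ℝ)..(2 * Real.pi), wave k x = if k = 0 then 2 * Real.pi else 0 := by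
  split_ifs with h
  · simp [h, wave]
  · have hk : (Complex.I * k) ≠ 0 := by simp [h]
    have hper : wave k (2 * Real.pi) = wave k 0 := by simpa using periodic_wave k 0
    simp only [wave] at hper ⊢
    rw [integral_exp_mul_complex hk, hper, sub_self, zero_div, Complex.ofReal_zero]

/-- The sum of the Fourier series with coefficients `a`; meaningful when `wienerNorm 0 a ≠ ⊤`. -/
noncomputable def fourierSeries (a : ℤ → ℂ) (x : ℝ) : ℂ := ∑' k, a k * wave k x

lemma summable_norm_mul_wave {a : ℤ → ℂ} (ha : wienerNorm 0 a ≠ ⊤) (x : ℝ) :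
    Summable fun k => ‖a k * wave k x‖ := by
  simpa [norm_wave] using wienerNorm_zero_ne_top_iff.1 ha

lemma continuous_fourierSeries {a : ℤ → ℂ} (ha : wienerNorm 0 a ≠ ⊤) :
    Continuous (fourierSeries a) :=
  continuous_tsum (fun k => continuous_const.mul (continuous_wave k))
    (wienerNorm_zero_ne_top_iff.1 ha) fun k x => by simp [norm_wave]

lemma periodic_fourierSeries (a : ℤ → ℂ) : Function.Periodic (fourierSeries a) (2 * Real.pi) :=
  fun x => tsum_congr fun k => by rw [periodic_wave k x]

/-- The symmetry `a (-k) = star (a k)` characterizing the Fourier coefficients of real-valued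
functions. -/
def HermitianSymm {B : Type*} [Star B] (a : ℤ → B) : Prop := ∀ k, a (-k) = star (a k)

lemma HermitianSymm.ofReal_re_fourierSeries {a : ℤ → ℂ} (ha : HermitianSymm a) (x : ℝ) :
    ((fourierSeries a x).re : ℂ) = fourierSeries a x := by
  rw [← Complex.conj_eq_iff_re, ← Complex.star_def, fourierSeries, tsum_star,
    ← (Equiv.neg ℤ).tsum_eq]
  refine tsum_congr fun k => ?_
  rw [Equiv.neg_apply, star_mul', star_wave, ha, star_star, neg_neg]

lemma fourierSeries_conv {a b : ℤ → ℂ} (ha : wienerNorm 0 a ≠ ⊤) (hb : wienerNorm 0 b ≠ ⊤)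
    (x : ℝ) : fourierSeries (conv a b) x = fourierSeries a x * fourierSeries b x := by
  have hsum := summable_mul_of_summable_norm (summable_norm_mul_wave ha x)
    (summable_norm_mul_wave hb x)
  let e : ℤ × ℤ ≃ ℤ × ℤ :=
    { toFun := fun p => (p.2, p.1 - p.2)
      invFun := fun p => (p.1 + p.2, p.1)
      left_inv := fun p => by ext <;> simp
      right_inv := fun p => by ext <;> simp }
  rw [fourierSeries, fourierSeries, fourierSeries,
    tsum_mul_tsum_of_summable_norm (summable_norm_mul_wave ha x) (summable_norm_mul_wave hb x),
    ← e.tsum_eq, Summable.tsum_prod (by exact e.summable_iff.2 hsum)]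
  refine tsum_congr fun n => ?_
  rw [conv, ← tsum_mul_right]
  refine tsum_congr fun m => ?_
  have : wave n x = wave m x * wave (n - m) x := by rw [← wave_add, add_sub_cancel]
  simp only [e, Equiv.coe_fn_mk]
  rw [this]; ring

lemma fourierSeries_convPow {a : ℤ → ℂ} (ha : wienerNorm 0 a ≠ ⊤) (n : ℕ) (x : ℝ) :
    fourierSeries (convPow a n) x = fourierSeries a x ^ n := by
  induction n with
  | zero =>
    rw [fourierSeries, tsum_eq_single 0 (by intro k hk; simp [convPow, convOne, hk])]
    simp [convPow, convOne, wave_zero]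
  | succ n ih =>
    rw [convPow, fourierSeries_conv ha (wienerNorm_convPow_ne_top ha n), ih, pow_succ']

lemma hasDerivAt_fourierSeries {a : ℤ → ℂ} (ha : wienerNorm 1 a ≠ ⊤) (x : ℝ) :
    HasDerivAt (fourierSeries a) (fourierSeries (fourierDeriv 1 a) x) x := by
  have hsum := wienerNorm_ne_top_iff.1 ha
  simp only [pow_one] at hsum
  refine hasDerivAt_tsum (g' := fun k y => fourierDeriv 1 a k * wave k y) (y₀ := 0) hsum
    (fun k y => ?_) (fun k y => ?_) ?_ x
  · convert! (hasDerivAt_wave k y).const_mul (a k) using 1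
    simp [fourierDeriv]; ring
  · rw [norm_mul, norm_wave, mul_one, fourierDeriv, norm_smul, pow_one, coe_weight]
    gcongr
    simp
  · exact (summable_norm_mul_wave (wienerNorm_ne_top_of_le zero_le_one ha) 0).of_norm

lemma hasDerivAt_re_of_hasDerivAt_ofReal {f : ℝ → ℝ} {z : ℂ} {x : ℝ}
    (h : HasDerivAt (fun y => (f y : ℂ)) z x) : HasDerivAt f z.re x ∧ z.im = 0 := by
  refine ⟨by simpa [Function.comp_def] using Complex.reCLM.hasFDerivAt.comp_hasDerivAt x h, ?_⟩
  have him : HasDerivAt (fun _ : ℝ => (0 : ℝ)) z.im x := by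
    simpa [Function.comp_def] using Complex.imCLM.hasFDerivAt.comp_hasDerivAt x h
  exact him.unique (hasDerivAt_const _ _)

variable {a : ℤ → ℂ} {f : ℝ → ℝ} (hf : ∀ x, (f x : ℂ) = fourierSeries a x)

include hf

lemma differentiable_of_eq_fourierSeries (ha : wienerNorm 1 a ≠ ⊤) : Differentiable ℝ f := by
  intro x
  have h := hasDerivAt_fourierSeries ha x
  rw [← funext hf] at h
  exact (hasDerivAt_re_of_hasDerivAt_ofReal h).1.differentiableAt

lemma deriv_of_eq_fourierSeries (ha : wienerNorm 1 a ≠ ⊤) (x : ℝ) :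
    ((deriv f x : ℝ) : ℂ) = fourierSeries (fourierDeriv 1 a) x := by
  have h := hasDerivAt_fourierSeries ha x
  rw [← funext hf] at h
  obtain ⟨hre, him⟩ := hasDerivAt_re_of_hasDerivAt_ofReal h
  rw [hre.deriv]
  apply Complex.ext <;> simp [him]

lemma iteratedDeriv_of_eq_fourierSeries (n : ℕ) (ha : wienerNorm n a ≠ ⊤) (x : ℝ) :
    ((iteratedDeriv n f x : ℝ) : ℂ) = fourierSeries (fourierDeriv n a) x := by
  induction n generalizing x with
  | zero => simp [fourierDeriv_zero, hf]
  | succ n ih =>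
    rw [iteratedDeriv_succ, deriv_of_eq_fourierSeries (ih (wienerNorm_ne_top_of_le (by omega) ha))
      (wienerNorm_fourierDeriv_ne_top (by omega) ha), fourierDeriv_fourierDeriv]

lemma contDiff_of_eq_fourierSeries (n : ℕ) (ha : wienerNorm n a ≠ ⊤) : ContDiff ℝ n f := by
  rw [contDiff_nat_iff_iteratedDeriv]
  refine ⟨fun m hm => ?_, fun m hm => ?_⟩
  · have h := iteratedDeriv_of_eq_fourierSeries hf m (wienerNorm_ne_top_of_le hm ha)
    have hc := continuous_fourierSeries
      (wienerNorm_fourierDeriv_ne_top (i := m) (r := 0) (by omega) ha)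
    rw [← funext h] at hc
    exact Complex.continuous_re.comp hc
  · exact differentiable_of_eq_fourierSeries
      (iteratedDeriv_of_eq_fourierSeries hf m (wienerNorm_ne_top_of_le hm.le ha))
      (wienerNorm_fourierDeriv_ne_top (by omega) ha)

lemma periodic_of_eq_fourierSeries : Function.Periodic f (2 * Real.pi) := by
  intro x
  exact_mod_cast (hf _).trans ((periodic_fourierSeries a x).trans (hf x).symm)

end FourierSeries

section FourierCoefficients

open MeasureTheory

lemma hasSum_intervalIntegral_of_norm_le {ι E : Type*} [Countable ι] [NormedAddCommGroup E]
    [NormedSpace ℝ E] [CompleteSpace E] {F : ι → ℝ → E} {A : ι → ℝ} {a b : ℝ} (hab : a ≤ b)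
    (hF : ∀ n, ContinuousOn (F n) (Set.Icc a b)) (hA : Summable A)
    (hb : ∀ n, ∀ x ∈ Set.Icc a b, ‖F n x‖ ≤ A n) :
    HasSum (fun n => ∫ x in a..b, F n x) (∫ x in a..b, ∑' n, F n x) := by
  have hsub : Set.uIoc a b ⊆ Set.Icc a b := by
    rw [Set.uIoc_of_le hab]; exact Set.Ioc_subset_Icc_self
  refine intervalIntegral.hasSum_integral_of_dominated_convergence (fun n _ => A n)
    (fun n => ((hF n).mono hsub).aestronglyMeasurable measurableSet_uIoc)
    (fun n => ae_of_all _ fun x hx => hb n x (hsub hx)) (ae_of_all _ fun x _ => hA)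
    intervalIntegrable_const (ae_of_all _ fun x hx => Summable.hasSum ?_)
  exact Summable.of_norm_bounded hA fun n => hb n x (hsub hx)

lemma fc_eq_integral_wave (f : ℝ → ℝ) (k : ℤ) : fc f k =
    (Complex.ofReal (2 * Real.pi))⁻¹ * ∫ x in (0 : ℝ)..(2 * Real.pi), (f x : ℂ) * wave (-k) x := by
  simp [fc, wave]

lemma fc_const_mul (c : ℝ) (f : ℝ → ℝ) (k : ℤ) : fc (fun x => c * f x) k = c * fc f k := by
  simp only [fc, Complex.ofReal_mul, mul_assoc, intervalIntegral.integral_const_mul]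
  ring

lemma fc_add {f g : ℝ → ℝ} (hf : Continuous f) (hg : Continuous g) (k : ℤ) :
    fc (fun x => f x + g x) k = fc f k + fc g k := by
  have hint {h : ℝ → ℝ} (hh : Continuous h) : IntervalIntegrable
      (fun x => (h x : ℂ) * wave (-k) x) volume 0 (2 * Real.pi) :=
    ((Complex.continuous_ofReal.comp hh).mul (continuous_wave _)).intervalIntegrable _ _
  simp only [fc_eq_integral_wave]
  rw [← mul_add, ← intervalIntegral.integral_add (hint hf) (hint hg)]
  simp only [Complex.ofReal_add, add_mul]

lemma fc_sub {f g : ℝ → ℝ} (hf : Continuous f) (hg : Continuous g) (k : ℤ) :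
    fc (fun x => f x - g x) k = fc f k - fc g k := by
  have h := fc_add hf (hg.const_mul (-1)) k
  rw [fc_const_mul] at h
  simpa [← sub_eq_add_neg] using h

lemma hermitianSymm_fc (f : ℝ → ℝ) : HermitianSymm (fc f) := by
  intro k
  rw [fc_eq_integral_wave, fc_eq_integral_wave, star_mul', Complex.star_def,
    ← intervalIntegral.intervalIntegral_conj]
  congr 1
  · rw [map_inv₀, Complex.conj_ofReal]
  · refine intervalIntegral.integral_congr fun x _ => ?_
    simp only [map_mul, Complex.conj_ofReal, ← Complex.star_def, star_wave]

lemma fc_of_eq_fourierSeries {a : ℤ → ℂ} (ha : wienerNorm 0 a ≠ ⊤) {f : ℝ → ℝ}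
    (hf : ∀ x, (f x : ℂ) = fourierSeries a x) (k : ℤ) : fc f k = a k := by
  have hsum := hasSum_intervalIntegral_of_norm_le (F := fun n x => a n * wave (n - k) x)
    (A := fun n => ‖a n‖) (a := 0) (b := 2 * Real.pi) (by positivity)
    (fun n => (continuous_const.mul (continuous_wave _)).continuousOn)
    (wienerNorm_zero_ne_top_iff.1 ha) (fun n x _ => by simp [norm_wave])
  have horth (n : ℤ) : ∫ x in (0 : ℝ)..(2 * Real.pi), a n * wave (n - k) x =
      if n = k then a k * (2 * Real.pi) else 0 := by
    rw [intervalIntegral.integral_const_mul, integral_wave]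
    by_cases hn : n = k
    · simp [hn]
    · simp [hn, sub_eq_zero]
  have hshift (x : ℝ) : ∑' n, a n * wave (n - k) x = (f x : ℂ) * wave (-k) x := by
    rw [hf, fourierSeries, ← tsum_mul_right]
    refine tsum_congr fun n => ?_
    rw [sub_eq_add_neg, wave_add]; ring
  simp_rw [horth, hshift] at hsum
  rw [fc_eq_integral_wave, hsum.unique (hasSum_ite_eq k _)]
  have : (Real.pi : ℂ) ≠ 0 := by exact_mod_cast Real.pi_ne_zero
  push_cast
  field_simp

lemma fourier_two_pi_eq_wave (n : ℤ) (x : ℝ) :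
    fourier n (x : AddCircle (2 * Real.pi)) = wave n x := by
  rw [fourier_coe_apply, wave]
  congr 1
  have : (Real.pi : ℂ) ≠ 0 := by exact_mod_cast Real.pi_ne_zero
  push_cast
  field_simp

lemma eq_fourierSeries_fc {f : ℝ → ℝ} (hc : Continuous f)
    (hp : Function.Periodic f (2 * Real.pi)) (hs : wienerNorm 0 (fc f) ≠ ⊤) (x : ℝ) :
    (f x : ℂ) = fourierSeries (fc f) x := by
  have : Fact (0 < 2 * Real.pi) := ⟨by positivity⟩
  have hp' : Function.Periodic (fun x => (f x : ℂ)) (2 * Real.pi) := fun x => by simp only [hp x]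
  let F : C(AddCircle (2 * Real.pi), ℂ) :=
    ⟨hp'.lift, continuous_coinduced_dom.2 (Complex.continuous_ofReal.comp hc)⟩
  have hF (x : ℝ) : F (x : AddCircle (2 * Real.pi)) = f x := rfl
  have hcoeff (k : ℤ) : fourierCoeff F k = fc f k := by
    rw [fourierCoeff_eq_intervalIntegral F k 0, fc_eq_integral_wave, zero_add, Complex.real_smul]
    simp_rw [fourier_two_pi_eq_wave, hF, smul_eq_mul]
    push_cast
    rw [one_div]
    congr 1
    exact intervalIntegral.integral_congr fun x _ => mul_comm _ _
  have hsum : Summable (fourierCoeff F) := by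
    rw [funext hcoeff]
    exact (wienerNorm_zero_ne_top_iff.1 hs).of_norm
  rw [← hF, ← (has_pointwise_sum_fourier_series_of_summable hsum _).tsum_eq, fourierSeries]
  refine tsum_congr fun k => ?_
  rw [hcoeff, fourier_two_pi_eq_wave, smul_eq_mul]

end FourierCoefficients

section NonlinearityCoefficients

open scoped ENNReal NNReal

variable {u : ℤ → ℂ} (hu : wienerNorm 3 u ≠ ⊤)

include hu

lemma fourierSeries_monomialSeq (n₃ n₂ n₁ n₀ : ℕ) (x : ℝ) :
    fourierSeries (monomialSeq n₃ n₂ n₁ n₀ u) x =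
      fourierSeries (fourierDeriv 3 u) x ^ n₃ * (fourierSeries (fourierDeriv 2 u) x ^ n₂ *
        (fourierSeries (fourierDeriv 1 u) x ^ n₁ * fourierSeries (fourierDeriv 0 u) x ^ n₀)) := by
  have hderiv {i : ℕ} (hi : i ≤ 3) : wienerNorm 0 (fourierDeriv i u) ≠ ⊤ :=
    wienerNorm_fourierDeriv_ne_top (by omega) hu
  have hpow {i : ℕ} (hi : i ≤ 3) (n : ℕ) : wienerNorm 0 (convPow (fourierDeriv i u) n) ≠ ⊤ :=
    wienerNorm_convPow_ne_top (hderiv hi) n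
  have h0 := hpow (i := 0) (by norm_num) n₀
  have h1 := wienerNorm_conv_ne_top (hpow (i := 1) (by norm_num) n₁) h0
  have h2 := wienerNorm_conv_ne_top (hpow (i := 2) (by norm_num) n₂) h1
  rw [monomialSeq, fourierSeries_conv (hpow le_rfl _) h2,
    fourierSeries_conv (hpow (by norm_num) _) h1, fourierSeries_conv (hpow (by norm_num) _) h0,
    fourierSeries_convPow (hderiv le_rfl), fourierSeries_convPow (hderiv (by norm_num)),
    fourierSeries_convPow (hderiv (by norm_num)), fourierSeries_convPow (hderiv (by norm_num))]

variable (j0 : ℕ) (lam : Fin j0 → ℝ) (a b c d : Fin j0 → ℕ)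

lemma fourierSeries_nonlinSeq (x : ℝ) : fourierSeries (nonlinSeq j0 lam a b c d u) x =
    ∑ j, (lam j : ℂ) * fourierSeries (monomialSeq (a j) (b j) (c j) (d j) u) x := by
  have hsum (j : Fin j0) :
      Summable fun k => monomialSeq (a j) (b j) (c j) (d j) u k * wave k x :=
    (summable_norm_mul_wave ((lipschitzLoss_monomialSeq _ _ _ _).regular 0 u hu) x).of_norm
  simp only [fourierSeries, nonlinSeq, Finset.sum_apply, Pi.smul_apply, smul_eq_mul,
    Finset.sum_mul, mul_assoc]
  rw [Summable.tsum_finsetSum fun j _ => (hsum j).mul_left _]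
  exact Finset.sum_congr rfl fun j _ => tsum_mul_left

variable {f : ℝ → ℝ} (hf : ∀ x, (f x : ℂ) = fourierSeries u x)

include hf

lemma Nfun_of_eq_fourierSeries (x : ℝ) :
    (Nfun j0 lam a b c d f x : ℂ) = fourierSeries (nonlinSeq j0 lam a b c d u) x := by
  have hderiv {i : ℕ} (hi : i ≤ 3) := iteratedDeriv_of_eq_fourierSeries hf i
    (wienerNorm_ne_top_of_le hi hu) x
  simp only [fourierSeries_nonlinSeq hu, fourierSeries_monomialSeq hu]
  rw [← hderiv le_rfl, ← hderiv (by norm_num), ← hderiv (by norm_num), ← hderiv (by norm_num)]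
  simp [Nfun, iteratedDeriv_one, mul_assoc]

lemma fc_Nfun_of_eq_fourierSeries (k : ℤ) :
    fc (Nfun j0 lam a b c d f) k = nonlinSeq j0 lam a b c d u k :=
  fc_of_eq_fourierSeries ((lipschitzLoss_nonlinSeq j0 lam a b c d).regular 0 u hu)
    (Nfun_of_eq_fourierSeries hu j0 lam a b c d hf) k

omit f hf in
lemma HermitianSymm.nonlinSeq (hsymm : HermitianSymm u) :
    HermitianSymm (nonlinSeq j0 lam a b c d u) := by
  have h := fc_Nfun_of_eq_fourierSeries hu j0 lam a b c d
    (f := fun x => (fourierSeries u x).re) hsymm.ofReal_re_fourierSeries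
  rw [← funext h]
  exact hermitianSymm_fc _

end NonlinearityCoefficients

section Sobolev

open scoped ENNReal NNReal

variable {E F : Type*} [NormedAddCommGroup E] [NormedAddCommGroup F]

/-- Membership in `H^s` for a sequence of Fourier coefficients. -/
def SobolevSummable (s : ℕ) (a : ℤ → E) : Prop :=
  Summable fun k : ℤ => (1 + (k : ℝ) ^ 2) ^ s * ‖a k‖ ^ 2

/-- The square of the `H^s` norm of a sequence of Fourier coefficients; meaningful under
`SobolevSummable s a`. -/
noncomputable def sobolevSq (s : ℕ) (a : ℤ → E) : ℝ :=
  ∑' k : ℤ, (1 + (k : ℝ) ^ 2) ^ s * ‖a k‖ ^ 2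

lemma hsNorm_eq_sqrt_sobolevSq (s : ℕ) (f : ℝ → ℝ) : hsNorm s f = √(sobolevSq s (fc f)) := rfl

lemma bracket_pow_mul_norm_sq_le {s s' : ℕ} (h : s' ≤ s) {a : ℤ → E} {b : ℤ → F} {k : ℤ}
    (hb : ‖b k‖ ≤ ‖a k‖) :
    (1 + (k : ℝ) ^ 2) ^ s' * ‖b k‖ ^ 2 ≤ (1 + (k : ℝ) ^ 2) ^ s * ‖a k‖ ^ 2 := by
  have : (1 : ℝ) ≤ 1 + (k : ℝ) ^ 2 := le_add_of_nonneg_right (sq_nonneg _)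
  gcongr

lemma SobolevSummable.mono {s s' : ℕ} (h : s' ≤ s) {a : ℤ → E} {b : ℤ → F}
    (ha : SobolevSummable s a) (hb : ∀ k, ‖b k‖ ≤ ‖a k‖) : SobolevSummable s' b :=
  Summable.of_nonneg_of_le (fun k => by positivity)
    (fun k => bracket_pow_mul_norm_sq_le h (hb k)) ha

lemma sobolevSq_mono {s s' : ℕ} (h : s' ≤ s) {a : ℤ → E} {b : ℤ → F}
    (ha : SobolevSummable s a) (hb : ∀ k, ‖b k‖ ≤ ‖a k‖) : sobolevSq s' b ≤ sobolevSq s a :=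
  (ha.mono h hb).tsum_le_tsum (fun k => bracket_pow_mul_norm_sq_le h (hb k)) ha

lemma SobolevSummable.add {s : ℕ} {a b : ℤ → E} (ha : SobolevSummable s a)
    (hb : SobolevSummable s b) : SobolevSummable s (a + b) := by
  refine Summable.of_nonneg_of_le (fun k => by positivity) (fun k => ?_)
    ((Summable.add ha hb).mul_left 2)
  calc (1 + (k : ℝ) ^ 2) ^ s * ‖a k + b k‖ ^ 2
      ≤ (1 + (k : ℝ) ^ 2) ^ s * (2 * (‖a k‖ ^ 2 + ‖b k‖ ^ 2)) := by
        gcongr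
        exact (pow_le_pow_left₀ (norm_nonneg _) (norm_add_le _ _) 2).trans add_sq_le
    _ = _ := by ring

lemma SobolevSummable.sub {s : ℕ} {a b : ℤ → E} (ha : SobolevSummable s a)
    (hb : SobolevSummable s b) : SobolevSummable s (a - b) := by
  rw [sub_eq_add_neg]
  exact ha.add (hb.mono le_rfl fun k => by simp)

lemma weight_sq_le (k : ℤ) : (weight k : ℝ) ^ 2 ≤ 2 * (1 + (k : ℝ) ^ 2) := by
  simpa [coe_weight] using add_sq_le (a := (1 : ℝ)) (b := |(k : ℝ)|)

lemma bracket_le_weight_sq (k : ℤ) : 1 + (k : ℝ) ^ 2 ≤ (weight k : ℝ) ^ 2 := by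
  rw [coe_weight]
  nlinarith [abs_nonneg (k : ℝ), sq_abs (k : ℝ)]

lemma summable_bracket_inv : Summable fun k : ℤ => (1 + (k : ℝ) ^ 2)⁻¹ := by
  refine Summable.of_norm_bounded_eventually (g := fun k : ℤ => 1 / (k : ℝ) ^ 2)
    (Real.summable_one_div_int_pow.2 one_lt_two) ?_
  filter_upwards [(Set.finite_singleton (0 : ℤ)).compl_mem_cofinite] with k hk
  have : (0 : ℝ) < (k : ℝ) ^ 2 := by have : k ≠ 0 := hk; positivity
  rw [Real.norm_of_nonneg (by positivity), one_div]
  gcongr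
  linarith

lemma summable_and_tsum_mul_le_sqrt_mul_sqrt {ι : Type*} {f g : ι → ℝ} (hf0 : ∀ i, 0 ≤ f i)
    (hg0 : ∀ i, 0 ≤ g i) (hf : Summable fun i => f i ^ 2) (hg : Summable fun i => g i ^ 2) :
    Summable (fun i => f i * g i) ∧
      ∑' i, f i * g i ≤ √(∑' i, f i ^ 2) * √(∑' i, g i ^ 2) := by
  simpa [Real.sqrt_eq_rpow] using Real.summable_and_inner_le_Lp_mul_Lq_tsum_of_nonneg
    Real.HolderConjugate.two_two hf0 hg0 (by simpa using hf) (by simpa using hg)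

lemma weight_pow_le_sqrt_mul_sqrt (r : ℕ) (k : ℤ) : (weight k : ℝ) ^ r ≤
    √(2 ^ r) * (√(1 + (k : ℝ) ^ 2)⁻¹ * √((1 + (k : ℝ) ^ 2) ^ (r + 1))) := by
  rw [← Real.sqrt_mul (by positivity), ← Real.sqrt_mul (by positivity)]
  refine Real.le_sqrt_of_sq_le ?_
  calc ((weight k : ℝ) ^ r) ^ 2 = ((weight k : ℝ) ^ 2) ^ r := by rw [← pow_mul, ← pow_mul, mul_comm]
    _ ≤ (2 * (1 + (k : ℝ) ^ 2)) ^ r := by gcongr; exact weight_sq_le k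
    _ = _ := by rw [mul_pow]; field_simp; ring

lemma exists_wienerNorm_le_sobolev (r : ℕ) : ∃ C : ℝ, 0 < C ∧ ∀ a : ℤ → E,
    SobolevSummable (r + 1) a → wienerNorm r a ≤ ENNReal.ofReal (C * √(sobolevSq (r + 1) a)) := by
  let A : ℝ := √(2 ^ r) * √(∑' k : ℤ, (1 + (k : ℝ) ^ 2)⁻¹)
  have : 0 ≤ A := by positivity
  refine ⟨A + 1, by positivity, fun a ha => ?_⟩
  let f (k : ℤ) : ℝ := √(1 + (k : ℝ) ^ 2)⁻¹
  let g (k : ℤ) : ℝ := √((1 + (k : ℝ) ^ 2) ^ (r + 1)) * ‖a k‖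
  have hf (k : ℤ) : f k ^ 2 = (1 + (k : ℝ) ^ 2)⁻¹ := Real.sq_sqrt (by positivity)
  have hg (k : ℤ) : g k ^ 2 = (1 + (k : ℝ) ^ 2) ^ (r + 1) * ‖a k‖ ^ 2 := by
    rw [mul_pow, Real.sq_sqrt (by positivity)]
  obtain ⟨hsumm, hcs⟩ := summable_and_tsum_mul_le_sqrt_mul_sqrt (f := f) (g := g)
    (fun k => by positivity) (fun k => by positivity)
    (by simpa only [hf] using summable_bracket_inv) (by simpa only [hg, SobolevSummable] using ha)
  simp only [hf, hg] at hcs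
  have hle (k : ℤ) : (weight k : ℝ) ^ r * ‖a k‖ ≤ √(2 ^ r) * (f k * g k) := by
    calc _ ≤ √(2 ^ r) * (f k * √((1 + (k : ℝ) ^ 2) ^ (r + 1))) * ‖a k‖ := by
          gcongr; exact weight_pow_le_sqrt_mul_sqrt r k
      _ = _ := by ring
  have hsum := (hsumm.mul_left (√(2 ^ r))).of_nonneg_of_le (fun k => by positivity) hle
  have hw : wienerNorm r a = ENNReal.ofReal (∑' k : ℤ, (weight k : ℝ) ^ r * ‖a k‖) := by
    rw [ENNReal.ofReal_tsum_of_nonneg (fun k => by positivity) hsum]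
    refine tsum_congr fun k => ?_
    rw [ENNReal.ofReal_mul (by positivity), ENNReal.ofReal_pow (by positivity), ofReal_norm]
    simp
  rw [hw]
  refine ENNReal.ofReal_le_ofReal ?_
  calc _ ≤ ∑' k, √(2 ^ r) * (f k * g k) := hsum.tsum_le_tsum hle (hsumm.mul_left _)
    _ ≤ √(2 ^ r) * (√(∑' k : ℤ, (1 + (k : ℝ) ^ 2)⁻¹) * √(sobolevSq (r + 1) a)) := by
      rw [tsum_mul_left]; gcongr; exact hcs
    _ = A * √(sobolevSq (r + 1) a) := by rw [← mul_assoc]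
    _ ≤ (A + 1) * √(sobolevSq (r + 1) a) := by gcongr; linarith

lemma SobolevSummable.wienerNorm_ne_top {r s : ℕ} (hs : r + 1 ≤ s) {a : ℤ → E}
    (ha : SobolevSummable s a) : wienerNorm r a ≠ ⊤ := by
  obtain ⟨C, -, hC⟩ := exists_wienerNorm_le_sobolev (E := E) r
  exact ne_top_of_le_ne_top ENNReal.ofReal_ne_top (hC a (ha.mono hs fun _ => le_rfl))

lemma sobolevSummable_of_wienerNorm_ne_top {s : ℕ} {a : ℤ → E} (ha : wienerNorm s a ≠ ⊤) :
    SobolevSummable s a := by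
  have hsum := wienerNorm_ne_top_iff.1 ha
  have hsq : Summable fun k => ((weight k : ℝ) ^ s * ‖a k‖) * ((weight k : ℝ) ^ s * ‖a k‖) := by
    refine (hsum.mul_left (∑' k, (weight k : ℝ) ^ s * ‖a k‖)).of_nonneg_of_le
      (fun k => by positivity) fun k => ?_
    gcongr
    exact hsum.le_tsum k fun _ _ => by positivity
  refine hsq.of_nonneg_of_le (fun k => by positivity) fun k => ?_
  calc (1 + (k : ℝ) ^ 2) ^ s * ‖a k‖ ^ 2 ≤ ((weight k : ℝ) ^ 2) ^ s * ‖a k‖ ^ 2 := by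
        gcongr; exact bracket_le_weight_sq k
    _ = _ := by ring

lemma MemHs.sobolevSummable {s : ℕ} {f : ℝ → ℝ} (h : MemHs s f) : SobolevSummable s (fc f) := h.2.2

lemma MemHs.eq_fourierSeries {s : ℕ} (hs : 1 ≤ s) {f : ℝ → ℝ} (h : MemHs s f) (x : ℝ) :
    (f x : ℂ) = fourierSeries (fc f) x :=
  eq_fourierSeries_fc h.1 h.2.1 (h.sobolevSummable.wienerNorm_ne_top hs) x

lemma ContInHs.exists_wienerNorm_sub_le {r s : ℕ} (hs : r + 1 ≤ s) {A : Set ℝ} {u : ℝ → ℝ → ℝ}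
    (hu : ContInHs s A u) (hm : ∀ t ∈ A, MemHs s (u t)) {t₀ : ℝ} (ht₀ : t₀ ∈ A) {η : ℝ}
    (hη : 0 < η) :
    ∃ δ > 0, ∀ t ∈ A, |t - t₀| < δ →
      wienerNorm r (fc (u t) - fc (u t₀)) ≤ ENNReal.ofReal η := by
  obtain ⟨C, hC, hle⟩ := exists_wienerNorm_le_sobolev (E := ℂ) r
  obtain ⟨δ, hδ, hcont⟩ := hu t₀ ht₀ (η / C) (by positivity)
  refine ⟨δ, hδ, fun t ht htt => ?_⟩
  have hsub : fc (fun x => u t x - u t₀ x) = fc (u t) - fc (u t₀) :=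
    funext fun k => fc_sub (hm t ht).1 (hm t₀ ht₀).1 k
  have hsmall := hcont t ht htt
  rw [hsNorm_eq_sqrt_sobolevSq, hsub] at hsmall
  have hS := (hm t ht).sobolevSummable.sub (hm t₀ ht₀).sobolevSummable
  refine (hle _ (hS.mono hs fun _ => le_rfl)).trans (ENNReal.ofReal_le_ofReal ?_)
  calc C * √(sobolevSq (r + 1) (fc (u t) - fc (u t₀)))
      ≤ C * √(sobolevSq s (fc (u t) - fc (u t₀))) := by
        gcongr; exact sobolevSq_mono hs hS fun _ => le_rfl
    _ ≤ C * (η / C) := by gcongr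
    _ = η := by field_simp

end Sobolev

section Clamp

open MeasureTheory Set

/-- Projection of the real line onto `[0, T]`, used to extend curves on `[0, T]` to all times. -/
noncomputable def clamp (T t : ℝ) : ℝ := max 0 (min t T)

lemma continuous_clamp (T : ℝ) : Continuous (clamp T) := by unfold clamp; fun_prop

lemma clamp_mem {T : ℝ} (hT : 0 ≤ T) (t : ℝ) : clamp T t ∈ Icc 0 T :=
  ⟨le_max_left _ _, max_le hT (min_le_right _ _)⟩

lemma clamp_of_mem {T t : ℝ} (ht : t ∈ Icc 0 T) : clamp T t = t := by
  rw [clamp, min_eq_left ht.2, max_eq_right ht.1]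

lemma continuous_comp_clamp {X : Type*} [TopologicalSpace X] {T : ℝ} (hT : 0 ≤ T)
    {G : ℝ → X} (hG : ContinuousOn G (Icc 0 T)) : Continuous fun t => G (clamp T t) :=
  hG.comp_continuous (continuous_clamp T) (clamp_mem hT)

lemma exists_hasDerivAt_of_eq_integral {E : Type*} [NormedAddCommGroup E] [NormedSpace ℝ E]
    [CompleteSpace E] {y G : ℝ → E} {T : ℝ} (hT : 0 ≤ T) (hG : ContinuousOn G (Icc 0 T))
    (h : ∀ t ∈ Icc 0 T, y t = y 0 + ∫ σ in (0 : ℝ)..t, G σ) :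
    ∃ Y : ℝ → E, EqOn Y y (Icc 0 T) ∧ ∀ t ∈ Icc 0 T, HasDerivAt Y (G t) t := by
  refine ⟨fun t => y 0 + ∫ σ in (0 : ℝ)..t, G (clamp T σ), fun t ht => ?_, fun t ht => ?_⟩
  · rw [h t ht]
    refine congrArg (y 0 + ·) (intervalIntegral.integral_congr fun σ hσ => ?_)
    rw [uIcc_of_le ht.1] at hσ
    simp only [clamp_of_mem (T := T) (t := σ) ⟨hσ.1, hσ.2.trans ht.2⟩]
  · have hd := ((continuous_comp_clamp hT hG).integral_hasStrictDerivAt 0 t).hasDerivAt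
    rw [clamp_of_mem ht] at hd
    exact hd.const_add (y 0)

end Clamp

section Gain

open MeasureTheory

/-- The integral `∫₀ᵀ e^{-μσ} dσ`: the factor by which Duhamel's formula with damping `μ` bounds the
solution on `[0, T]` in terms of the forcing. -/
noncomputable def gain (μ T : ℝ) : ℝ := ∫ σ in (0 : ℝ)..T, Real.exp (-(μ * σ))

variable {μ T : ℝ}

lemma gain_nonneg (μ : ℝ) (hT : 0 ≤ T) : 0 ≤ gain μ T :=
  intervalIntegral.integral_nonneg hT fun _ _ => (Real.exp_pos _).le

lemma gain_le_gain_left {μ' : ℝ} (h : μ ≤ μ') (hT : 0 ≤ T) : gain μ' T ≤ gain μ T := by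
  refine intervalIntegral.integral_mono_on hT (Continuous.intervalIntegrable (by fun_prop) _ _)
    (Continuous.intervalIntegrable (by fun_prop) _ _) fun σ hσ => ?_
  have := hσ.1
  gcongr

lemma gain_le_self (hμ : 0 ≤ μ) (hT : 0 ≤ T) : gain μ T ≤ T := by
  simpa [gain] using gain_le_gain_left hμ hT

lemma gain_le_gain_right {T' : ℝ} (hT : 0 ≤ T) (h : T ≤ T') : gain μ T ≤ gain μ T' :=
  intervalIntegral.integral_mono_interval le_rfl hT h
    (Filter.Eventually.of_forall fun _ => (Real.exp_pos _).le)
    (Continuous.intervalIntegrable (by fun_prop) _ _)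

lemma mul_gain_le_one : μ * gain μ T ≤ 1 := by
  have hderiv (σ : ℝ) :
      HasDerivAt (fun σ => -Real.exp (-(μ * σ))) (μ * Real.exp (-(μ * σ))) σ := by
    simpa [mul_comm] using (((hasDerivAt_id σ).const_mul μ).fun_neg.exp).fun_neg
  rw [gain, ← intervalIntegral.integral_const_mul,
    intervalIntegral.integral_eq_sub_of_hasDerivAt (fun σ _ => hderiv σ)
      (Continuous.intervalIntegrable (by fun_prop) _ _)]
  simp [(Real.exp_pos _).le]

lemma weight_pow_succ_mul_gain_le {ε : ℝ} (hε : 0 < ε) (hT : 0 ≤ T) (p : ℕ) (k : ℤ) :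
    (weight k : ℝ) ^ (p + 1) * gain (ε * |(k : ℝ)| ^ (p + 1)) T ≤ T + 2 ^ (p + 1) / ε := by
  by_cases hk : k = 0
  · have hle := gain_le_self (μ := 0) le_rfl hT
    have : 0 ≤ 2 ^ (p + 1) / ε := by positivity
    simp only [hk, coe_weight, Int.cast_zero, abs_zero, add_zero, one_pow, one_mul, ne_eq,
      Nat.add_eq_zero_iff, one_ne_zero, and_false, not_false_eq_true, zero_pow, mul_zero]
    linarith
  · have hk1 : 1 ≤ |(k : ℝ)| := by exact_mod_cast Int.one_le_abs hk
    have hw : (weight k : ℝ) ≤ 2 * |(k : ℝ)| := by rw [coe_weight]; linarith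
    have hg := gain_nonneg (ε * |(k : ℝ)| ^ (p + 1)) hT
    calc _ ≤ (2 * |(k : ℝ)|) ^ (p + 1) * gain (ε * |(k : ℝ)| ^ (p + 1)) T := by gcongr
      _ = 2 ^ (p + 1) / ε * (ε * |(k : ℝ)| ^ (p + 1) * gain (ε * |(k : ℝ)| ^ (p + 1)) T) := by
        rw [mul_pow]; field_simp
      _ ≤ 2 ^ (p + 1) / ε * 1 := by gcongr; exact mul_gain_le_one
      _ ≤ T + 2 ^ (p + 1) / ε := by linarith

lemma exists_weight_pow_mul_gain_le {ε η : ℝ} (hε : 0 < ε) (hη : 0 < η) (p : ℕ) :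
    ∃ T > 0, ∀ k : ℤ, (weight k : ℝ) ^ p * gain (ε * |(k : ℝ)| ^ (p + 1)) T ≤ η := by
  let N : ℝ := (1 + 2 ^ (p + 1) / ε) / η
  have hN : 0 < N := by positivity
  refine ⟨min 1 (η / N ^ p), by positivity, fun k => ?_⟩
  have hT : 0 ≤ min 1 (η / N ^ p) := by positivity
  generalize hTdef : min 1 (η / N ^ p) = T at hT
  have hg := gain_nonneg (ε * |(k : ℝ)| ^ (p + 1)) hT
  rcases le_total (weight k : ℝ) N with hk | hk
  · calc _ ≤ N ^ p * T := by gcongr; exact gain_le_self (by positivity) hT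
      _ ≤ N ^ p * (η / N ^ p) := by gcongr; exact hTdef ▸ min_le_right _ _
      _ = η := by field_simp
  · have hw : (0 : ℝ) < weight k := hN.trans_le hk
    refine le_of_mul_le_mul_right ?_ hw
    calc _ = (weight k : ℝ) ^ (p + 1) * gain (ε * |(k : ℝ)| ^ (p + 1)) T := by ring
      _ ≤ T + 2 ^ (p + 1) / ε := weight_pow_succ_mul_gain_le hε hT p k
      _ ≤ 1 + 2 ^ (p + 1) / ε := by gcongr; exact hTdef ▸ min_le_left _ _
      _ = η * N := by simp only [N]; field_simp
      _ ≤ η * weight k := by gcongr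

end Gain

section Duhamel

open MeasureTheory Set

/-- The solution at time `τ` of `y' = l y + f`, `y 0 = z`, by variation of constants. -/
noncomputable def duhamel (l z : ℂ) (f : ℝ → ℂ) (τ : ℝ) : ℂ :=
  Complex.exp (τ * l) * (z + ∫ σ in (0 : ℝ)..τ, Complex.exp (-σ * l) * f σ)

lemma exp_mul_exp_neg (z : ℂ) : Complex.exp z * Complex.exp (-z) = 1 := by
  rw [← Complex.exp_add, add_neg_cancel, Complex.exp_zero]

lemma hasDerivAt_exp_ofReal_mul (l : ℂ) (τ : ℝ) :
    HasDerivAt (fun τ : ℝ => Complex.exp (τ * l)) (Complex.exp (τ * l) * l) τ := by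
  simpa using ((hasDerivAt_id τ).ofReal_comp.mul_const l).cexp

lemma hasDerivAt_duhamel (l z : ℂ) {f : ℝ → ℂ} (hf : Continuous f) (τ : ℝ) :
    HasDerivAt (duhamel l z f) (l * duhamel l z f τ + f τ) τ := by
  have hc : Continuous fun σ : ℝ => Complex.exp (-σ * l) * f σ := by fun_prop
  convert! (hasDerivAt_exp_ofReal_mul l τ).mul
    ((hc.integral_hasStrictDerivAt 0 τ).hasDerivAt.const_add z) using 1
  have hexp := exp_mul_exp_neg (τ * l)
  rw [← neg_mul] at hexp
  unfold duhamel
  linear_combination (-f τ) * hexp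

lemma continuous_duhamel (l z : ℂ) {f : ℝ → ℂ} (hf : Continuous f) : Continuous (duhamel l z f) :=
  continuous_iff_continuousAt.2 fun τ => (hasDerivAt_duhamel l z hf τ).continuousAt

lemma duhamel_zero_right (l z : ℂ) (f : ℝ → ℂ) : duhamel l z f 0 = z := by simp [duhamel]

lemma duhamel_eq_integral (l z : ℂ) {f : ℝ → ℂ} (hf : Continuous f) (t : ℝ) :
    duhamel l z f t = z + ∫ σ in (0 : ℝ)..t, (l * duhamel l z f σ + f σ) := by
  rw [intervalIntegral.integral_eq_sub_of_hasDerivAt (fun τ _ => hasDerivAt_duhamel l z hf τ)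
    ((((continuous_duhamel l z hf).const_mul l).add hf).intervalIntegrable _ _),
    duhamel_zero_right, add_sub_cancel]

lemma duhamel_eq_integral_exp_sub (l z : ℂ) (f : ℝ → ℂ) (τ : ℝ) : duhamel l z f τ =
    Complex.exp (τ * l) * z + ∫ σ in (0 : ℝ)..τ, Complex.exp (((τ - σ : ℝ) : ℂ) * l) * f σ := by
  rw [duhamel, mul_add, ← intervalIntegral.integral_const_mul]
  congr 1
  refine intervalIntegral.integral_congr fun σ _ => ?_
  rw [← mul_assoc, ← Complex.exp_add]
  congr 2
  push_cast; ring

lemma norm_duhamel_le {l z : ℂ} (hl : l.re ≤ 0) {f : ℝ → ℂ} {M : ℝ} (hM : ∀ t, ‖f t‖ ≤ M)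
    {τ T : ℝ} (hτ : τ ∈ Icc 0 T) : ‖duhamel l z f τ‖ ≤ ‖z‖ + gain (-l.re) T * M := by
  have hM0 : 0 ≤ M := (norm_nonneg _).trans (hM 0)
  have hhom : ‖Complex.exp (τ * l) * z‖ ≤ ‖z‖ := by
    rw [norm_mul, Complex.norm_exp]
    refine mul_le_of_le_one_left (norm_nonneg _) (Real.exp_le_one_iff.2 ?_)
    simpa using mul_nonpos_of_nonneg_of_nonpos hτ.1 hl
  have hforced : ‖∫ σ in (0 : ℝ)..τ, Complex.exp (((τ - σ : ℝ) : ℂ) * l) * f σ‖ ≤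
      ∫ σ in (0 : ℝ)..τ, Real.exp (-(-l.re * (τ - σ))) * M := by
    refine intervalIntegral.norm_integral_le_of_norm_le hτ.1
      (Filter.Eventually.of_forall fun σ _ => ?_)
      (Continuous.intervalIntegrable (by fun_prop) _ _)
    rw [norm_mul, Complex.norm_exp, Complex.re_ofReal_mul]
    refine mul_le_mul (le_of_eq ?_) (hM σ) (norm_nonneg _) (Real.exp_pos _).le
    congr 1; ring
  rw [intervalIntegral.integral_mul_const,
    intervalIntegral.integral_comp_sub_left (fun x => Real.exp (-(-l.re * x))),
    sub_self, sub_zero] at hforced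
  rw [duhamel_eq_integral_exp_sub]
  exact (norm_add_le _ _).trans (add_le_add hhom (hforced.trans
    (mul_le_mul_of_nonneg_right (gain_le_gain_right hτ.1 hτ.2) hM0)))

lemma duhamel_sub (l z w : ℂ) {f g : ℝ → ℂ} (hf : Continuous f) (hg : Continuous g) (τ : ℝ) :
    duhamel l z f τ - duhamel l w g τ = duhamel l (z - w) (fun t => f t - g t) τ := by
  have hint : ∫ σ in (0 : ℝ)..τ, Complex.exp (-σ * l) * (f σ - g σ) =
      (∫ σ in (0 : ℝ)..τ, Complex.exp (-σ * l) * f σ) -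
        ∫ σ in (0 : ℝ)..τ, Complex.exp (-σ * l) * g σ := by
    simp only [mul_sub]
    exact intervalIntegral.integral_sub (Continuous.intervalIntegrable (by fun_prop) _ _)
      (Continuous.intervalIntegrable (by fun_prop) _ _)
  rw [duhamel, duhamel, duhamel, hint]
  ring

lemma star_duhamel (l z : ℂ) (f : ℝ → ℂ) (τ : ℝ) :
    star (duhamel l z f τ) = duhamel (star l) (star z) (fun t => star (f t)) τ := by
  simp only [duhamel, Complex.star_def, map_mul, map_add, ← Complex.exp_conj, Complex.conj_ofReal,
    ← intervalIntegral.intervalIntegral_conj, map_neg]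

lemma eq_duhamel_of_eq_integral {l : ℂ} {y g : ℝ → ℂ} {T : ℝ} (hy : ContinuousOn y (Icc 0 T))
    (hg : ContinuousOn g (Icc 0 T))
    (h : ∀ t ∈ Icc 0 T, y t = y 0 + ∫ σ in (0 : ℝ)..t, (l * y σ + g σ)) {t : ℝ}
    (ht : t ∈ Icc 0 T) : y t = duhamel l (y 0) g t := by
  have hT : 0 ≤ T := ht.1.trans ht.2
  obtain ⟨Y, hY, hd⟩ := exists_hasDerivAt_of_eq_integral hT ((hy.const_mul l).add hg) h
  have hsub : uIcc 0 t ⊆ Icc 0 T := by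
    rw [uIcc_of_le ht.1]; exact Icc_subset_Icc_right ht.2
  have hderiv : ∀ σ ∈ uIcc 0 t, HasDerivAt (fun σ : ℝ => Complex.exp (-σ * l) * Y σ)
      (Complex.exp (-σ * l) * g σ) σ := by
    intro σ hσ
    have hexp := hasDerivAt_exp_ofReal_mul (-l) σ
    simp only [mul_neg, ← neg_mul] at hexp
    convert! hexp.mul (hd σ (hsub hσ)) using 1
    rw [hY (hsub hσ), Pi.add_apply]; ring
  have hftc := intervalIntegral.integral_eq_sub_of_hasDerivAt hderiv
    (((Continuous.continuousOn (by fun_prop)).mul (hg.mono hsub)).intervalIntegrable)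
  have hexp := exp_mul_exp_neg (t * l)
  rw [duhamel, hftc, hY ht, hY ⟨le_rfl, hT⟩]
  simp only [Complex.ofReal_zero, neg_zero, zero_mul, Complex.exp_zero, one_mul]
  rw [← neg_mul] at hexp
  linear_combination (-y t) * hexp

end Duhamel

section FixedPoint

open scoped ENNReal NNReal

variable {B : Type*} [NormedAddCommGroup B]

lemma wienerNorm_zero_lp (f : lp (fun _ : ℤ => B) 1) : wienerNorm 0 (f : ℤ → B) = ‖f‖ₑ := by
  have hs : Summable fun k => ‖f k‖ := by simpa using (lp.memℓp f).summable (by simp)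
  have hnorm : ‖f‖ = ∑' k, ‖f k‖ := by
    rw [lp.norm_eq_tsum_rpow (by simp) f]; simp
  rw [← ofReal_norm, hnorm, ENNReal.ofReal_tsum_of_nonneg (fun k => norm_nonneg _) hs]
  simp [wienerNorm]

lemma memℓp_one_of_wienerNorm_ne_top {f : ℤ → B} (hf : wienerNorm 0 f ≠ ⊤) : Memℓp f 1 :=
  (memℓp_gen_iff (by simp)).2 (by simpa using wienerNorm_zero_ne_top_iff.1 hf)

lemma exists_fixedPoint_of_wienerNorm_sub_le [CompleteSpace B] {Ψ : (ℤ → B) → ℤ → B}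
    {P : (ℤ → B) → Prop} {K q : ℝ≥0} (hq : q < 1) (hP : IsClosed {f | P f}) (hP0 : P 0)
    (hmap : ∀ f, wienerNorm 0 f ≤ K → P f → wienerNorm 0 (Ψ f) ≤ K ∧ P (Ψ f))
    (hlip : ∀ f g, wienerNorm 0 f ≤ K → wienerNorm 0 g ≤ K →
      wienerNorm 0 (Ψ f - Ψ g) ≤ q * wienerNorm 0 (f - g)) :
    ∃ f, wienerNorm 0 f ≤ K ∧ P f ∧ Ψ f = f := by
  classical
  let Φ : lp (fun _ : ℤ => B) 1 → lp (fun _ : ℤ => B) 1 :=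
    fun f => if h : Memℓp (Ψ f) 1 then ⟨Ψ f, h⟩ else 0
  let S : Set (lp (fun _ : ℤ => B) 1) := {f | wienerNorm 0 (f : ℤ → B) ≤ K ∧ P f}
  have hΦ : ∀ f ∈ S, (Φ f : ℤ → B) = Ψ f := fun f hf => by
    have hmem := memℓp_one_of_wienerNorm_ne_top
      (ne_top_of_le_ne_top ENNReal.coe_ne_top (hmap _ hf.1 hf.2).1)
    simp only [Φ, dif_pos hmem]
  have hmaps : Set.MapsTo Φ S S := fun f hf => by
    simp only [S, Set.mem_ofPred_eq, hΦ f hf]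
    exact hmap _ hf.1 hf.2
  have hcl : IsClosed S := by
    refine IsClosed.inter ?_ (hP.preimage lp.uniformContinuous_coe.continuous)
    simp only [wienerNorm_zero_lp]
    exact isClosed_le continuous_enorm continuous_const
  have hcontr : ContractingWith q (hmaps.restrict Φ S S) := by
    refine ⟨hq, fun f g => ?_⟩
    have h := hlip f.1 g.1 f.2.1 g.2.1
    rw [← hΦ _ f.2, ← hΦ _ g.2, ← lp.coeFn_sub, ← lp.coeFn_sub, wienerNorm_zero_lp,
      wienerNorm_zero_lp, ← edist_eq_enorm_sub, ← edist_eq_enorm_sub] at h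
    exact h
  have h0 : (0 : lp (fun _ : ℤ => B) 1) ∈ S := by
    simp only [S, Set.mem_ofPred_eq, lp.coeFn_zero, wienerNorm_zero]
    exact ⟨zero_le, hP0⟩
  obtain ⟨f, hf, hfix, -⟩ := hcontr.exists_fixedPoint' hcl.isComplete hmaps h0 (edist_ne_top _ _)
  exact ⟨f, hf.1, hf.2, by rw [← hΦ f hf, hfix]⟩

end FixedPoint

section Smoothing

open scoped ENNReal NNReal

variable {E F G : Type*} [NormedAddCommGroup E] [NormedAddCommGroup F] [NormedAddCommGroup G]
  {g : ℤ → ℝ} {q : ℕ} {η : ℝ≥0} {u : ℤ → E} {z : ℤ → F} {f : ℤ → G}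

lemma wienerNorm_add_le_of_norm_le (hg0 : ∀ k, 0 ≤ g k) (hg : ∀ k, (weight k : ℝ) ^ q * g k ≤ η)
    (h : ∀ k, ‖u k‖ ≤ ‖z k‖ + g k * ‖f k‖) (r : ℕ) :
    wienerNorm (r + q) u ≤ wienerNorm (r + q) z + η * wienerNorm r f := by
  unfold wienerNorm
  rw [← ENNReal.tsum_mul_left, ← ENNReal.tsum_add]
  refine ENNReal.tsum_le_tsum fun k => ?_
  have hnorm : ‖u k‖ₑ ≤ ‖z k‖ₑ + ENNReal.ofReal (g k) * ‖f k‖ₑ := by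
    have := ENNReal.ofReal_le_ofReal (h k)
    rwa [ENNReal.ofReal_add (norm_nonneg _) (mul_nonneg (hg0 k) (norm_nonneg _)),
      ENNReal.ofReal_mul (hg0 k), ofReal_norm, ofReal_norm, ofReal_norm] at this
  have hgain : (weight k : ℝ≥0∞) ^ q * ENNReal.ofReal (g k) ≤ η := by
    have := ENNReal.ofReal_le_ofReal (hg k)
    rw [ENNReal.ofReal_mul (by positivity), ENNReal.ofReal_pow (by positivity)] at this
    simpa using this
  calc (weight k : ℝ≥0∞) ^ (r + q) * ‖u k‖ₑ
      ≤ (weight k : ℝ≥0∞) ^ (r + q) * (‖z k‖ₑ + ENNReal.ofReal (g k) * ‖f k‖ₑ) := by gcongr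
    _ = (weight k : ℝ≥0∞) ^ (r + q) * ‖z k‖ₑ +
        ((weight k : ℝ≥0∞) ^ q * ENNReal.ofReal (g k)) * ((weight k : ℝ≥0∞) ^ r * ‖f k‖ₑ) := by
      ring
    _ ≤ _ := by gcongr

lemma sobolevSummable_add_of_norm_le (hg0 : ∀ k, 0 ≤ g k)
    (hg : ∀ k, (weight k : ℝ) ^ q * g k ≤ η) (h : ∀ k, ‖u k‖ ≤ ‖z k‖ + g k * ‖f k‖) {r : ℕ}
    (hz : SobolevSummable (r + q) z) (hf : wienerNorm r f ≠ ⊤) : SobolevSummable (r + q) u := by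
  have hforced : wienerNorm (r + q) (fun k => g k * ‖f k‖) ≠ ⊤ := by
    have hle := wienerNorm_add_le_of_norm_le (u := fun k => g k * ‖f k‖) (z := (0 : ℤ → ℝ)) hg0 hg
      (fun k => by simp [abs_of_nonneg (hg0 k)]) r (f := f)
    rw [wienerNorm_zero, zero_add] at hle
    exact ne_top_of_le_ne_top (ENNReal.mul_ne_top ENNReal.coe_ne_top hf) hle
  have hz' : SobolevSummable (r + q) fun k => ‖z k‖ := hz.mono le_rfl fun k => by simp
  refine (hz'.add (sobolevSummable_of_wienerNorm_ne_top hforced)).mono le_rfl fun k => ?_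
  exact (h k).trans (le_abs_self _)

end Smoothing

section DuhamelMap

open scoped ENNReal NNReal BoundedContinuousFunction

lemma HermitianSymm.eval {U : ℤ → ℝ →ᵇ ℂ} (h : HermitianSymm U) (t : ℝ) :
    HermitianSymm fun k => U k t := fun k => DFunLike.congr_fun (h k) t

lemma isClosed_hermitianSymm {B : Type*} [TopologicalSpace B] [T2Space B] [Star B]
    [ContinuousStar B] : IsClosed {a : ℤ → B | HermitianSymm a} := by
  simp only [HermitianSymm, Set.ofPred_forall]
  exact isClosed_iInter fun k => isClosed_eq (continuous_apply _) (continuous_apply k).star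

lemma wienerNorm_eval_le (r : ℕ) (U : ℤ → ℝ →ᵇ ℂ) (t : ℝ) :
    wienerNorm r (fun k => U k t) ≤ wienerNorm r U :=
  wienerNorm_le_of_norm_le r fun k => (U k).norm_coe_le_norm t

variable {T : ℝ} (hT : 0 ≤ T) {l : ℤ → ℂ} (hl : ∀ k, (l k).re ≤ 0)

/-- Duhamel's formula in every Fourier mode, on `[0, T]`. The curves are frozen outside `[0, T]` so
that the modes are bounded continuous functions of time. -/
noncomputable def duhamelMap (z : ℤ → ℂ) (f : ℤ → ℝ →ᵇ ℂ) (k : ℤ) : ℝ →ᵇ ℂ :=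
  BoundedContinuousFunction.ofNormedAddCommGroup (fun t => duhamel (l k) (z k) (f k) (clamp T t))
    ((continuous_duhamel (l k) (z k) (f k).continuous).comp (continuous_clamp T))
    (‖z k‖ + gain (-(l k).re) T * ‖f k‖)
    fun t => norm_duhamel_le (hl k) (f k).norm_coe_le_norm (clamp_mem hT t)

lemma duhamelMap_apply (z : ℤ → ℂ) (f : ℤ → ℝ →ᵇ ℂ) (k : ℤ) (t : ℝ) :
    duhamelMap hT hl z f k t = duhamel (l k) (z k) (f k) (clamp T t) := rfl

lemma duhamelMap_apply_zero (z : ℤ → ℂ) (f : ℤ → ℝ →ᵇ ℂ) (k : ℤ) :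
    duhamelMap hT hl z f k 0 = z k := by
  rw [duhamelMap_apply, clamp_of_mem ⟨le_rfl, hT⟩, duhamel_zero_right]

lemma norm_duhamelMap_le (z : ℤ → ℂ) (f : ℤ → ℝ →ᵇ ℂ) (k : ℤ) :
    ‖duhamelMap hT hl z f k‖ ≤ ‖z k‖ + gain (-(l k).re) T * ‖f k‖ :=
  BoundedContinuousFunction.norm_ofNormedAddCommGroup_le _
    (by have := gain_nonneg (-(l k).re) hT; positivity) _

lemma duhamelMap_sub (z w : ℤ → ℂ) (f g : ℤ → ℝ →ᵇ ℂ) :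
    duhamelMap hT hl z f - duhamelMap hT hl w g = duhamelMap hT hl (z - w) (f - g) := by
  ext k t
  exact duhamel_sub _ _ _ (f k).continuous (g k).continuous _

lemma hermitianSymm_duhamelMap (hsymm : HermitianSymm l) {z : ℤ → ℂ} (hz : HermitianSymm z)
    {f : ℤ → ℝ →ᵇ ℂ} (hf : HermitianSymm f) : HermitianSymm (duhamelMap hT hl z f) := by
  intro k
  ext t
  rw [BoundedContinuousFunction.star_apply, duhamelMap_apply, duhamelMap_apply, star_duhamel,
    hsymm, hz, hf]
  rfl

lemma duhamelMap_eq_integral (z : ℤ → ℂ) (f : ℤ → ℝ →ᵇ ℂ) (k : ℤ) {t : ℝ}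
    (ht : t ∈ Set.Icc 0 T) :
    duhamelMap hT hl z f k t =
      z k + ∫ σ in (0 : ℝ)..t, (l k * duhamelMap hT hl z f k σ + f k σ) := by
  rw [duhamelMap_apply, clamp_of_mem ht, duhamel_eq_integral _ _ (f k).continuous]
  refine congrArg (z k + ·) (intervalIntegral.integral_congr fun σ hσ => ?_)
  rw [Set.uIcc_of_le ht.1] at hσ
  simp only [duhamelMap_apply, clamp_of_mem (T := T) (t := σ) ⟨hσ.1, hσ.2.trans ht.2⟩]

end DuhamelMap

section LocalExistence

open scoped ENNReal NNReal BoundedContinuousFunction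
open Set

/-- `Φ` is the action of the nonlinearity `F` on curves of coefficients: it agrees with `F` at each
time, and loses `p` derivatives in norms with the supremum over time inside the sum over
frequencies. Moreover `F` preserves the Hermitian symmetry. -/
structure IsTimeLift (p : ℕ) (F : (ℤ → ℂ) → ℤ → ℂ) (Φ : (ℤ → ℝ →ᵇ ℂ) → ℤ → ℝ →ᵇ ℂ) : Prop where
  lipschitzLoss : LipschitzLoss p Φ
  eval : ∀ U, wienerNorm p U ≠ ⊤ → ∀ k t, Φ U k t = F (fun m => U m t) k
  hermitianSymm : ∀ u, wienerNorm p u ≠ ⊤ → HermitianSymm u → HermitianSymm (F u)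

lemma isTimeLift_nonlinSeq (j0 : ℕ) (lam : Fin j0 → ℝ) (a b c d : Fin j0 → ℕ) :
    IsTimeLift 3 (nonlinSeq j0 lam a b c d) (nonlinSeq j0 lam a b c d) where
  lipschitzLoss := lipschitzLoss_nonlinSeq j0 lam a b c d
  eval _ hU k t := map_nonlinSeq (BoundedContinuousFunction.evalCLM ℂ t) (fun _ _ => rfl) rfl
    j0 lam a b c d hU k
  hermitianSymm _ hu hsymm := hsymm.nonlinSeq hu j0 lam a b c d

/-- `U` is a curve of Fourier coefficients in `H^s`, Hermitian symmetric, which solves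
`∂_t U = l U + F(U)` on `[0, T]` in every mode. -/
structure IsModeSolution (l : ℤ → ℂ) (F : (ℤ → ℂ) → ℤ → ℂ) (s : ℕ) (T : ℝ)
    (U : ℤ → ℝ →ᵇ ℂ) : Prop where
  hermitianSymm : HermitianSymm U
  sobolevSummable : SobolevSummable s U
  eq_integral : ∀ k, ∀ t ∈ Icc 0 T,
    U k t = U k 0 + ∫ σ in (0 : ℝ)..t, (l k * U k σ + F (fun m => U m σ) k)

variable {p : ℕ} {F : (ℤ → ℂ) → ℤ → ℂ} {Φ : (ℤ → ℝ →ᵇ ℂ) → ℤ → ℝ →ᵇ ℂ} {T : ℝ} (hT : 0 ≤ T)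
  {l : ℤ → ℂ} (hl : ∀ k, (l k).re ≤ 0)

lemma IsTimeLift.hermitianSymm_lift (hΦ : IsTimeLift p F Φ) {U : ℤ → ℝ →ᵇ ℂ}
    (hU : wienerNorm p U ≠ ⊤) (hsymm : HermitianSymm U) : HermitianSymm (Φ U) := by
  intro k
  ext t
  rw [BoundedContinuousFunction.star_apply, hΦ.eval U hU, hΦ.eval U hU]
  exact hΦ.hermitianSymm _ (ne_top_of_le_ne_top hU (wienerNorm_eval_le _ _ _)) (hsymm.eval t) k

-- One solves for the forcing `f = Φ(U)` in weight zero rather than for `U` itself.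
lemma exists_fixedPoint_duhamelMap (hΦ : IsTimeLift p F Φ) (hsymm : HermitianSymm l) {M K η : ℝ≥0}
    (hK : ∀ U V, wienerNorm p U ≤ (M + 1 : ℝ≥0) → wienerNorm p V ≤ (M + 1 : ℝ≥0) →
      wienerNorm 0 (Φ U) ≤ K ∧ wienerNorm 0 (Φ U - Φ V) ≤ K * wienerNorm p (U - V))
    (hηK : η * K < 1) (hη : ∀ k, (weight k : ℝ) ^ p * gain (-(l k).re) T ≤ η) {z : ℤ → ℂ}
    (hz : HermitianSymm z) (hzM : wienerNorm p z ≤ M) :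
    ∃ f, HermitianSymm f ∧ wienerNorm p (duhamelMap hT hl z f) ≠ ⊤ ∧
      Φ (duhamelMap hT hl z f) = f := by
  have hD (w : ℤ → ℂ) (f : ℤ → ℝ →ᵇ ℂ) :
      wienerNorm p (duhamelMap hT hl w f) ≤ wienerNorm p w + η * wienerNorm 0 f := by
    have h := wienerNorm_add_le_of_norm_le (fun k => gain_nonneg _ hT) hη
      (norm_duhamelMap_le hT hl w f) 0
    rwa [zero_add] at h
  have hball (f : ℤ → ℝ →ᵇ ℂ) (hf : wienerNorm 0 f ≤ K) :
      wienerNorm p (duhamelMap hT hl z f) ≤ (M + 1 : ℝ≥0) := by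
    refine (hD z f).trans ?_
    push_cast
    refine add_le_add hzM ?_
    calc (η : ℝ≥0∞) * wienerNorm 0 f ≤ η * K := by gcongr
      _ ≤ 1 := by exact_mod_cast hηK.le
  have htop (f : ℤ → ℝ →ᵇ ℂ) (hf : wienerNorm 0 f ≤ K) :
      wienerNorm p (duhamelMap hT hl z f) ≠ ⊤ :=
    ne_top_of_le_ne_top ENNReal.coe_ne_top (hball f hf)
  obtain ⟨f, hfK, hfsymm, hfix⟩ := exists_fixedPoint_of_wienerNorm_sub_le (P := HermitianSymm)
    (Ψ := fun f => Φ (duhamelMap hT hl z f)) hηK isClosed_hermitianSymm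
    (fun _ => (star_zero _).symm)
    (fun f hf hfsymm => ⟨(hK _ _ (hball f hf) (hball f hf)).1,
      hΦ.hermitianSymm_lift (htop f hf) (hermitianSymm_duhamelMap hT hl hsymm hz hfsymm)⟩)
    (fun f g hf hg => by
      refine (hK _ _ (hball f hf) (hball g hg)).2.trans ?_
      rw [duhamelMap_sub, sub_self]
      calc (K : ℝ≥0∞) * wienerNorm p (duhamelMap hT hl 0 (f - g))
          ≤ K * (wienerNorm p (0 : ℤ → ℂ) + η * wienerNorm 0 (f - g)) := by gcongr; exact hD _ _
        _ = (η * K : ℝ≥0) * wienerNorm 0 (f - g) := by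
          rw [wienerNorm_zero, zero_add]; push_cast; ring)
  exact ⟨f, hfsymm, htop f hfK, hfix⟩

-- Each application of Duhamel's formula gains one derivative more than `Φ` loses.
lemma sobolevSummable_duhamelMap (hΦ : LipschitzLoss p Φ) {C : ℝ≥0}
    (hC : ∀ k, (weight k : ℝ) ^ (p + 1) * gain (-(l k).re) T ≤ C) {s : ℕ} (hs : p + 1 ≤ s)
    {z : ℤ → ℂ} (hz : SobolevSummable s z) {f : ℤ → ℝ →ᵇ ℂ}
    (htop : wienerNorm p (duhamelMap hT hl z f) ≠ ⊤) (hfix : Φ (duhamelMap hT hl z f) = f) :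
    SobolevSummable s (duhamelMap hT hl z f) := by
  obtain ⟨n, rfl⟩ := Nat.exists_eq_add_of_le' hs
  have hreg : ∀ r ≤ n, wienerNorm (r + p) (duhamelMap hT hl z f) ≠ ⊤ := by
    intro r hr
    induction r with
    | zero => rwa [zero_add]
    | succ r ih =>
      have hf : wienerNorm r f ≠ ⊤ := hfix ▸ hΦ.regular r _ (ih (by omega))
      have hz' : wienerNorm (r + (p + 1)) z ≠ ⊤ := hz.wienerNorm_ne_top (by omega)
      rw [show r + 1 + p = r + (p + 1) by ring]
      exact ne_top_of_le_ne_top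
        (ENNReal.add_ne_top.2 ⟨hz', ENNReal.mul_ne_top ENNReal.coe_ne_top hf⟩)
        (wienerNorm_add_le_of_norm_le (fun k => gain_nonneg _ hT) hC
          (norm_duhamelMap_le hT hl z f) r)
  exact sobolevSummable_add_of_norm_le (fun k => gain_nonneg _ hT) hC
    (norm_duhamelMap_le hT hl z f) hz (hfix ▸ hΦ.regular n _ (hreg n le_rfl))

theorem exists_isModeSolution (hΦ : IsTimeLift p F Φ) {ε : ℝ} (hε : 0 < ε)
    (hre : ∀ k, (l k).re ≤ -(ε * |(k : ℝ)| ^ (p + 1))) (hsymm : HermitianSymm l) {s : ℕ}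
    (hs : p + 1 ≤ s) (M : ℝ≥0) :
    ∃ T > 0, ∀ z : ℤ → ℂ, HermitianSymm z → wienerNorm p z ≤ M → SobolevSummable s z →
      ∃ U, IsModeSolution l F s T U ∧ ∀ k, U k 0 = z k := by
  have hl (k : ℤ) : (l k).re ≤ 0 := (hre k).trans (neg_nonpos.2 (by positivity))
  obtain ⟨K, hK⟩ := hΦ.lipschitzLoss.lipschitz (M + 1)
  let η : ℝ≥0 := 1 / (K + 1)
  have hηK : η * K < 1 := by
    rw [div_mul_eq_mul_div, one_mul, div_lt_one (by positivity)]
    exact lt_add_one K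
  obtain ⟨T, hT, hgain⟩ := exists_weight_pow_mul_gain_le hε (η := η) (by positivity) p
  have hle (q : ℕ) (k : ℤ) : (weight k : ℝ) ^ q * gain (-(l k).re) T ≤
      (weight k : ℝ) ^ q * gain (ε * |(k : ℝ)| ^ (p + 1)) T := by
    gcongr
    exact gain_le_gain_left (le_neg.1 (hre k)) hT.le
  refine ⟨T, hT, fun z hz hzM hzs => ?_⟩
  obtain ⟨f, hfsymm, htop, hfix⟩ := exists_fixedPoint_duhamelMap hT.le hl hΦ hsymm hK hηK
    (fun k => (hle p k).trans (hgain k)) hz hzM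
  refine ⟨duhamelMap hT.le hl z f, ⟨hermitianSymm_duhamelMap _ _ hsymm hz hfsymm, ?_, ?_⟩,
    duhamelMap_apply_zero hT.le hl z f⟩
  · exact sobolevSummable_duhamelMap hT.le hl hΦ.lipschitzLoss
      (C := ⟨T + 2 ^ (p + 1) / ε, by positivity⟩)
      (fun k => (hle (p + 1) k).trans (weight_pow_succ_mul_gain_le hε hT.le p k)) hs hzs htop hfix
  · intro k t ht
    rw [duhamelMap_apply_zero, duhamelMap_eq_integral hT.le hl z f k ht]
    simp only [← hΦ.eval _ htop, hfix]

end LocalExistence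

section TimeDiscount

open scoped ENNReal NNReal
open MeasureTheory Set

/-- The measure `e^{-qt} dt` on `(0, T]`. For large `q`, Duhamel's formula is a contraction of its
`L¹` space. -/
noncomputable def discounted (q T : ℝ) : Measure ℝ :=
  (volume.restrict (Ioc 0 T)).withDensity fun t => ENNReal.ofReal (Real.exp (-(q * t)))

variable {q T : ℝ}

lemma measurable_ofReal_exp_neg_mul (q : ℝ) :
    Measurable fun t : ℝ => ENNReal.ofReal (Real.exp (-(q * t))) := by fun_prop

lemma lintegral_ofReal_discounted (hT : 0 ≤ T) {f : ℝ → ℝ} (hf : Continuous f)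
    (hf0 : ∀ t, 0 ≤ f t) : ∫⁻ t, ENNReal.ofReal (f t) ∂discounted q T =
      ENNReal.ofReal (∫ t in (0 : ℝ)..T, Real.exp (-(q * t)) * f t) := by
  rw [discounted, lintegral_withDensity_eq_lintegral_mul _ (measurable_ofReal_exp_neg_mul q)
    hf.measurable.ennreal_ofReal, intervalIntegral.integral_of_le hT,
    ofReal_integral_eq_lintegral_ofReal]
  · simp only [Pi.mul_apply, ENNReal.ofReal_mul (Real.exp_pos _).le]
  · exact (Continuous.integrableOn_Icc (by fun_prop)).mono_set Ioc_subset_Icc_self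
  · exact Filter.Eventually.of_forall fun t => mul_nonneg (Real.exp_pos _).le (hf0 t)

lemma discounted_univ_ne_top (hT : 0 ≤ T) : discounted q T univ ≠ ⊤ := by
  have h := lintegral_ofReal_discounted (q := q) hT continuous_const fun _ => zero_le_one
  simp only [ENNReal.ofReal_one, lintegral_one] at h
  exact h ▸ ENNReal.ofReal_ne_top

lemma eqOn_zero_of_ae_discounted (hT : T ≠ 0) {E : Type*} [NormedAddCommGroup E] {f : ℝ → E}
    (hf : Continuous f) (h : ∀ᵐ t ∂discounted q T, f t = 0) : EqOn f 0 (Icc 0 T) := by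
  rw [discounted, ae_withDensity_iff (measurable_ofReal_exp_neg_mul q),
    Measure.restrict_congr_set Ioc_ae_eq_Icc] at h
  refine Measure.eqOn_Icc_of_ae_eq volume hT.symm ?_ hf.continuousOn continuousOn_const
  filter_upwards [h] with t ht
  exact ht (ENNReal.ofReal_pos.2 (Real.exp_pos _)).ne'

lemma mul_integral_exp_mul_primitive_le (c : ℝ) (hT : 0 ≤ T) {h : ℝ → ℝ} (hh : Continuous h)
    (h0 : ∀ t, 0 ≤ h t) :
    c * ∫ t in (0 : ℝ)..T, Real.exp (-(c * t)) * ∫ σ in (0 : ℝ)..t, h σ ≤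
      ∫ t in (0 : ℝ)..T, Real.exp (-(c * t)) * h t := by
  set H : ℝ → ℝ := fun t => ∫ σ in (0 : ℝ)..t, h σ
  have hH (t : ℝ) : HasDerivAt H (h t) t := (hh.integral_hasStrictDerivAt 0 t).hasDerivAt
  have hHc : Continuous H := continuous_iff_continuousAt.2 fun t => (hH t).continuousAt
  have hderiv : ∀ t ∈ uIcc 0 T, HasDerivAt (fun t => Real.exp (-(c * t)) * H t)
      (Real.exp (-(c * t)) * h t - c * (Real.exp (-(c * t)) * H t)) t := fun t _ => by
    have hexp : HasDerivAt (fun t => Real.exp (-(c * t))) (Real.exp (-(c * t)) * -c) t := by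
      simpa using (((hasDerivAt_id t).const_mul c).fun_neg).exp
    convert! hexp.mul (hH t) using 1
    ring
  have hparts := intervalIntegral.integral_eq_sub_of_hasDerivAt hderiv
    (Continuous.intervalIntegrable (by fun_prop) _ _)
  rw [intervalIntegral.integral_sub (Continuous.intervalIntegrable (by fun_prop) _ _)
    (Continuous.intervalIntegrable (by fun_prop) _ _), intervalIntegral.integral_const_mul,
    show H 0 = 0 by simp [H], mul_zero, sub_zero] at hparts
  have hHT : 0 ≤ Real.exp (-(c * T)) * H T :=
    mul_nonneg (Real.exp_pos _).le (intervalIntegral.integral_nonneg hT fun σ _ => h0 σ)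
  linarith

lemma norm_duhamel_zero_le {l : ℂ} {μ : ℝ} (hl : l.re ≤ -μ) {g : ℝ → ℂ} (hg : Continuous g)
    {t : ℝ} (ht : 0 ≤ t) : ‖duhamel l 0 g t‖ ≤
      Real.exp (-(μ * t)) * ∫ σ in (0 : ℝ)..t, Real.exp (μ * σ) * ‖g σ‖ := by
  rw [duhamel_eq_integral_exp_sub, mul_zero, zero_add, ← intervalIntegral.integral_const_mul]
  refine intervalIntegral.norm_integral_le_of_norm_le ht
    (Filter.Eventually.of_forall fun σ hσ => ?_) (Continuous.intervalIntegrable (by fun_prop) _ _)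
  have hexp : (t - σ) * l.re ≤ -(μ * t) + μ * σ := by
    calc (t - σ) * l.re ≤ (t - σ) * -μ := mul_le_mul_of_nonneg_left hl (sub_nonneg.2 hσ.2)
      _ = _ := by ring
  rw [norm_mul, Complex.norm_exp, Complex.re_ofReal_mul, ← mul_assoc, ← Real.exp_add]
  gcongr

lemma ofReal_mul_lintegral_enorm_duhamel_le (hT : 0 ≤ T) {l : ℂ} {μ : ℝ} (hl : l.re ≤ -μ)
    (hq : 0 ≤ q + μ) {g : ℝ → ℂ} (hg : Continuous g) :
    ENNReal.ofReal (q + μ) * ∫⁻ t, ‖duhamel l 0 g t‖ₑ ∂discounted q T ≤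
      ∫⁻ t, ‖g t‖ₑ ∂discounted q T := by
  have hd := continuous_duhamel l 0 hg
  have : Continuous fun t : ℝ => ∫ σ in (0 : ℝ)..t, Real.exp (μ * σ) * ‖g σ‖ :=
    intervalIntegral.continuous_primitive
      (fun _ _ => Continuous.intervalIntegrable (by fun_prop) _ _) 0
  simp only [← ofReal_norm]
  rw [lintegral_ofReal_discounted hT hd.norm fun _ => norm_nonneg _,
    lintegral_ofReal_discounted hT hg.norm fun _ => norm_nonneg _, ← ENNReal.ofReal_mul hq]
  refine ENNReal.ofReal_le_ofReal ?_
  calc (q + μ) * ∫ t in (0 : ℝ)..T, Real.exp (-(q * t)) * ‖duhamel l 0 g t‖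
      ≤ (q + μ) * ∫ t in (0 : ℝ)..T, Real.exp (-((q + μ) * t)) *
          ∫ σ in (0 : ℝ)..t, Real.exp (μ * σ) * ‖g σ‖ := by
        refine mul_le_mul_of_nonneg_left (intervalIntegral.integral_mono_on hT
          (Continuous.intervalIntegrable (by fun_prop) _ _)
          (Continuous.intervalIntegrable (by fun_prop) _ _) fun t ht => ?_) hq
        rw [add_mul, neg_add, Real.exp_add, mul_assoc]
        gcongr
        exact norm_duhamel_zero_le hl hg ht.1
    _ ≤ ∫ t in (0 : ℝ)..T, Real.exp (-((q + μ) * t)) * (Real.exp (μ * t) * ‖g t‖) :=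
        mul_integral_exp_mul_primitive_le _ hT (by fun_prop) fun _ => by positivity
    _ = ∫ t in (0 : ℝ)..T, Real.exp (-(q * t)) * ‖g t‖ := by
        refine intervalIntegral.integral_congr fun t _ => ?_
        rw [← mul_assoc, ← Real.exp_add]
        congr 2; ring

lemma lintegral_wienerNorm (ν : Measure ℝ) {B : Type*} [NormedAddCommGroup B] {w : ℝ → ℤ → B}
    (hw : ∀ k, Continuous fun t => w t k) (r : ℕ) :
    ∫⁻ t, wienerNorm r (w t) ∂ν = ∑' k, (weight k : ℝ≥0∞) ^ r * ∫⁻ t, ‖w t k‖ₑ ∂ν := by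
  have hm (k : ℤ) : Measurable fun t => ‖w t k‖ₑ := (hw k).enorm.measurable
  simp only [wienerNorm]
  rw [lintegral_tsum fun k => ((hm k).const_mul _).aemeasurable]
  exact tsum_congr fun k => lintegral_const_mul _ (hm k)

lemma lintegral_wienerNorm_duhamel_le (hT : 0 ≤ T) {l : ℤ → ℂ} {μ : ℤ → ℝ}
    (hl : ∀ k, (l k).re ≤ -μ k) {p : ℕ} {η : ℝ≥0} (hq : ∀ k, 0 ≤ q + μ k)
    (hη : ∀ k, (weight k : ℝ) ^ p ≤ η * (q + μ k)) {g : ℝ → ℤ → ℂ}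
    (hg : ∀ k, Continuous fun t => g t k) :
    ∫⁻ t, wienerNorm p (fun k => duhamel (l k) 0 (fun σ => g σ k) t) ∂discounted q T ≤
      η * ∫⁻ t, wienerNorm 0 (g t) ∂discounted q T := by
  rw [lintegral_wienerNorm _ (fun k => continuous_duhamel (l k) 0 (hg k)),
    lintegral_wienerNorm _ hg, ← ENNReal.tsum_mul_left]
  refine ENNReal.tsum_le_tsum fun k => ?_
  have hweight : (weight k : ℝ≥0∞) ^ p ≤ η * ENNReal.ofReal (q + μ k) := by
    have := ENNReal.ofReal_le_ofReal (hη k)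
    rwa [ENNReal.ofReal_pow (by positivity), ENNReal.ofReal_mul η.coe_nonneg,
      ENNReal.ofReal_coe_nnreal, ENNReal.ofReal_coe_nnreal] at this
  rw [pow_zero, one_mul]
  refine (mul_le_mul_left hweight _).trans ?_
  rw [mul_assoc]
  gcongr
  exact ofReal_mul_lintegral_enorm_duhamel_le hT (hl k) (hq k) (hg k)

lemma exists_weight_pow_le {ε η : ℝ} (hε : 0 < ε) (hη : 0 < η) (p : ℕ) :
    ∃ q, 0 ≤ q ∧ ∀ k : ℤ, (weight k : ℝ) ^ p ≤ η * (q + ε * |(k : ℝ)| ^ (p + 1)) := by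
  let N : ℝ := 1 + 2 ^ (p + 1) / (ε * η)
  have hN : 1 ≤ N := le_add_of_nonneg_right (by positivity)
  refine ⟨(1 + N) ^ p / η, by positivity, fun k => ?_⟩
  rw [mul_add, mul_div_cancel₀ _ hη.ne', coe_weight]
  have hN0 : 0 ≤ (1 + N) ^ p := by positivity
  rcases le_total |(k : ℝ)| N with hk | hk
  · exact le_add_of_le_of_nonneg (by gcongr) (by positivity)
  · refine le_add_of_nonneg_of_le hN0 ?_
    have hlarge : 2 ^ (p + 1) ≤ ε * η * |(k : ℝ)| := by
      rw [← div_le_iff₀' (by positivity)]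
      exact (le_add_of_nonneg_left zero_le_one).trans hk
    calc (1 + |(k : ℝ)|) ^ p ≤ (2 * |(k : ℝ)|) ^ p := by gcongr; linarith
      _ ≤ 2 ^ (p + 1) * |(k : ℝ)| ^ p := by
        rw [mul_pow]; gcongr; exacts [one_le_two, Nat.le_succ p]
      _ ≤ ε * η * |(k : ℝ)| * |(k : ℝ)| ^ p := by gcongr
      _ = η * (ε * |(k : ℝ)| ^ (p + 1)) := by ring

end TimeDiscount

section Uniqueness

open scoped ENNReal NNReal
open MeasureTheory Set

/-- `x` is a bounded curve of coefficients which solves `x' = l x + F(x)` on `[0, T]` in every mode.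
Continuity is only required mode by mode. -/
structure IsModeCurve (p : ℕ) (l : ℤ → ℂ) (F : (ℤ → ℂ) → ℤ → ℂ) (T : ℝ) (R : ℝ≥0)
    (x : ℝ → ℤ → ℂ) : Prop where
  wienerNorm_le : ∀ t ∈ Icc 0 T, wienerNorm p (x t) ≤ R
  continuousOn : ∀ k, ContinuousOn (fun t => x t k) (Icc 0 T)
  continuousOn_forcing : ∀ k, ContinuousOn (fun t => F (x t) k) (Icc 0 T)
  eq_integral : ∀ k, ∀ t ∈ Icc 0 T,
    x t k = x 0 k + ∫ σ in (0 : ℝ)..t, (l k * x σ k + F (x σ) k)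

variable {p : ℕ} {l : ℤ → ℂ} {F : (ℤ → ℂ) → ℤ → ℂ} {T : ℝ} {R : ℝ≥0} {x y : ℝ → ℤ → ℂ}

lemma IsModeCurve.sub_eq_duhamel (hT : 0 ≤ T) (hx : IsModeCurve p l F T R x)
    (hy : IsModeCurve p l F T R y) (h0 : x 0 = y 0) {t : ℝ} (ht : t ∈ Icc 0 T) (k : ℤ) :
    x t k - y t k =
      duhamel (l k) 0 (fun σ => F (x (clamp T σ)) k - F (y (clamp T σ)) k) t := by
  have hclamp {w : ℝ → ℤ → ℂ} (hw : IsModeCurve p l F T R w) :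
      w t k = duhamel (l k) (w 0 k) (fun σ => F (w (clamp T σ)) k) t := by
    refine eq_duhamel_of_eq_integral (hw.continuousOn k)
      (continuous_comp_clamp hT (hw.continuousOn_forcing k)).continuousOn (fun τ hτ => ?_) ht
    rw [hw.eq_integral k τ hτ]
    refine congrArg (w 0 k + ·) (intervalIntegral.integral_congr fun σ hσ => ?_)
    rw [uIcc_of_le hτ.1] at hσ
    simp only [clamp_of_mem (T := T) (t := σ) ⟨hσ.1, hσ.2.trans hτ.2⟩]
  rw [hclamp hx, hclamp hy, h0, duhamel_sub _ _ _
    (continuous_comp_clamp hT (hx.continuousOn_forcing k))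
    (continuous_comp_clamp hT (hy.continuousOn_forcing k)), sub_self]

lemma ae_discounted_mem (q T : ℝ) : ∀ᵐ t ∂discounted q T, t ∈ Icc 0 T :=
  (withDensity_absolutelyContinuous _ _).ae_le
    ((ae_restrict_mem measurableSet_Ioc).mono fun _ ht => Ioc_subset_Icc_self ht)

lemma IsModeCurve.exists_lintegral_wienerNorm_sub_eq_zero (hF : LipschitzLoss p F) {ε : ℝ}
    (hε : 0 < ε) (hre : ∀ k, (l k).re ≤ -(ε * |(k : ℝ)| ^ (p + 1))) (hT : 0 ≤ T)
    (hx : IsModeCurve p l F T R x) (hy : IsModeCurve p l F T R y) (h0 : x 0 = y 0) :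
    ∃ q, ∫⁻ t, wienerNorm p (x (clamp T t) - y (clamp T t)) ∂discounted q T = 0 := by
  obtain ⟨K, hK⟩ := hF.lipschitz R
  let η : ℝ≥0 := 1 / (K + 1)
  have hηK : η * K < 1 := by
    rw [div_mul_eq_mul_div, one_mul, div_lt_one (by positivity)]
    exact lt_add_one K
  obtain ⟨q, hq, hweight⟩ := exists_weight_pow_le hε (η := η) (by positivity) p
  let z : ℝ → ℤ → ℂ := fun t => x (clamp T t) - y (clamp T t)
  let g : ℝ → ℤ → ℂ := fun t => F (x (clamp T t)) - F (y (clamp T t))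
  have hgc (k : ℤ) : Continuous fun t => g t k :=
    continuous_comp_clamp hT ((hx.continuousOn_forcing k).sub (hy.continuousOn_forcing k))
  have hR {w : ℝ → ℤ → ℂ} (hw : IsModeCurve p l F T R w) (t : ℝ) :
      wienerNorm p (w (clamp T t)) ≤ R := hw.wienerNorm_le _ (clamp_mem hT t)
  have hfin : ∫⁻ t, wienerNorm p (z t) ∂discounted q T ≠ ⊤ := by
    refine ne_top_of_le_ne_top ?_ (lintegral_mono (g := fun _ => (R + R : ℝ≥0∞)) fun t =>
      (wienerNorm_sub_le _ _ _).trans (add_le_add (hR hx t) (hR hy t)))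
    rw [lintegral_const]
    exact ENNReal.mul_ne_top (by simp) (discounted_univ_ne_top hT)
  have hcontr : ∫⁻ t, wienerNorm p (z t) ∂discounted q T ≤
      (η * K : ℝ≥0) * ∫⁻ t, wienerNorm p (z t) ∂discounted q T := by
    calc ∫⁻ t, wienerNorm p (z t) ∂discounted q T
        = ∫⁻ t, wienerNorm p (fun k => duhamel (l k) 0 (fun σ => g σ k) t) ∂discounted q T := by
          refine lintegral_congr_ae ((ae_discounted_mem q T).mono fun t ht => ?_)
          refine congrArg (wienerNorm p) (funext fun k => ?_)
          simp only [z, clamp_of_mem ht]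
          exact hx.sub_eq_duhamel hT hy h0 ht k
      _ ≤ η * ∫⁻ t, wienerNorm 0 (g t) ∂discounted q T :=
          lintegral_wienerNorm_duhamel_le hT hre (fun k => by positivity) hweight hgc
      _ ≤ η * ∫⁻ t, K * wienerNorm p (z t) ∂discounted q T := by
          gcongr with t; exact (hK _ _ (hR hx t) (hR hy t)).2
      _ = _ := by rw [lintegral_const_mul' _ _ ENNReal.coe_ne_top]; push_cast; ring
  refine ⟨q, by_contra fun hne => hcontr.not_gt ?_⟩
  simpa using ENNReal.mul_lt_mul_left hne hfin (ENNReal.coe_lt_coe.2 hηK)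

theorem IsModeCurve.eqOn (hF : LipschitzLoss p F) {ε : ℝ} (hε : 0 < ε)
    (hre : ∀ k, (l k).re ≤ -(ε * |(k : ℝ)| ^ (p + 1))) (hT : 0 < T)
    (hx : IsModeCurve p l F T R x) (hy : IsModeCurve p l F T R y) (h0 : x 0 = y 0) :
    EqOn x y (Icc 0 T) := by
  obtain ⟨q, hzero⟩ := hx.exists_lintegral_wienerNorm_sub_eq_zero hF hε hre hT.le hy h0
  have hc (k : ℤ) : Continuous fun t => (x (clamp T t) - y (clamp T t)) k :=
    continuous_comp_clamp hT.le ((hx.continuousOn k).sub (hy.continuousOn k))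
  intro t ht
  funext k
  rw [lintegral_wienerNorm _ hc, ENNReal.tsum_eq_zero] at hzero
  have hmode := (mul_eq_zero.1 (hzero k)).resolve_left
    (pow_ne_zero _ (ENNReal.coe_ne_zero.2 (zero_lt_one.trans_le (one_le_weight k)).ne'))
  rw [lintegral_eq_zero_iff (hc k).enorm.measurable] at hmode
  have heq : x (clamp T t) k - y (clamp T t) k = 0 :=
    eqOn_zero_of_ae_discounted hT.ne' (hc k) (hmode.mono fun t ht => by simpa using ht) ht
  rwa [clamp_of_mem ht, sub_eq_zero] at heq

end Uniqueness

section LinearSymbol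

/-- The Fourier symbol of the linear operator `-ε∂_x⁴ - γ₀∂_x⁵ - γ₁∂_x³ - γ₂∂_x`. -/
noncomputable def linSymbol (ε γ0 γ1 γ2 : ℝ) (k : ℤ) : ℂ :=
  -(ε * k ^ 4) - Complex.I * (γ0 * k ^ 5 - γ1 * k ^ 3 + γ2 * k)

variable (ε γ0 γ1 γ2 : ℝ)

lemma linSymbol_re (k : ℤ) : (linSymbol ε γ0 γ1 γ2 k).re = -(ε * |(k : ℝ)| ^ 4) := by
  have h : linSymbol ε γ0 γ1 γ2 k = ((-(ε * (k : ℝ) ^ 4) : ℝ) : ℂ) -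
      Complex.I * ((γ0 * k ^ 5 - γ1 * k ^ 3 + γ2 * k : ℝ) : ℂ) := by
    rw [linSymbol]; push_cast; ring
  rw [h, Complex.sub_re, Complex.ofReal_re, Complex.re_mul_ofReal, Complex.I_re, zero_mul,
    sub_zero, Even.pow_abs (by decide)]

lemma hermitianSymm_linSymbol : HermitianSymm (linSymbol ε γ0 γ1 γ2) := by
  intro k
  simp only [linSymbol, Int.cast_neg, star_sub, star_neg, star_add, star_mul', star_pow,
    Complex.star_def, Complex.conj_I, Complex.conj_ofReal, map_intCast]
  ring

lemma linSymbol_neg_eq (k : ℤ) : linSymbol ε γ0 γ1 γ2 (-k) =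
    -(ε * (Complex.I * k) ^ 4) + γ0 * (Complex.I * k) ^ 5 + γ1 * (Complex.I * k) ^ 3 +
      γ2 * (Complex.I * k) := by
  simp only [linSymbol, mul_pow, Complex.I_pow_four, pow_succ Complex.I 4, Complex.I_pow_three]
  push_cast; ring

end LinearSymbol

section FourierCoefficientRules

open Set

lemma periodic_iteratedDeriv {f : ℝ → ℝ} {c : ℝ} (hf : Function.Periodic f c) (n : ℕ) :
    Function.Periodic (iteratedDeriv n f) c := by
  intro x
  have h := congrFun (iteratedDeriv_comp_add_const n f c) x
  rwa [funext hf, eq_comm] at h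

lemma fc_deriv {f : ℝ → ℝ} (hf : ContDiff ℝ 1 f) (hp : Function.Periodic f (2 * Real.pi))
    (k : ℤ) : fc (deriv f) k = Complex.I * k * fc f k := by
  have hparts := intervalIntegral.integral_deriv_mul_eq_sub (a := 0) (b := 2 * Real.pi)
    (fun x _ => (hf.differentiable one_ne_zero x).hasDerivAt.ofReal_comp)
    (fun x _ => hasDerivAt_wave (-k) x)
    ((Complex.continuous_ofReal.comp (hf.continuous_deriv le_rfl)).intervalIntegrable _ _)
    ((continuous_const.mul (continuous_wave _)).intervalIntegrable _ _)
  have hf0 : f (2 * Real.pi) = f 0 := by simpa using hp 0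
  have hw0 : wave (-k) (2 * Real.pi) = wave (-k) 0 := by simpa using periodic_wave (-k) 0
  rw [hf0, hw0, sub_self, intervalIntegral.integral_add] at hparts
  · have hI (x : ℝ) : (f x : ℂ) * (Complex.I * (-k : ℤ) * wave (-k) x) =
        -(Complex.I * k) * ((f x : ℂ) * wave (-k) x) := by push_cast; ring
    simp only [hI, intervalIntegral.integral_const_mul] at hparts
    rw [fc_eq_integral_wave, fc_eq_integral_wave]
    linear_combination (Complex.ofReal (2 * Real.pi))⁻¹ * hparts
  · exact ((Complex.continuous_ofReal.comp (hf.continuous_deriv le_rfl)).mul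
      (continuous_wave _)).intervalIntegrable _ _
  · exact ((Complex.continuous_ofReal.comp hf.continuous).mul
      (continuous_const.mul (continuous_wave _))).intervalIntegrable _ _

lemma fc_iteratedDeriv {n : ℕ} {f : ℝ → ℝ} (hf : ContDiff ℝ n f)
    (hp : Function.Periodic f (2 * Real.pi)) (k : ℤ) :
    fc (iteratedDeriv n f) k = (Complex.I * k) ^ n * fc f k := by
  induction n with
  | zero => simp
  | succ n ih =>
    have hn : ContDiff ℝ 1 (iteratedDeriv n f) := by
      rw [iteratedDeriv_eq_iterate]
      exact ContDiff.iterate_deriv' 1 n (by simpa [add_comm] using hf)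
    rw [iteratedDeriv_succ, fc_deriv hn (periodic_iteratedDeriv hp n),
      ih (hf.of_le (by exact_mod_cast n.le_succ))]
    ring

lemma norm_fc_le {f : ℝ → ℝ} {C : ℝ} (h : ∀ x ∈ Icc 0 (2 * Real.pi), |f x| ≤ C) (k : ℤ) :
    ‖fc f k‖ ≤ C := by
  have hint : ‖∫ x in (0 : ℝ)..(2 * Real.pi), (f x : ℂ) * wave (-k) x‖ ≤ C * |2 * Real.pi - 0| := by
    refine intervalIntegral.norm_integral_le_of_norm_le_const fun x hx => ?_
    rw [uIoc_of_le (by positivity)] at hx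
    rw [norm_mul, norm_wave, mul_one, Complex.norm_real]
    exact h x (Ioc_subset_Icc_self hx)
  rw [sub_zero, abs_of_pos (by positivity)] at hint
  rw [fc_eq_integral_wave, norm_mul, norm_inv, Complex.norm_real,
    Real.norm_of_nonneg (by positivity), inv_mul_le_iff₀ (by positivity)]
  linarith

lemma hasSum_mul_fc_neg {a : ℤ → ℂ} (ha : wienerNorm 0 a ≠ ⊤) {f : ℝ → ℝ}
    (hf : ∀ x, (f x : ℂ) = fourierSeries a x) {g : ℝ → ℝ} (hg : Continuous g) :
    HasSum (fun k => a k * fc g (-k))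
      (((2 * Real.pi)⁻¹ * ∫ x in (0 : ℝ)..(2 * Real.pi), f x * g x : ℝ) : ℂ) := by
  obtain ⟨C, hC⟩ := isCompact_Icc.exists_bound_of_continuousOn
    (s := Icc 0 (2 * Real.pi)) hg.continuousOn
  have h := hasSum_intervalIntegral_of_norm_le (F := fun k x => a k * (g x * wave k x))
    (A := fun k => ‖a k‖ * C) (a := 0) (b := 2 * Real.pi) (by positivity)
    (fun k => (continuous_const.mul
      ((Complex.continuous_ofReal.comp hg).mul (continuous_wave k))).continuousOn)
    ((wienerNorm_zero_ne_top_iff.1 ha).mul_right C) (fun k x hx => by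
      rw [norm_mul, norm_mul, norm_wave, mul_one, Complex.norm_real]
      gcongr
      exact hC x hx)
  simp only [intervalIntegral.integral_const_mul] at h
  convert! h.mul_left (Complex.ofReal (2 * Real.pi))⁻¹ using 1
  · funext k
    rw [fc_eq_integral_wave, neg_neg]
    ring
  · rw [Complex.ofReal_mul, Complex.ofReal_inv, ← intervalIntegral.integral_ofReal]
    congr 1
    refine intervalIntegral.integral_congr fun x _ => ?_
    simp only [Complex.ofReal_mul, hf, fourierSeries, ← tsum_mul_right]
    exact tsum_congr fun k => by ring

end FourierCoefficientRules

section TestFunctions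

open scoped ContDiff
open Set

variable {ψ : ℝ → ℝ → ℝ}

lemma continuous_fc_curve (hψ : Continuous (Function.uncurry ψ)) (k : ℤ) :
    Continuous fun t => fc (ψ t) k := by
  simp only [fc_eq_integral_wave]
  exact continuous_const.mul
    (intervalIntegral.continuous_parametric_intervalIntegral_of_continuous'
      (f := fun t x => (ψ t x : ℂ) * wave (-k) x)
      ((Complex.continuous_ofReal.comp hψ).mul ((continuous_wave _).comp continuous_snd)) _ _)

lemma exists_norm_fc_curve_le (hψ : Continuous (Function.uncurry ψ)) (a b : ℝ) :
    ∃ C, ∀ k, ∀ t ∈ Icc a b, ‖fc (ψ t) k‖ ≤ C := by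
  obtain ⟨C, hC⟩ := (isCompact_Icc.prod isCompact_Icc).exists_bound_of_continuousOn
    (s := Icc a b ×ˢ Icc 0 (2 * Real.pi)) hψ.continuousOn
  exact ⟨C, fun k t ht => norm_fc_le (fun x hx => hC (t, x) ⟨ht, hx⟩) k⟩

variable (hψ : ContDiff ℝ ∞ (Function.uncurry ψ))

include hψ

lemma contDiff_deriv_snd : ContDiff ℝ ∞ (Function.uncurry fun t x => deriv (ψ t) x) := by
  have h : ContDiff ℝ ∞ fun p : ℝ × ℝ => fderiv ℝ (fun x => ψ p.1 x) p.2 :=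
    ContDiff.fderiv (hψ.comp ((contDiff_fst.comp contDiff_fst).prodMk contDiff_snd))
      contDiff_snd (by simp)
  exact h.clm_apply contDiff_const

lemma contDiff_deriv_fst :
    ContDiff ℝ ∞ (Function.uncurry fun t x => deriv (fun τ => ψ τ x) t) := by
  have h : ContDiff ℝ ∞ fun p : ℝ × ℝ => fderiv ℝ (fun τ => ψ τ p.2) p.1 :=
    ContDiff.fderiv (hψ.comp (contDiff_snd.prodMk (contDiff_snd.comp contDiff_fst)))
      contDiff_fst (by simp)
  exact h.clm_apply contDiff_const

lemma contDiff_iteratedDeriv_snd (n : ℕ) :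
    ContDiff ℝ ∞ (Function.uncurry fun t x => iteratedDeriv n (ψ t) x) := by
  induction n with
  | zero => simpa using hψ
  | succ n ih => simpa only [iteratedDeriv_succ] using contDiff_deriv_snd ih

lemma hasDerivAt_fc_curve (k : ℤ) (t : ℝ) :
    HasDerivAt (fun t => fc (ψ t) k) (fc (fun x => deriv (fun τ => ψ τ x) t) k) t := by
  have hc := (contDiff_deriv_fst hψ).continuous
  obtain ⟨C, hC⟩ := (isCompact_Icc.prod isCompact_Icc).exists_bound_of_continuousOn
    (s := Icc (t - 1) (t + 1) ×ˢ Icc 0 (2 * Real.pi)) hc.continuousOn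
  have hcont {φ : ℝ → ℝ → ℝ} (hφ : Continuous (Function.uncurry φ)) (t : ℝ) :
      Continuous fun x => (φ t x : ℂ) * wave (-k) x :=
    (Complex.continuous_ofReal.comp (hφ.comp (Continuous.prodMk_right t))).mul (continuous_wave _)
  simp only [fc_eq_integral_wave]
  refine (intervalIntegral.hasDerivAt_integral_of_dominated_loc_of_deriv_le
    (F := fun t x => (ψ t x : ℂ) * wave (-k) x)
    (F' := fun t x => ((deriv (fun τ => ψ τ x) t : ℝ) : ℂ) * wave (-k) x) (bound := fun _ => C)
    (Icc_mem_nhds (sub_one_lt t) (lt_add_one t))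
    (Filter.Eventually.of_forall fun t => (hcont hψ.continuous t).aestronglyMeasurable)
    ((hcont hψ.continuous t).intervalIntegrable _ _) (hcont hc t).aestronglyMeasurable
    (Filter.Eventually.of_forall fun x hx τ hτ => ?_) (by simp)
    (Filter.Eventually.of_forall fun x _ τ _ => ?_)).2.const_mul _
  · rw [uIoc_of_le (by positivity)] at hx
    rw [norm_mul, norm_wave, mul_one, Complex.norm_real]
    exact hC (τ, x) ⟨hτ, Ioc_subset_Icc_self hx⟩
  · have hd : ContDiff ℝ ∞ fun t => ψ t x := hψ.comp (contDiff_id.prodMk contDiff_const)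
    exact (hd.differentiable (by simp) τ).hasDerivAt.ofReal_comp.mul_const _

/-- The adjoint of the linear operator `∂_t + ε∂_x⁴ + γ₀∂_x⁵ + γ₁∂_x³ + γ₂∂_x`, up to the global
sign, so that `IsSolutionReg` reads `∫∫ (u * adjointOp ψ + N(u) * ψ) = 0`. -/
noncomputable def adjointOp (ε γ0 γ1 γ2 : ℝ) (ψ : ℝ → ℝ → ℝ) (t x : ℝ) : ℝ :=
  deriv (fun τ : ℝ => ψ τ x) t - ε * iteratedDeriv 4 (ψ t) x + γ0 * iteratedDeriv 5 (ψ t) x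
    + γ1 * iteratedDeriv 3 (ψ t) x + γ2 * deriv (ψ t) x

variable {ε γ0 γ1 γ2 : ℝ}

lemma continuous_adjointOp : Continuous (Function.uncurry (adjointOp ε γ0 γ1 γ2 ψ)) := by
  have ht := (contDiff_deriv_fst hψ).continuous
  have hx := (contDiff_deriv_snd hψ).continuous
  have hn (n : ℕ) := (contDiff_iteratedDeriv_snd hψ n).continuous
  exact (((ht.sub (continuous_const.mul (hn 4))).add (continuous_const.mul (hn 5))).add
    (continuous_const.mul (hn 3))).add (continuous_const.mul hx)

lemma fc_adjointOp (hp : ∀ t, Function.Periodic (ψ t) (2 * Real.pi)) (t : ℝ) (k : ℤ) :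
    fc (adjointOp ε γ0 γ1 γ2 ψ t) k =
      fc (fun x => deriv (fun τ => ψ τ x) t) k + linSymbol ε γ0 γ1 γ2 (-k) * fc (ψ t) k := by
  have ht : Continuous fun x => deriv (fun τ => ψ τ x) t :=
    (contDiff_deriv_fst hψ).continuous.comp (Continuous.prodMk_right t)
  have hx (n : ℕ) : Continuous (iteratedDeriv n (ψ t)) :=
    (contDiff_iteratedDeriv_snd hψ n).continuous.comp (Continuous.prodMk_right t)
  have hslice : ContDiff ℝ ∞ (ψ t) := hψ.comp (contDiff_const.prodMk contDiff_id)
  have hderiv (n : ℕ) :=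
    fc_iteratedDeriv (n := n) (hslice.of_le (by exact_mod_cast le_top)) (hp t) k
  unfold adjointOp
  simp only [← iteratedDeriv_one (f := ψ t)]
  rw [fc_add, fc_add, fc_add, fc_sub]
  · simp only [fc_const_mul, hderiv, linSymbol_neg_eq]
    ring
  all_goals fun_prop

end TestFunctions

section ModesToSolution

open scoped BoundedContinuousFunction ContDiff
open MeasureTheory Set

lemma memHs_of_eq_fourierSeries {s : ℕ} (hs : 1 ≤ s) {a : ℤ → ℂ} (ha : SobolevSummable s a)
    {f : ℝ → ℝ} (hf : ∀ x, (f x : ℂ) = fourierSeries a x) : MemHs s f := by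
  have ha0 : wienerNorm 0 a ≠ ⊤ := ha.wienerNorm_ne_top hs
  refine ⟨(contDiff_of_eq_fourierSeries hf 0 ha0).continuous, periodic_of_eq_fourierSeries hf, ?_⟩
  rwa [funext (fc_of_eq_fourierSeries ha0 hf)]

lemma SobolevSummable.eval {s : ℕ} {U : ℤ → ℝ →ᵇ ℂ} (hU : SobolevSummable s U) (t : ℝ) :
    SobolevSummable s fun k => U k t :=
  hU.mono le_rfl fun k => (U k).norm_coe_le_norm t

lemma SobolevSummable.tendsto_sobolevSq_eval_sub {s : ℕ} {U : ℤ → ℝ →ᵇ ℂ}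
    (hU : SobolevSummable s U) (t₀ : ℝ) :
    Filter.Tendsto (fun t => sobolevSq s fun k => U k t - U k t₀) (nhds t₀) (nhds 0) := by
  have hzero : ∑' k : ℤ, (1 + (k : ℝ) ^ 2) ^ s * ‖U k t₀ - U k t₀‖ ^ 2 = 0 := by simp
  rw [← hzero]
  refine tendsto_tsum_of_dominated_convergence (Summable.mul_left 4 hU) (fun k => ?_)
    (Filter.Eventually.of_forall fun t k => ?_)
  · have : Continuous fun t => (1 + (k : ℝ) ^ 2) ^ s * ‖U k t - U k t₀‖ ^ 2 := by fun_prop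
    exact this.tendsto t₀
  · have hle : ‖U k t - U k t₀‖ ≤ 2 * ‖U k‖ := by
      linarith [norm_sub_le (U k t) (U k t₀), (U k).norm_coe_le_norm t, (U k).norm_coe_le_norm t₀]
    rw [Real.norm_of_nonneg (by positivity)]
    calc (1 + (k : ℝ) ^ 2) ^ s * ‖U k t - U k t₀‖ ^ 2
        ≤ (1 + (k : ℝ) ^ 2) ^ s * (2 * ‖U k‖) ^ 2 := by gcongr
      _ = 4 * ((1 + (k : ℝ) ^ 2) ^ s * ‖U k‖ ^ 2) := by ring

lemma contInHs_of_eq_fourierSeries {s : ℕ} (hs : 1 ≤ s) {U : ℤ → ℝ →ᵇ ℂ}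
    (hU : SobolevSummable s U) {A : Set ℝ} {u : ℝ → ℝ → ℝ}
    (hu : ∀ t ∈ A, ∀ x, (u t x : ℂ) = fourierSeries (fun k => U k t) x) : ContInHs s A u := by
  intro t₀ ht₀ η hη
  have hlim := (hU.tendsto_sobolevSq_eval_sub t₀).sqrt
  rw [Real.sqrt_zero] at hlim
  obtain ⟨δ, hδ, hball⟩ := Metric.eventually_nhds_iff.1 (hlim.eventually_lt_const hη)
  refine ⟨δ, hδ, fun t ht htt => ?_⟩
  have hcont (t) (ht : t ∈ A) := (memHs_of_eq_fourierSeries hs (hU.eval t) (hu t ht)).1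
  have hfc (t) (ht : t ∈ A) := fc_of_eq_fourierSeries ((hU.eval t).wienerNorm_ne_top hs) (hu t ht)
  have hsub : fc (fun x => u t x - u t₀ x) = fun k => U k t - U k t₀ := funext fun k => by
    rw [fc_sub (hcont t ht) (hcont t₀ ht₀), hfc t ht, hfc t₀ ht₀]
  rw [hsNorm_eq_sqrt_sobolevSq, hsub]
  exact hball htt

lemma continuous_Nfun (j0 : ℕ) (lam : Fin j0 → ℝ) (a b c d : Fin j0 → ℕ) {f : ℝ → ℝ}
    (hf : ContDiff ℝ 3 f) : Continuous (Nfun j0 lam a b c d f) := by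
  have : Continuous (iteratedDeriv 3 f) := hf.continuous_iteratedDeriv 3 le_rfl
  have h2 : Continuous (iteratedDeriv 2 f) := hf.continuous_iteratedDeriv 2 (by norm_num)
  have h1 : Continuous (deriv f) := hf.continuous_deriv (by norm_num)
  have h0 : Continuous f := hf.continuous
  unfold Nfun
  fun_prop

lemma hasSum_mul_fc_add_nonlinSeq_mul_fc (j0 : ℕ) (lam : Fin j0 → ℝ) (a b c d : Fin j0 → ℕ)
    {u : ℤ → ℂ} (hu : wienerNorm 3 u ≠ ⊤) {f g p : ℝ → ℝ}
    (hf : ∀ x, (f x : ℂ) = fourierSeries u x) (hg : Continuous g) (hp : Continuous p) :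
    HasSum (fun k => u k * fc g (-k) + nonlinSeq j0 lam a b c d u k * fc p (-k))
      (((2 * Real.pi)⁻¹ * ∫ x in (0 : ℝ)..(2 * Real.pi),
        (f x * g x + Nfun j0 lam a b c d f x * p x) : ℝ) : ℂ) := by
  have hfC : ContDiff ℝ 3 f := contDiff_of_eq_fourierSeries hf 3 hu
  have hlin := hasSum_mul_fc_neg (wienerNorm_ne_top_of_le (Nat.zero_le 3) hu) hf hg
  have hnonlin := hasSum_mul_fc_neg ((lipschitzLoss_nonlinSeq j0 lam a b c d).regular 0 u hu)
    (Nfun_of_eq_fourierSeries hu j0 lam a b c d hf) hp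
  have hadd := intervalIntegral.integral_add (μ := volume)
    ((hfC.continuous.mul hg).intervalIntegrable 0 (2 * Real.pi))
    (((continuous_Nfun j0 lam a b c d hfC).mul hp).intervalIntegrable 0 (2 * Real.pi))
  simp only [Pi.mul_apply] at hadd
  rw [hadd, mul_add, Complex.ofReal_add]
  exact hlin.add hnonlin

lemma hasSum_integral_mul_fc_add_mul_fc {U V : ℤ → ℝ →ᵇ ℂ} (hU : wienerNorm 0 U ≠ ⊤)
    (hV : wienerNorm 0 V ≠ ⊤) {g p : ℝ → ℝ → ℝ} (hg : Continuous (Function.uncurry g))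
    (hp : Continuous (Function.uncurry p)) {T : ℝ} (hT : 0 ≤ T) :
    HasSum (fun k => ∫ t in (0 : ℝ)..T, (U k t * fc (g t) (-k) + V k t * fc (p t) (-k)))
      (∫ t in (0 : ℝ)..T, ∑' k, (U k t * fc (g t) (-k) + V k t * fc (p t) (-k))) := by
  obtain ⟨C, hC⟩ := exists_norm_fc_curve_le hg 0 T
  obtain ⟨D, hD⟩ := exists_norm_fc_curve_le hp 0 T
  have hgc := continuous_fc_curve hg
  have hpc := continuous_fc_curve hp
  refine hasSum_intervalIntegral_of_norm_le (A := fun k => ‖U k‖ * C + ‖V k‖ * D) hT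
    (fun k => by fun_prop) (((wienerNorm_zero_ne_top_iff.1 hU).mul_right C).add
      ((wienerNorm_zero_ne_top_iff.1 hV).mul_right D)) fun k t ht => ?_
  calc ‖U k t * fc (g t) (-k) + V k t * fc (p t) (-k)‖
      ≤ ‖U k t‖ * ‖fc (g t) (-k)‖ + ‖V k t‖ * ‖fc (p t) (-k)‖ := by
        simpa only [norm_mul] using norm_add_le (U k t * fc (g t) (-k)) (V k t * fc (p t) (-k))
    _ ≤ ‖U k‖ * C + ‖V k‖ * D := by
        gcongr
        exacts [(U k).norm_coe_le_norm t, hC _ t ht, (V k).norm_coe_le_norm t, hD _ t ht]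

lemma integral_mul_add_mul_eq_zero_of_eq_integral {l : ℂ} {y g P D : ℝ → ℂ} {T : ℝ} (hT : 0 ≤ T)
    (hy : ContinuousOn y (Icc 0 T)) (hg : ContinuousOn g (Icc 0 T))
    (h : ∀ t ∈ Icc 0 T, y t = y 0 + ∫ σ in (0 : ℝ)..t, (l * y σ + g σ))
    (hP : ∀ t, HasDerivAt P (D t) t) (hD : Continuous D) (hP0 : P 0 = 0) (hPT : P T = 0) :
    ∫ t in (0 : ℝ)..T, (y t * (D t + l * P t) + g t * P t) = 0 := by
  have hG : ContinuousOn (fun t => l * y t + g t) (Icc 0 T) := (hy.const_mul l).add hg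
  obtain ⟨Y, hY, hderiv⟩ := exists_hasDerivAt_of_eq_integral hT hG h
  rw [← uIcc_of_le hT] at hY hderiv hG
  have hparts := intervalIntegral.integral_deriv_mul_eq_sub hderiv (fun t _ => hP t)
    hG.intervalIntegrable (hD.intervalIntegrable 0 T)
  rw [hP0, hPT, mul_zero, mul_zero, sub_zero] at hparts
  rw [← hparts]
  refine intervalIntegral.integral_congr fun t ht => ?_
  simp only [hY ht]
  ring

namespace IsModeSolution

variable {ε γ0 γ1 γ2 : ℝ} {j0 : ℕ} {lam : Fin j0 → ℝ} {a b c d : Fin j0 → ℕ} {s : ℕ} {T : ℝ}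
  {U : ℤ → ℝ →ᵇ ℂ}
  (hU : IsModeSolution (linSymbol ε γ0 γ1 γ2) (nonlinSeq j0 lam a b c d) s T U)

include hU

lemma integral_test_eq_zero (hU3 : wienerNorm 3 U ≠ ⊤) (hT : 0 ≤ T) {ψ : ℝ → ℝ → ℝ}
    (hψ : ContDiff ℝ ∞ (Function.uncurry ψ)) (hp : ∀ t, Function.Periodic (ψ t) (2 * Real.pi))
    (h0 : ψ 0 = 0) (hψT : ψ T = 0) (k : ℤ) :
    ∫ t in (0 : ℝ)..T, (U k t * fc (adjointOp ε γ0 γ1 γ2 ψ t) (-k) +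
      nonlinSeq j0 lam a b c d U k t * fc (ψ t) (-k)) = 0 := by
  have hfc0 (m : ℤ) : fc 0 m = 0 := by simp [fc]
  have heval := (isTimeLift_nonlinSeq j0 lam a b c d).eval U hU3 k
  have hzero := integral_mul_add_mul_eq_zero_of_eq_integral (l := linSymbol ε γ0 γ1 γ2 k)
    (y := U k) (g := ⇑(nonlinSeq j0 lam a b c d U k)) hT (U k).continuous.continuousOn
    (nonlinSeq j0 lam a b c d U k).continuous.continuousOn
    (by simpa only [heval] using hU.eq_integral k) (hasDerivAt_fc_curve hψ (-k))
    (continuous_fc_curve (contDiff_deriv_fst hψ).continuous (-k))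
    (by rw [h0, hfc0]) (by rw [hψT, hfc0])
  simpa only [fc_adjointOp hψ hp, neg_neg] using hzero

theorem isSolutionReg (hs : 4 ≤ s) (hT : 0 ≤ T) {u : ℝ → ℝ → ℝ}
    (hu : ∀ t ∈ Icc 0 T, ∀ x, (u t x : ℂ) = fourierSeries (fun k => U k t) x) :
    IsSolutionReg ε γ0 γ1 γ2 j0 lam a b c d 0 T u := by
  have hU3 : wienerNorm 3 U ≠ ⊤ := hU.sobolevSummable.wienerNorm_ne_top hs
  have hU3t (t : ℝ) : wienerNorm 3 (fun k => U k t) ≠ ⊤ :=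
    ne_top_of_le_ne_top hU3 (wienerNorm_eval_le 3 U t)
  refine ⟨fun t ht => ⟨contDiff_of_eq_fourierSeries (hu t ht) 3 (hU3t t),
    periodic_of_eq_fourierSeries (hu t ht)⟩, fun ψ hψ hp h0 => ?_⟩
  have hadj := continuous_adjointOp (ε := ε) (γ0 := γ0) (γ1 := γ1) (γ2 := γ2) hψ
  have hspace (t : ℝ) (ht : t ∈ Icc 0 T) :
      ∑' k, (U k t * fc (adjointOp ε γ0 γ1 γ2 ψ t) (-k) +
        nonlinSeq j0 lam a b c d U k t * fc (ψ t) (-k)) =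
      (((2 * Real.pi)⁻¹ * ∫ x in (0 : ℝ)..(2 * Real.pi), (u t x * adjointOp ε γ0 γ1 γ2 ψ t x +
        Nfun j0 lam a b c d (u t) x * ψ t x) : ℝ) : ℂ) := by
    simp only [(isTimeLift_nonlinSeq j0 lam a b c d).eval U hU3]
    exact (hasSum_mul_fc_add_nonlinSeq_mul_fc j0 lam a b c d (hU3t t) (hu t ht)
      (hadj.comp (Continuous.prodMk_right t))
      (hψ.continuous.comp (Continuous.prodMk_right t))).tsum_eq
  have hzero := (hasSum_integral_mul_fc_add_mul_fc (wienerNorm_ne_top_of_le (Nat.zero_le 3) hU3)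
    ((lipschitzLoss_nonlinSeq j0 lam a b c d).regular 0 U hU3) hadj hψ.continuous hT).tsum_eq
  simp only [hU.integral_test_eq_zero hU3 hT hψ hp (funext (h0 0 (by simp)))
    (funext (h0 T (by simp))), tsum_zero] at hzero
  rw [intervalIntegral.integral_congr fun t ht => hspace t (uIcc_of_le hT ▸ ht),
    intervalIntegral.integral_ofReal, intervalIntegral.integral_const_mul] at hzero
  exact (mul_eq_zero.1 (Complex.ofReal_eq_zero.1 hzero.symm)).resolve_left (by positivity)

end IsModeSolution

end ModesToSolution

section WeakDerivatives

open scoped ContDiff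
open MeasureTheory Set

variable {E : Type*} [NormedAddCommGroup E] [NormedSpace ℝ E] {a b : ℝ}

lemma intervalIntegral_eq_integral_of_eq_zero {f : ℝ → E} (hf : ∀ t ∉ Ioo a b, f t = 0) :
    ∫ t in a..b, f t = ∫ t, f t :=
  intervalIntegral.integral_eq_integral_of_support_subset fun t ht => by
    by_contra h
    exact ht (hf t fun h' => h (Ioo_subset_Ioc_self h'))

lemma exists_contDiff_deriv_eq_of_integral_eq_zero [CompleteSpace E] {θ : ℝ → E}
    (hθ : ContDiff ℝ ∞ θ) (h0 : ∀ t ∉ Ioo a b, θ t = 0) (hint : ∫ t in a..b, θ t = 0) :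
    ∃ χ : ℝ → E, ContDiff ℝ ∞ χ ∧ (∀ t ∉ Ioo a b, χ t = 0) ∧ deriv χ = θ := by
  have hderiv (t : ℝ) : HasDerivAt (fun t => ∫ σ in a..t, θ σ) (θ t) t :=
    (hθ.continuous.integral_hasStrictDerivAt a t).hasDerivAt
  have hderiv_eq : deriv (fun t => ∫ σ in a..t, θ σ) = θ := funext fun t => (hderiv t).deriv
  refine ⟨fun t => ∫ σ in a..t, θ σ, ?_, fun t ht => ?_, hderiv_eq⟩
  · rw [contDiff_infty_iff_deriv, hderiv_eq]
    exact ⟨fun t => (hderiv t).differentiableAt, hθ⟩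
  · have hzero {c d : ℝ} (h : ∀ σ ∈ uIcc c d, σ ∉ Ioo a b) : ∫ σ in c..d, θ σ = 0 := by
      rw [intervalIntegral.integral_congr fun σ hσ => h0 σ (h σ hσ),
        intervalIntegral.integral_zero]
    rcases le_or_gt t a with hta | hat
    · exact hzero fun σ hσ h => absurd h.1 (uIcc_of_ge hta ▸ hσ).2.not_gt
    · have hbt : b ≤ t := not_lt.1 fun h => ht ⟨hat, h⟩
      beta_reduce
      rw [← intervalIntegral.integral_add_adjacent_intervals
        (hθ.continuous.intervalIntegrable a b) (hθ.continuous.intervalIntegrable b t), hint,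
        zero_add]
      exact hzero fun σ hσ h => absurd h.2 (uIcc_of_le hbt ▸ hσ).1.not_gt

lemma intervalIntegrable_smul (hab : a ≤ b) {f : ℝ → ℝ} (hf : Continuous f) {v : ℝ → E}
    (hv : ContinuousOn v (Icc a b)) : IntervalIntegrable (fun t => f t • v t) volume a b :=
  (hf.continuousOn.smul hv).intervalIntegrable_of_Icc hab

lemma exists_contDiff_integral_eq_one (hab : a < b) :
    ∃ η : ℝ → ℝ, ContDiff ℝ ∞ η ∧ (∀ t ∉ Ioo a b, η t = 0) ∧ ∫ t in a..b, η t = 1 := by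
  let β : ContDiffBump ((a + b) / 2) := ⟨(b - a) / 4, (b - a) / 2, by linarith, by linarith⟩
  have h0 : ∀ t ∉ Ioo a b, β.normed volume t = 0 := fun t ht => by
    rw [← Function.notMem_support, β.support_normed_eq, Real.ball_eq_Ioo]
    convert! ht using 3 <;> simp only [β] <;> ring
  exact ⟨β.normed volume, β.contDiff_normed, h0,
    (intervalIntegral_eq_integral_of_eq_zero h0).trans β.integral_normed⟩

lemma integral_smul_eq_of_integral_deriv_smul_eq_zero {w : ℝ → E} (hab : a ≤ b)
    (hw : ContinuousOn w (Icc a b))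
    (h : ∀ χ : ℝ → ℝ, ContDiff ℝ ∞ χ → (∀ t ∉ Ioo a b, χ t = 0) →
      ∫ t in a..b, deriv χ t • w t = 0)
    {η : ℝ → ℝ} (hη : ContDiff ℝ ∞ η) (hη0 : ∀ t ∉ Ioo a b, η t = 0)
    (hη1 : ∫ t in a..b, η t = 1) {g : ℝ → ℝ} (hg : ContDiff ℝ ∞ g)
    (hg0 : ∀ t ∉ Ioo a b, g t = 0) :
    ∫ t in a..b, g t • w t = (∫ t in a..b, g t) • ∫ t in a..b, η t • w t := by
  set m := ∫ t in a..b, g t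
  have hmean : ∫ t in a..b, (g t - m * η t) = 0 := by
    rw [intervalIntegral.integral_sub (hg.continuous.intervalIntegrable _ _)
      ((hη.continuous.const_mul m).intervalIntegrable _ _),
      intervalIntegral.integral_const_mul, hη1, mul_one, sub_self]
  obtain ⟨χ, hχ, hχ0, hderiv⟩ := exists_contDiff_deriv_eq_of_integral_eq_zero
    (θ := fun t => g t - m * η t) (hg.sub (contDiff_const.mul hη))
    (fun t ht => by simp [hg0 t ht, hη0 t ht]) hmean
  have hzero := h χ hχ hχ0
  simp only [hderiv, sub_smul, mul_smul] at hzero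
  have hint : IntervalIntegrable (fun t => m • η t • w t) volume a b :=
    (intervalIntegrable_smul hab hη.continuous hw).smul m
  rw [intervalIntegral.integral_sub (intervalIntegrable_smul hab hg.continuous hw) hint,
    intervalIntegral.integral_smul] at hzero
  exact sub_eq_zero.1 hzero

theorem exists_eqOn_const_of_integral_deriv_smul_eq_zero [CompleteSpace E] {w : ℝ → E} (hab : a < b)
    (hw : ContinuousOn w (Icc a b))
    (h : ∀ χ : ℝ → ℝ, ContDiff ℝ ∞ χ → (∀ t ∉ Ioo a b, χ t = 0) →
      ∫ t in a..b, deriv χ t • w t = 0) :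
    ∃ C, EqOn w (fun _ => C) (Icc a b) := by
  obtain ⟨η, hη, hη0, hη1⟩ := exists_contDiff_integral_eq_one hab
  set C : E := ∫ t in a..b, η t • w t
  have hwC : ContinuousOn (fun t => w t - C) (Icc a b) := hw.sub continuousOn_const
  have hae : ∀ᵐ t ∂(volume : Measure ℝ), t ∈ Ioo a b → w t - C = 0 := by
    refine isOpen_Ioo.ae_eq_zero_of_integral_contDiff_smul_eq_zero
      ((hwC.mono Ioo_subset_Icc_self).locallyIntegrableOn measurableSet_Ioo)
      fun g hg _ hsupp => ?_
    have hg0 : ∀ t ∉ Ioo a b, g t = 0 := fun t ht =>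
      image_eq_zero_of_notMem_tsupport fun h => ht (hsupp h)
    rw [← intervalIntegral_eq_integral_of_eq_zero fun t ht => by rw [hg0 t ht, zero_smul]]
    simp only [smul_sub]
    rw [intervalIntegral.integral_sub (intervalIntegrable_smul hab.le hg.continuous hw)
      (intervalIntegrable_smul hab.le hg.continuous continuousOn_const),
      integral_smul_eq_of_integral_deriv_smul_eq_zero hab.le hw h hη hη0 hη1 hg hg0,
      intervalIntegral.integral_smul_const, sub_self]
  have hrestrict : w =ᵐ[volume.restrict (Icc a b)] fun _ => C := by
    rw [← Measure.restrict_congr_set Ioo_ae_eq_Icc, Filter.EventuallyEq,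
      ae_restrict_iff' measurableSet_Ioo]
    filter_upwards [hae] with t ht hmem using sub_eq_zero.1 (ht hmem)
  exact ⟨C, Measure.eqOn_Icc_of_ae_eq volume hab.ne hrestrict hw continuousOn_const⟩

theorem eq_add_integral_of_integral_deriv_smul_eq_zero [CompleteSpace E] {y G : ℝ → E} {T : ℝ}
    (hT : 0 < T) (hy : ContinuousOn y (Icc 0 T)) (hG : ContinuousOn G (Icc 0 T))
    (h : ∀ χ : ℝ → ℝ, ContDiff ℝ ∞ χ → (∀ t ∉ Ioo 0 T, χ t = 0) →
      ∫ t in (0 : ℝ)..T, (deriv χ t • y t + χ t • G t) = 0) :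
    ∀ t ∈ Icc 0 T, y t = y 0 + ∫ σ in (0 : ℝ)..t, G σ := by
  obtain ⟨Y, hY, hderiv⟩ := exists_hasDerivAt_of_eq_integral
    (y := fun t => ∫ σ in (0 : ℝ)..t, G σ) hT.le hG (by simp)
  have hYc : ContinuousOn Y (Icc 0 T) := fun t ht => (hderiv t ht).continuousAt.continuousWithinAt
  obtain ⟨C, hC⟩ := exists_eqOn_const_of_integral_deriv_smul_eq_zero hT (hy.sub hYc)
    fun χ hχ hχ0 => by
      have hχ' : Continuous (deriv χ) := hχ.continuous_deriv (by norm_num)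
      have hparts := intervalIntegral.integral_smul_deriv_eq_deriv_smul (a := 0) (b := T)
        (fun t _ => (hχ.differentiable (by norm_num) t).hasDerivAt)
        (fun t ht => hderiv t (uIcc_of_le hT.le ▸ ht)) (hχ'.intervalIntegrable _ _)
        (hG.intervalIntegrable_of_Icc hT.le)
      rw [hχ0 T (by simp), hχ0 0 (by simp), zero_smul, zero_smul, sub_self, zero_sub] at hparts
      have hweak := h χ hχ hχ0
      rw [intervalIntegral.integral_add (intervalIntegrable_smul hT.le hχ' hy)
        (intervalIntegrable_smul hT.le hχ.continuous hG), hparts, ← sub_eq_add_neg,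
        ← intervalIntegral.integral_sub (intervalIntegrable_smul hT.le hχ' hy)
          (intervalIntegrable_smul hT.le hχ' hYc)] at hweak
      simpa only [Pi.sub_apply, smul_sub] using hweak
  intro t ht
  have h0 : (0 : ℝ) ∈ Icc 0 T := left_mem_Icc.2 hT.le
  have hconst := (hC ht).trans (hC h0).symm
  simp only [Pi.sub_apply, hY ht, hY h0, intervalIntegral.integral_same, sub_zero] at hconst
  rw [← hconst, sub_add_cancel]

end WeakDerivatives

section WaveTest

lemma iteratedDeriv_re_wave (c : ℂ) (k : ℤ) (n : ℕ) :
    iteratedDeriv n (fun x => (c * wave k x).re) =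
      fun x => ((Complex.I * k) ^ n * c * wave k x).re := by
  induction n with
  | zero => simp
  | succ n ih =>
    rw [iteratedDeriv_succ, ih]
    funext x
    have h := Complex.reCLM.hasFDerivAt.comp_hasDerivAt x
      ((hasDerivAt_wave k x).const_mul ((Complex.I * k) ^ n * c))
    refine h.deriv.trans ?_
    rw [Complex.reCLM_apply]
    ring_nf

lemma adjointOp_re_wave {ε γ0 γ1 γ2 : ℝ} {χ : ℝ → ℝ} (hχ : Differentiable ℝ χ) (z : ℂ) (k : ℤ)
    (t x : ℝ) :
    adjointOp ε γ0 γ1 γ2 (fun t x => (χ t * z * wave (-k) x).re) t x =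
      ((deriv χ t + linSymbol ε γ0 γ1 γ2 k * χ t) * z * wave (-k) x).re := by
  have htime : deriv (fun τ => (χ τ * z * wave (-k) x).re) t =
      (deriv χ t * z * wave (-k) x).re :=
    (Complex.reCLM.hasFDerivAt.comp_hasDerivAt t
      (((hχ t).hasDerivAt.ofReal_comp.mul_const z).mul_const (wave (-k) x))).deriv
  have hsymbol := linSymbol_neg_eq ε γ0 γ1 γ2 (-k)
  rw [neg_neg] at hsymbol
  simp only [adjointOp, htime, ← iteratedDeriv_one (f := fun x => (χ t * z * wave (-k) x).re),
    iteratedDeriv_re_wave, ← Complex.re_ofReal_mul, ← Complex.add_re, ← Complex.sub_re, hsymbol]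
  ring_nf

lemma integral_mul_re_wave {f : ℝ → ℝ} (hf : Continuous f) (z : ℂ) (k : ℤ) :
    ∫ x in (0 : ℝ)..(2 * Real.pi), f x * (z * wave (-k) x).re = 2 * Real.pi * (z * fc f k).re := by
  have hint : IntervalIntegrable (fun x => z * ((f x : ℂ) * wave (-k) x)) MeasureTheory.volume
      0 (2 * Real.pi) :=
    (continuous_const.mul ((Complex.continuous_ofReal.comp hf).mul
      (continuous_wave _))).intervalIntegrable _ _
  have hfc : 2 * Real.pi * (z * fc f k) =
      ∫ x in (0 : ℝ)..(2 * Real.pi), z * ((f x : ℂ) * wave (-k) x) := by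
    have hpi : (Real.pi : ℂ) ≠ 0 := by exact_mod_cast Real.pi_ne_zero
    rw [fc_eq_integral_wave, intervalIntegral.integral_const_mul]
    push_cast
    field_simp
  have hre := Complex.reCLM.intervalIntegral_comp_comm hint
  rw [← hfc, Complex.reCLM_apply, ← Complex.ofReal_ofNat, ← Complex.ofReal_mul,
    Complex.re_ofReal_mul] at hre
  rw [← hre]
  refine intervalIntegral.integral_congr fun x _ => ?_
  simp only [Complex.reCLM_apply]
  rw [← Complex.re_ofReal_mul, mul_left_comm]

lemma integral_test_re_wave {ε γ0 γ1 γ2 : ℝ} {χ : ℝ → ℝ} (hχ : Differentiable ℝ χ)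
    {f g : ℝ → ℝ} (hf : Continuous f) (hg : Continuous g) (z : ℂ) (k : ℤ) (t : ℝ) :
    ∫ x in (0 : ℝ)..(2 * Real.pi),
      (f x * adjointOp ε γ0 γ1 γ2 (fun t x => (χ t * z * wave (-k) x).re) t x +
        g x * (χ t * z * wave (-k) x).re) =
      2 * Real.pi * (z * (deriv χ t • fc f k +
        χ t • (linSymbol ε γ0 γ1 γ2 k * fc f k + fc g k))).re := by
  have hwave (c : ℂ) : Continuous fun x => (c * wave (-k) x).re :=
    Complex.continuous_re.comp (continuous_const.mul (continuous_wave _))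
  simp only [adjointOp_re_wave hχ]
  have hintf := (hf.mul (hwave ((deriv χ t + linSymbol ε γ0 γ1 γ2 k * χ t) * z))).intervalIntegrable
    (μ := MeasureTheory.volume) 0 (2 * Real.pi)
  have hintg := (hg.mul (hwave (χ t * z))).intervalIntegrable (μ := MeasureTheory.volume)
    0 (2 * Real.pi)
  have hadd := intervalIntegral.integral_add hintf hintg
  simp only [Pi.mul_apply] at hadd
  rw [hadd, integral_mul_re_wave hf, integral_mul_re_wave hg, ← mul_add, ← Complex.add_re,
    Complex.real_smul, Complex.real_smul]
  ring_nf

end WaveTest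

section Curves

open scoped ENNReal NNReal
open Set

variable {r s : ℕ} {A : Set ℝ} {u : ℝ → ℝ → ℝ}

lemma ContInHs.exists_wienerNorm_fc_le (hs : r + 1 ≤ s) (hu : ContInHs s A u)
    (hm : ∀ t ∈ A, MemHs s (u t)) (hA : IsCompact A) :
    ∃ R : ℝ≥0, ∀ t ∈ A, wienerNorm r (fc (u t)) ≤ R := by
  refine hA.induction_on (p := fun S => ∃ R : ℝ≥0, ∀ t ∈ S, wienerNorm r (fc (u t)) ≤ R)
    ⟨0, by simp⟩ (fun S S' hS ⟨R, hR⟩ => ⟨R, fun t ht => hR t (hS ht)⟩)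
    (fun S S' ⟨R, hR⟩ ⟨R', hR'⟩ => ⟨max R R', ?_⟩) fun t₀ ht₀ => ?_
  · rintro t (ht | ht)
    · exact (hR t ht).trans (by exact_mod_cast le_max_left R R')
    · exact (hR' t ht).trans (by exact_mod_cast le_max_right R R')
  · obtain ⟨δ, hδ, hclose⟩ := hu.exists_wienerNorm_sub_le hs hm ht₀ one_pos
    have hfin := (hm t₀ ht₀).sobolevSummable.wienerNorm_ne_top hs
    refine ⟨A ∩ Metric.ball t₀ δ, inter_mem_nhdsWithin _ (Metric.ball_mem_nhds _ hδ),
      1 + (wienerNorm r (fc (u t₀))).toNNReal, fun t ht => ?_⟩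
    calc wienerNorm r (fc (u t))
        = wienerNorm r ((fc (u t) - fc (u t₀)) + fc (u t₀)) := by rw [sub_add_cancel]
      _ ≤ wienerNorm r (fc (u t) - fc (u t₀)) + wienerNorm r (fc (u t₀)) := wienerNorm_add_le _ _ _
      _ ≤ ENNReal.ofReal 1 + wienerNorm r (fc (u t₀)) := by gcongr; exact hclose t ht.1 ht.2
      _ = ↑(1 + (wienerNorm r (fc (u t₀))).toNNReal) := by
        rw [ENNReal.coe_add, ENNReal.coe_toNNReal hfin, ENNReal.ofReal_one, ENNReal.coe_one]

lemma ContInHs.continuousOn_fc (hs : 1 ≤ s) (hu : ContInHs s A u)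
    (hm : ∀ t ∈ A, MemHs s (u t)) (k : ℤ) : ContinuousOn (fun t => fc (u t) k) A := by
  refine Metric.continuousOn_iff.2 fun t₀ ht₀ η hη => ?_
  obtain ⟨δ, hδ, hclose⟩ := hu.exists_wienerNorm_sub_le (r := 0) hs hm ht₀ (half_pos hη)
  refine ⟨δ, hδ, fun t ht htt => ?_⟩
  have hle := (enorm_le_wienerNorm 0 (fc (u t) - fc (u t₀)) k).trans (hclose t ht htt)
  rw [← ofReal_norm, ENNReal.ofReal_le_ofReal_iff (by positivity)] at hle
  exact (dist_eq_norm (fc (u t) k) _).trans_lt (hle.trans_lt (half_lt_self hη))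

lemma ContInHs.continuousOn_comp_fc {F : (ℤ → ℂ) → ℤ → ℂ} (hF : LipschitzLoss r F)
    (hs : r + 1 ≤ s) (hu : ContInHs s A u) (hm : ∀ t ∈ A, MemHs s (u t)) {R : ℝ≥0}
    (hR : ∀ t ∈ A, wienerNorm r (fc (u t)) ≤ R) (k : ℤ) :
    ContinuousOn (fun t => F (fc (u t)) k) A := by
  obtain ⟨K, hK⟩ := hF.lipschitz R
  refine Metric.continuousOn_iff.2 fun t₀ ht₀ η hη => ?_
  obtain ⟨δ, hδ, hclose⟩ := hu.exists_wienerNorm_sub_le hs hm ht₀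
    (show 0 < η / (K + 1) by positivity)
  refine ⟨δ, hδ, fun t ht htt => ?_⟩
  have hle : ENNReal.ofReal ‖F (fc (u t)) k - F (fc (u t₀)) k‖ ≤
      ENNReal.ofReal (K * (η / (K + 1))) :=
    calc ENNReal.ofReal ‖F (fc (u t)) k - F (fc (u t₀)) k‖
        ≤ wienerNorm 0 (F (fc (u t)) - F (fc (u t₀))) := by
          rw [ofReal_norm]; exact enorm_le_wienerNorm 0 _ k
      _ ≤ K * wienerNorm r (fc (u t) - fc (u t₀)) := (hK _ _ (hR t ht) (hR t₀ ht₀)).2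
      _ ≤ K * ENNReal.ofReal (η / (K + 1)) := by gcongr; exact hclose t ht htt
      _ = ENNReal.ofReal (K * (η / (K + 1))) := by
        rw [ENNReal.ofReal_mul K.coe_nonneg, ENNReal.ofReal_coe_nnreal]
  rw [ENNReal.ofReal_le_ofReal_iff (by positivity)] at hle
  rw [dist_eq_norm]
  refine hle.trans_lt ?_
  rw [mul_div_assoc', div_lt_iff₀ (by positivity)]
  nlinarith

end Curves

section SolutionToModes

open scoped NNReal ContDiff
open MeasureTheory Set

variable {ε γ0 γ1 γ2 : ℝ} {j0 : ℕ} {lam : Fin j0 → ℝ} {a b c d : Fin j0 → ℕ} {T : ℝ}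
  {v : ℝ → ℝ → ℝ}

lemma IsSolutionReg.re_integral_mode_eq_zero (hT : 0 ≤ T)
    (hv : IsSolutionReg ε γ0 γ1 γ2 j0 lam a b c d 0 T v)
    (hfin : ∀ t ∈ Icc 0 T, wienerNorm 3 (fc (v t)) ≠ ⊤) {χ : ℝ → ℝ} (hχ : ContDiff ℝ ∞ χ)
    (hχ0 : ∀ t ∉ Ioo 0 T, χ t = 0) (z : ℂ) (k : ℤ) :
    ∫ t in (0 : ℝ)..T, (z * (deriv χ t • fc (v t) k + χ t • (linSymbol ε γ0 γ1 γ2 k * fc (v t) k +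
      nonlinSeq j0 lam a b c d (fc (v t)) k))).re = 0 := by
  have hψ : ContDiff ℝ ∞ (Function.uncurry fun t x => (χ t * z * wave (-k) x).re) :=
    Complex.reCLM.contDiff.comp ((((Complex.ofRealCLM.contDiff.comp hχ).comp contDiff_fst).mul
      contDiff_const).mul ((contDiff_wave (-k)).comp contDiff_snd))
  have hweak := hv.2 (fun t x => (χ t * z * wave (-k) x).re) hψ
    (fun t x => by simp only [periodic_wave (-k) x]) (fun t ht x => by simp [hχ0 t ht])
  have hpi : 2 * Real.pi ≠ 0 := by positivity
  refine (mul_eq_zero.1 ?_).resolve_left hpi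
  rw [← intervalIntegral.integral_const_mul]
  refine (intervalIntegral.integral_congr fun t ht => ?_).trans hweak
  rw [uIcc_of_le hT] at ht
  obtain ⟨hC, hp⟩ := hv.1 t ht
  have hseries := eq_fourierSeries_fc hC.continuous hp
    (wienerNorm_ne_top_of_le (Nat.zero_le 3) (hfin t ht))
  rw [← fc_Nfun_of_eq_fourierSeries (hfin t ht) j0 lam a b c d hseries,
    ← integral_test_re_wave (hχ.differentiable (by simp)) hC.continuous
      (continuous_Nfun j0 lam a b c d hC)]
  rfl

theorem IsSolutionReg.isModeCurve (hT : 0 < T)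
    (hv : IsSolutionReg ε γ0 γ1 γ2 j0 lam a b c d 0 T v) {s : ℕ} (hs : 4 ≤ s)
    (hc : ContInHs s (Icc 0 T) v) (hm : ∀ t ∈ Icc 0 T, MemHs s (v t)) {R : ℝ≥0}
    (hR : ∀ t ∈ Icc 0 T, wienerNorm 3 (fc (v t)) ≤ R) :
    IsModeCurve 3 (linSymbol ε γ0 γ1 γ2) (nonlinSeq j0 lam a b c d) T R fun t => fc (v t) := by
  have hcont := hc.continuousOn_fc ((by norm_num : 1 ≤ 4).trans hs) hm
  have hforce := hc.continuousOn_comp_fc (lipschitzLoss_nonlinSeq j0 lam a b c d) hs hm hR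
  refine ⟨hR, hcont, hforce, fun k => ?_⟩
  have hG : ContinuousOn (fun t => linSymbol ε γ0 γ1 γ2 k * fc (v t) k +
      nonlinSeq j0 lam a b c d (fc (v t)) k) (Icc 0 T) :=
    (continuousOn_const.mul (hcont k)).add (hforce k)
  refine eq_add_integral_of_integral_deriv_smul_eq_zero hT (hcont k) hG fun χ hχ hχ0 => ?_
  have hint := (intervalIntegrable_smul hT.le (hχ.continuous_deriv (by simp)) (hcont k)).add
    (intervalIntegrable_smul hT.le hχ.continuous hG)
  have hre (z : ℂ) : (z * ∫ t in (0 : ℝ)..T, (deriv χ t • fc (v t) k +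
      χ t • (linSymbol ε γ0 γ1 γ2 k * fc (v t) k +
        nonlinSeq j0 lam a b c d (fc (v t)) k))).re = 0 := by
    rw [← intervalIntegral.integral_const_mul]
    refine Eq.trans ?_ (hv.re_integral_mode_eq_zero hT.le
      (fun t ht => ne_top_of_le_ne_top ENNReal.coe_ne_top (hR t ht)) hχ hχ0 z k)
    exact (Complex.reCLM.intervalIntegral_comp_comm (hint.const_mul z)).symm
  exact Complex.ext (by simpa using hre 1) (by simpa using hre Complex.I)

end SolutionToModes

section MaximalModeSolution

open scoped BoundedContinuousFunction ENNReal NNReal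
open MeasureTheory Set

variable {p s : ℕ} {l : ℤ → ℂ} {F : (ℤ → ℂ) → ℤ → ℂ} {Φ : (ℤ → ℝ →ᵇ ℂ) → ℤ → ℝ →ᵇ ℂ}
  {T T' : ℝ} {U V : ℤ → ℝ →ᵇ ℂ} {z : ℤ → ℂ}

lemma IsTimeLift.continuous_forcing (hΦ : IsTimeLift p F Φ) (hU : wienerNorm p U ≠ ⊤) (k : ℤ) :
    Continuous fun t => F (fun m => U m t) k := by
  simp only [← hΦ.eval U hU]
  exact (Φ U k).continuous

lemma IsModeSolution.mono (hU : IsModeSolution l F s T U) (h : T' ≤ T) :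
    IsModeSolution l F s T' U :=
  ⟨hU.hermitianSymm, hU.sobolevSummable, fun k t ht => hU.eq_integral k t ⟨ht.1, ht.2.trans h⟩⟩

lemma IsModeSolution.isModeCurve (hU : IsModeSolution l F s T U) (hΦ : IsTimeLift p F Φ)
    {R : ℝ≥0} (hR : wienerNorm p U ≤ R) : IsModeCurve p l F T R fun t k => U k t where
  wienerNorm_le t _ := (wienerNorm_eval_le p U t).trans hR
  continuousOn k := (U k).continuous.continuousOn
  continuousOn_forcing k :=
    (hΦ.continuous_forcing (ne_top_of_le_ne_top ENNReal.coe_ne_top hR) k).continuousOn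
  eq_integral := hU.eq_integral

/-- The curve which follows `U` up to time `T` and then `V`, when `V` starts where `U` ends. -/
noncomputable def concat (T : ℝ) (U V : ℤ → ℝ →ᵇ ℂ) (k : ℤ) : ℝ →ᵇ ℂ :=
  (U k).compContinuous ⟨fun t => min t T, by fun_prop⟩ +
    (V k).compContinuous ⟨fun t => max (t - T) 0, by fun_prop⟩ -
    BoundedContinuousFunction.const ℝ (V k 0)

lemma concat_apply (T : ℝ) (U V : ℤ → ℝ →ᵇ ℂ) (k : ℤ) (t : ℝ) :
    concat T U V k t = U k (min t T) + V k (max (t - T) 0) - V k 0 := rfl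

lemma concat_of_le {t : ℝ} (h : t ≤ T) (k : ℤ) : concat T U V k t = U k t := by
  rw [concat_apply, min_eq_left h, max_eq_right (sub_nonpos.2 h), add_sub_cancel_right]

lemma concat_of_ge (h0 : ∀ k, V k 0 = U k T) {t : ℝ} (h : T ≤ t) (k : ℤ) :
    concat T U V k t = V k (t - T) := by
  rw [concat_apply, min_eq_right h, max_eq_left (sub_nonneg.2 h), h0, add_sub_cancel_left]

lemma SobolevSummable.concat (hU : SobolevSummable s U) (hV : SobolevSummable s V) (T : ℝ) :
    SobolevSummable s (concat T U V) :=
  ((hU.mono le_rfl fun k => (U k).norm_compContinuous_le _).add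
    (hV.mono le_rfl fun k => (V k).norm_compContinuous_le _)).sub
    (hV.mono (b := fun k => BoundedContinuousFunction.const ℝ (V k 0)) le_rfl fun k =>
      (BoundedContinuousFunction.norm_const_le _).trans ((V k).norm_coe_le_norm 0))

theorem IsModeSolution.concat (hΦ : IsTimeLift p F Φ) (hs : p + 1 ≤ s) (hT : 0 ≤ T)
    (hU : IsModeSolution l F s T U) (hV : IsModeSolution l F s T' V) (h0 : ∀ k, V k 0 = U k T) :
    IsModeSolution l F s (T + T') (concat T U V) := by
  set W := FifthOrderStmt14.concat T U V
  have hW : SobolevSummable s W := hU.sobolevSummable.concat hV.sobolevSummable T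
  refine ⟨fun k => BoundedContinuousFunction.ext fun t => ?_, hW, fun k t ht => ?_⟩
  · simp only [W, concat_apply, BoundedContinuousFunction.star_apply, star_add, star_sub,
      hU.hermitianSymm k, hV.hermitianSymm k]
  have hcont : Continuous fun σ => l k * W k σ + F (fun m => W m σ) k :=
    (continuous_const.mul (W k).continuous).add
      (hΦ.continuous_forcing (hW.wienerNorm_ne_top hs) k)
  have hfirst : ∀ t ∈ Icc 0 T,
      ∫ σ in (0 : ℝ)..t, (l k * W k σ + F (fun m => W m σ) k) = U k t - U k 0 := fun t ht => by
    rw [hU.eq_integral k t ht, add_sub_cancel_left]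
    refine intervalIntegral.integral_congr fun σ hσ => ?_
    rw [uIcc_of_le ht.1] at hσ
    simp only [W, concat_of_le (hσ.2.trans ht.2)]
  rw [concat_of_le hT]
  rcases le_total t T with htT | htT
  · rw [hfirst t ⟨ht.1, htT⟩, concat_of_le htT, add_sub_cancel]
  have hsecond : ∫ σ in T..t, (l k * W k σ + F (fun m => W m σ) k) = V k (t - T) - V k 0 := by
    rw [hV.eq_integral k (t - T) ⟨by linarith, by linarith [ht.2]⟩, add_sub_cancel_left,
      ← sub_self T, ← intervalIntegral.integral_comp_sub_right
        (fun ρ => l k * V k ρ + F (fun m => V m ρ) k) T]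
    refine intervalIntegral.integral_congr fun σ hσ => ?_
    rw [uIcc_of_le htT] at hσ
    simp only [W, concat_of_ge h0 hσ.1]
  rw [← intervalIntegral.integral_add_adjacent_intervals (hcont.intervalIntegrable 0 T)
    (hcont.intervalIntegrable T t), hfirst T ⟨hT, le_rfl⟩, hsecond, concat_of_ge h0 htT, h0]
  ring

/-- The supremum of the existence times of the mode solutions with initial coefficients `z`. -/
noncomputable def lifespan (l : ℤ → ℂ) (F : (ℤ → ℂ) → ℤ → ℂ) (s : ℕ) (z : ℤ → ℂ) : ℝ≥0∞ :=
  ⨆ (T : ℝ) (_ : ∃ U, IsModeSolution l F s T U ∧ ∀ k, U k 0 = z k), ENNReal.ofReal T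

lemma IsModeSolution.ofReal_le_lifespan (hU : IsModeSolution l F s T U) (h0 : ∀ k, U k 0 = z k) :
    ENNReal.ofReal T ≤ lifespan l F s z :=
  le_iSup₂_of_le T ⟨U, hU, h0⟩ le_rfl

lemma exists_isModeSolution_of_lt_lifespan (h : ENNReal.ofReal T < lifespan l F s z) :
    ∃ U, IsModeSolution l F s T U ∧ ∀ k, U k 0 = z k := by
  obtain ⟨T', h⟩ := lt_iSup_iff.1 h
  obtain ⟨⟨U, hU, h0⟩, hlt⟩ := lt_iSup_iff.1 h
  exact ⟨U, hU.mono (ENNReal.ofReal_lt_ofReal_iff'.1 hlt).1.le, h0⟩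

open Classical in
/-- The common value at time `t` of all the mode solutions with initial coefficients `z` which
exist up to time `t`. The value is irrelevant at negative times and beyond the lifespan. -/
noncomputable def maximalCurve (l : ℤ → ℂ) (F : (ℤ → ℂ) → ℤ → ℂ) (s : ℕ) (z : ℤ → ℂ) (t : ℝ) :
    ℤ → ℂ :=
  if h : ∃ U, IsModeSolution l F s t U ∧ ∀ k, U k 0 = z k then fun k => h.choose k t else 0

variable (hΦ : IsTimeLift p F Φ) {ε : ℝ} (hε : 0 < ε)
  (hre : ∀ k, (l k).re ≤ -(ε * |(k : ℝ)| ^ (p + 1))) (hs : p + 1 ≤ s)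

include hΦ hε hre hs

lemma IsModeSolution.eqOn (hF : LipschitzLoss p F) (hU : IsModeSolution l F s T U)
    (hV : IsModeSolution l F s T V) (h0 : ∀ k, U k 0 = V k 0) :
    EqOn (fun t k => U k t) (fun t k => V k t) (Icc 0 T) := by
  intro t ht
  rcases ht.1.eq_or_lt with rfl | hpos
  · exact funext h0
  have hU' := hU.sobolevSummable.wienerNorm_ne_top hs
  have hV' := hV.sobolevSummable.wienerNorm_ne_top hs
  let R : ℝ≥0 := (wienerNorm p U).toNNReal + (wienerNorm p V).toNNReal
  have hR : (R : ℝ≥0∞) = wienerNorm p U + wienerNorm p V := by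
    rw [ENNReal.coe_add, ENNReal.coe_toNNReal hU', ENNReal.coe_toNNReal hV']
  exact (hU.isModeCurve hΦ (R := R) (hR ▸ le_self_add)).eqOn hF hε hre (hpos.trans_le ht.2)
    (hV.isModeCurve hΦ (hR ▸ le_add_self)) (funext h0) ht

lemma IsModeSolution.maximalCurve_eq (hF : LipschitzLoss p F) (hU : IsModeSolution l F s T U)
    (h0 : ∀ k, U k 0 = z k) {t : ℝ} (ht : t ∈ Icc 0 T) :
    maximalCurve l F s z t = fun k => U k t := by
  have h : ∃ V, IsModeSolution l F s t V ∧ ∀ k, V k 0 = z k := ⟨U, hU.mono ht.2, h0⟩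
  rw [maximalCurve, dif_pos h]
  exact h.choose_spec.1.eqOn hΦ hε hre hs hF (hU.mono ht.2)
    (fun k => by rw [h.choose_spec.2, h0]) ⟨ht.1, le_rfl⟩

variable (hsymm : HermitianSymm l)

include hsymm

lemma lifespan_pos (hz : HermitianSymm z) (hzs : SobolevSummable s z) : 0 < lifespan l F s z := by
  have hfin := hzs.wienerNorm_ne_top hs
  obtain ⟨T, hT, hloc⟩ := exists_isModeSolution hΦ hε hre hsymm hs (wienerNorm p z).toNNReal
  obtain ⟨U, hU, h0⟩ := hloc z hz (ENNReal.coe_toNNReal hfin).ge hzs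
  exact (ENNReal.ofReal_pos.2 hT).trans_le (hU.ofReal_le_lifespan h0)

theorem exists_ofReal_add_le_lifespan (hF : LipschitzLoss p F) (M : ℝ≥0) :
    ∃ τ > 0, ∀ z, ∀ t ≥ 0, ENNReal.ofReal t < lifespan l F s z →
      wienerNorm p (maximalCurve l F s z t) ≤ M → ENNReal.ofReal (t + τ) ≤ lifespan l F s z := by
  obtain ⟨τ, hτ, hloc⟩ := exists_isModeSolution hΦ hε hre hsymm hs M
  refine ⟨τ, hτ, fun z t ht hlt hM => ?_⟩
  obtain ⟨U, hU, h0⟩ := exists_isModeSolution_of_lt_lifespan hlt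
  rw [hU.maximalCurve_eq hΦ hε hre hs hF h0 ⟨ht, le_rfl⟩] at hM
  obtain ⟨V, hV, hV0⟩ := hloc _ (hU.hermitianSymm.eval t) hM (hU.sobolevSummable.eval t)
  exact (hU.concat hΦ hs ht hV hV0).ofReal_le_lifespan fun k => by rw [concat_of_le ht, h0]

end MaximalModeSolution

section MaximalSolution

open scoped BoundedContinuousFunction ENNReal NNReal
open Set

variable (ε γ0 γ1 γ2 : ℝ) (j0 : ℕ) (lam : Fin j0 → ℝ) (a b c d : Fin j0 → ℕ) (s : ℕ)

/-- `u` is a distributional solution on `[0, T] × 𝕋` which is continuous in time with values in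
`H^s(𝕋)`. -/
def IsHsSolution (T : ℝ) (u : ℝ → ℝ → ℝ) : Prop :=
  IsSolutionReg ε γ0 γ1 γ2 j0 lam a b c d 0 T u ∧
    (∀ t ∈ Icc (0 : ℝ) T, MemHs s (u t)) ∧ ContInHs s (Icc (0 : ℝ) T) u

/-- The maximal existence time `T_ε` of the solution with initial datum `φ`. -/
noncomputable def maximalTime (φ : ℝ → ℝ) : ℝ≥0∞ :=
  lifespan (linSymbol ε γ0 γ1 γ2) (nonlinSeq j0 lam a b c d) s (fc φ)

/-- The maximal solution with initial datum `φ`, meaningful at times in `[0, T_ε)`. -/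
noncomputable def maximalSolution (φ : ℝ → ℝ) (t x : ℝ) : ℝ :=
  (fourierSeries
    (maximalCurve (linSymbol ε γ0 γ1 γ2) (nonlinSeq j0 lam a b c d) s (fc φ) t) x).re

variable {ε γ0 γ1 γ2 j0 lam a b c d s} {T : ℝ} {u v : ℝ → ℝ → ℝ} {U : ℤ → ℝ →ᵇ ℂ} {φ : ℝ → ℝ}

lemma linSymbol_re_le (ε γ0 γ1 γ2 : ℝ) (k : ℤ) :
    (linSymbol ε γ0 γ1 γ2 k).re ≤ -(ε * |(k : ℝ)| ^ (3 + 1)) :=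
  (linSymbol_re ε γ0 γ1 γ2 k).le

lemma IsModeSolution.isHsSolution
    (hU : IsModeSolution (linSymbol ε γ0 γ1 γ2) (nonlinSeq j0 lam a b c d) s T U) (hs : 4 ≤ s)
    (hT : 0 ≤ T) (hu : ∀ t ∈ Icc 0 T, ∀ x, (u t x : ℂ) = fourierSeries (fun k => U k t) x) :
    IsHsSolution ε γ0 γ1 γ2 j0 lam a b c d s T u :=
  have hs' : 1 ≤ s := (by norm_num : 1 ≤ 4).trans hs
  ⟨hU.isSolutionReg hs hT hu,
    fun t ht => memHs_of_eq_fourierSeries hs' (hU.sobolevSummable.eval t) (hu t ht),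
    contInHs_of_eq_fourierSeries hs' hU.sobolevSummable hu⟩

lemma IsHsSolution.fc_eq (hv : IsHsSolution ε γ0 γ1 γ2 j0 lam a b c d s T v) (hε : 0 < ε)
    (hs : 4 ≤ s) (hT : 0 < T)
    (hU : IsModeSolution (linSymbol ε γ0 γ1 γ2) (nonlinSeq j0 lam a b c d) s T U)
    (h0 : ∀ k, U k 0 = fc (v 0) k) {t : ℝ} (ht : t ∈ Icc 0 T) : fc (v t) = fun k => U k t := by
  obtain ⟨hsol, hm, hc⟩ := hv
  obtain ⟨R, hR⟩ := hc.exists_wienerNorm_fc_le hs hm isCompact_Icc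
  obtain ⟨R', hR'⟩ := WithTop.ne_top_iff_exists.1 (hU.sobolevSummable.wienerNorm_ne_top hs)
  have hv' := hsol.isModeCurve hT hs hc hm (R := R ⊔ R')
    fun t ht => (hR t ht).trans (ENNReal.coe_le_coe.2 le_sup_left)
  have hU' := hU.isModeCurve (isTimeLift_nonlinSeq j0 lam a b c d) (R := R ⊔ R')
    (hR'.symm.trans_le (ENNReal.coe_le_coe.2 le_sup_right))
  exact hv'.eqOn (lipschitzLoss_nonlinSeq j0 lam a b c d) hε (linSymbol_re_le ε γ0 γ1 γ2) hT hU'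
    (funext fun k => (h0 k).symm) ht

variable (hε : 0 < ε) (hs : 4 ≤ s)

include hε hs

lemma exists_isModeSolution_of_lt_maximalTime
    (hT : ENNReal.ofReal T < maximalTime ε γ0 γ1 γ2 j0 lam a b c d s φ) :
    ∃ U, IsModeSolution (linSymbol ε γ0 γ1 γ2) (nonlinSeq j0 lam a b c d) s T U ∧
      (∀ k, U k 0 = fc φ k) ∧
      ∀ t ∈ Icc 0 T, ∀ x, (maximalSolution ε γ0 γ1 γ2 j0 lam a b c d s φ t x : ℂ) =
        fourierSeries (fun k => U k t) x := by
  obtain ⟨U, hU, h0⟩ := exists_isModeSolution_of_lt_lifespan hT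
  refine ⟨U, hU, h0, fun t ht x => ?_⟩
  rw [maximalSolution, hU.maximalCurve_eq (isTimeLift_nonlinSeq j0 lam a b c d) hε
    (linSymbol_re_le ε γ0 γ1 γ2) hs (lipschitzLoss_nonlinSeq j0 lam a b c d) h0 ht]
  exact (hU.hermitianSymm.eval t).ofReal_re_fourierSeries x

lemma maximalTime_pos (hφ : MemHs s φ) : 0 < maximalTime ε γ0 γ1 γ2 j0 lam a b c d s φ :=
  lifespan_pos (isTimeLift_nonlinSeq j0 lam a b c d) hε (linSymbol_re_le ε γ0 γ1 γ2) hs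
    (hermitianSymm_linSymbol ε γ0 γ1 γ2) (hermitianSymm_fc φ) hφ.sobolevSummable

lemma maximalSolution_zero (hφ : MemHs s φ) :
    maximalSolution ε γ0 γ1 γ2 j0 lam a b c d s φ 0 = φ := by
  obtain ⟨U, -, h0, hu⟩ := exists_isModeSolution_of_lt_maximalTime (T := 0) (γ0 := γ0) (γ1 := γ1)
    (γ2 := γ2) (lam := lam) (a := a) (b := b) (c := c) (d := d) hε hs
    (by rw [ENNReal.ofReal_zero]; exact maximalTime_pos hε hs hφ)
  funext x
  have hx := hu 0 (left_mem_Icc.2 le_rfl) x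
  rw [funext h0, ← hφ.eq_fourierSeries ((by norm_num : 1 ≤ 4).trans hs)] at hx
  exact_mod_cast hx

theorem isHsSolution_maximalSolution (hT : 0 ≤ T)
    (hTmax : ENNReal.ofReal T < maximalTime ε γ0 γ1 γ2 j0 lam a b c d s φ) :
    IsHsSolution ε γ0 γ1 γ2 j0 lam a b c d s T
      (maximalSolution ε γ0 γ1 γ2 j0 lam a b c d s φ) := by
  obtain ⟨U, hU, -, hu⟩ := exists_isModeSolution_of_lt_maximalTime hε hs hTmax
  exact hU.isHsSolution hs hT hu

theorem IsHsSolution.eq_maximalSolution (hv : IsHsSolution ε γ0 γ1 γ2 j0 lam a b c d s T v)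
    (hT : 0 < T) (hTmax : ENNReal.ofReal T < maximalTime ε γ0 γ1 γ2 j0 lam a b c d s φ)
    (h0 : v 0 = φ) {t : ℝ} (ht : t ∈ Icc 0 T) (x : ℝ) :
    v t x = maximalSolution ε γ0 γ1 γ2 j0 lam a b c d s φ t x := by
  obtain ⟨U, hU, hU0, hu⟩ := exists_isModeSolution_of_lt_maximalTime hε hs hTmax
  have hvx := (hv.2.1 t ht).eq_fourierSeries ((by norm_num : 1 ≤ 4).trans hs) x
  rw [hv.fc_eq hε hs hT hU (fun k => by rw [hU0, h0]) ht, ← hu t ht x] at hvx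
  exact_mod_cast hvx

theorem exists_ofReal_add_le_maximalTime (M : ℝ) :
    ∃ τ > 0, ∀ φ, ∀ t ≥ 0, ENNReal.ofReal t < maximalTime ε γ0 γ1 γ2 j0 lam a b c d s φ →
      hsNorm 4 (maximalSolution ε γ0 γ1 γ2 j0 lam a b c d s φ t) ≤ M →
      ENNReal.ofReal (t + τ) ≤ maximalTime ε γ0 γ1 γ2 j0 lam a b c d s φ := by
  obtain ⟨C, hC, hle⟩ := exists_wienerNorm_le_sobolev (E := ℂ) 3
  obtain ⟨τ, hτ, hcont⟩ := exists_ofReal_add_le_lifespan (isTimeLift_nonlinSeq j0 lam a b c d) hε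
    (linSymbol_re_le ε γ0 γ1 γ2) hs (hermitianSymm_linSymbol ε γ0 γ1 γ2)
    (lipschitzLoss_nonlinSeq j0 lam a b c d) (C * M).toNNReal
  refine ⟨τ, hτ, fun φ t ht htmax hM => hcont (fc φ) t ht htmax ?_⟩
  obtain ⟨U, hU, h0, hu⟩ := exists_isModeSolution_of_lt_maximalTime hε hs htmax
  have hmem : t ∈ Icc 0 t := ⟨ht, le_rfl⟩
  have hUt := hU.sobolevSummable.eval t
  have hfc : fc (maximalSolution ε γ0 γ1 γ2 j0 lam a b c d s φ t) = fun k => U k t :=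
    funext (fc_of_eq_fourierSeries
      (hUt.wienerNorm_ne_top ((by norm_num : 1 ≤ 4).trans hs)) (hu t hmem))
  rw [hsNorm_eq_sqrt_sobolevSq, hfc] at hM
  rw [hU.maximalCurve_eq (isTimeLift_nonlinSeq j0 lam a b c d) hε (linSymbol_re_le ε γ0 γ1 γ2) hs
    (lipschitzLoss_nonlinSeq j0 lam a b c d) h0 hmem]
  refine (hle _ (hUt.mono hs fun _ => le_rfl)).trans (ENNReal.ofReal_le_ofReal ?_)
  gcongr

theorem maximalTime_eq_top_or_le_hsNorm (hφ : MemHs s φ) :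
    maximalTime ε γ0 γ1 γ2 j0 lam a b c d s φ = ⊤ ∨ ∀ M : ℝ, ∃ t₀ : ℝ, 0 ≤ t₀ ∧
      ENNReal.ofReal t₀ < maximalTime ε γ0 γ1 γ2 j0 lam a b c d s φ ∧
      ∀ t : ℝ, t₀ < t → ENNReal.ofReal t < maximalTime ε γ0 γ1 γ2 j0 lam a b c d s φ →
        M ≤ hsNorm 4 (maximalSolution ε γ0 γ1 γ2 j0 lam a b c d s φ t) := by
  refine or_iff_not_imp_left.2 fun htop M => ?_
  obtain ⟨τ, hτ, hcont⟩ := exists_ofReal_add_le_maximalTime (γ0 := γ0) (γ1 := γ1) (γ2 := γ2)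
    (lam := lam) (a := a) (b := b) (c := c) (d := d) hε hs M
  set Tmax := maximalTime ε γ0 γ1 γ2 j0 lam a b c d s φ
  have hpos : 0 < Tmax.toReal := ENNReal.toReal_pos (maximalTime_pos hε hs hφ).ne' htop
  refine ⟨max 0 (Tmax.toReal - τ / 2), le_max_left _ _, ?_, fun t ht htmax => ?_⟩
  · rw [ENNReal.ofReal_lt_iff_lt_toReal (le_max_left _ _) htop]
    exact max_lt hpos (by linarith)
  · obtain ⟨ht0, htτ⟩ := max_lt_iff.1 ht
    by_contra! hM
    have hle := hcont φ t ht0.le htmax hM.le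
    rw [ENNReal.ofReal_le_iff_le_toReal htop] at hle
    linarith

end MaximalSolution

theorem lwp_regularized_general
    (γ0 γ1 γ2 : ℝ) (j0 : ℕ) (lam : Fin j0 → ℝ) (a b c d : Fin j0 → ℕ)
    (ε : ℝ) (hε : 0 < ε) (s : ℕ) (hs : 4 ≤ s) (φ : ℝ → ℝ) (hφ : MemHs s φ) :
    (∃ T : ℝ, 0 < T ∧ ∃ u : ℝ → ℝ → ℝ,
      u 0 = φ ∧
      IsSolutionReg ε γ0 γ1 γ2 j0 lam a b c d 0 T u ∧
      (∀ t ∈ Set.Icc (0 : ℝ) T, MemHs s (u t)) ∧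
      ContInHs s (Set.Icc (0 : ℝ) T) u ∧
      (∀ v : ℝ → ℝ → ℝ, v 0 = φ →
        IsSolutionReg ε γ0 γ1 γ2 j0 lam a b c d 0 T v →
        (∀ t ∈ Set.Icc (0 : ℝ) T, MemHs s (v t)) →
        ContInHs s (Set.Icc (0 : ℝ) T) v →
        ∀ t ∈ Set.Icc (0 : ℝ) T, ∀ x : ℝ, v t x = u t x)) ∧
    (∃ Tmax : ENNReal, 0 < Tmax ∧ ∃ u : ℝ → ℝ → ℝ,
      u 0 = φ ∧
      (∀ T : ℝ, 0 < T → ENNReal.ofReal T < Tmax →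
        IsSolutionReg ε γ0 γ1 γ2 j0 lam a b c d 0 T u ∧
        (∀ t ∈ Set.Icc (0 : ℝ) T, MemHs s (u t)) ∧
        ContInHs s (Set.Icc (0 : ℝ) T) u) ∧
      (∀ v : ℝ → ℝ → ℝ, ∀ T : ℝ, 0 < T → ENNReal.ofReal T < Tmax → v 0 = φ →
        IsSolutionReg ε γ0 γ1 γ2 j0 lam a b c d 0 T v →
        (∀ t ∈ Set.Icc (0 : ℝ) T, MemHs s (v t)) →
        ContInHs s (Set.Icc (0 : ℝ) T) v →
        ∀ t ∈ Set.Icc (0 : ℝ) T, ∀ x : ℝ, v t x = u t x) ∧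
      (Tmax = ⊤ ∨ ∀ M : ℝ, ∃ t₀ : ℝ, 0 ≤ t₀ ∧ ENNReal.ofReal t₀ < Tmax ∧
        ∀ t : ℝ, t₀ < t → ENNReal.ofReal t < Tmax → M ≤ hsNorm 4 (u t))) := by
  have hpos : 0 < maximalTime ε γ0 γ1 γ2 j0 lam a b c d s φ := maximalTime_pos hε hs hφ
  have hzero : maximalSolution ε γ0 γ1 γ2 j0 lam a b c d s φ 0 = φ :=
    maximalSolution_zero hε hs hφ
  obtain ⟨T, -, hT, hTmax⟩ := ENNReal.lt_iff_exists_real_btwn.1 hpos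
  have hT : 0 < T := ENNReal.ofReal_pos.1 hT
  obtain ⟨hsol, hm, hc⟩ := isHsSolution_maximalSolution hε hs hT.le hTmax
  exact ⟨⟨T, hT, _, hzero, hsol, hm, hc, fun v hv0 hv hvm hvc t ht x =>
      IsHsSolution.eq_maximalSolution hε hs ⟨hv, hvm, hvc⟩ hT hTmax hv0 ht x⟩,
    _, hpos, _, hzero, fun T hT hTmax => isHsSolution_maximalSolution hε hs hT.le hTmax,
    fun v T hT hTmax hv0 hv hvm hvc t ht x =>
      IsHsSolution.eq_maximalSolution hε hs ⟨hv, hvm, hvc⟩ hT hTmax hv0 ht x,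
    maximalTime_eq_top_or_le_hsNorm hε hs hφ⟩

/-- **Local well-posedness of the parabolic regularized equation.**
For `ε ∈ (0,1]`, `s ≥ 4` and real-valued `φ ∈ H^s(𝕋)` there exist `T > 0` and a unique
solution `u ∈ C([0,T];H^s(𝕋))` with `u(0) = φ`; moreover the solution extends uniquely to a
maximal interval `[0,Tε)` and either `Tε = ∞` or `liminf_{t→Tε} ‖u(t)‖_{H⁴} = ∞`. -/
theorem lwp_regularized
    (γ0 γ1 γ2 : ℝ) (hγ0 : γ0 ≠ 0)
    (j0 : ℕ) (lam : Fin j0 → ℝ) (a b c d : Fin j0 → ℕ)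
    (hp : ∀ j : Fin j0, 2 ≤ a j + b j + c j + d j)
    (ε : ℝ) (hε : ε ∈ Set.Ioc (0:ℝ) 1)
    (s : ℕ) (hs : 4 ≤ s)
    (φ : ℝ → ℝ) (hφ : MemHs s φ) :
    -- local existence and uniqueness
    (∃ T : ℝ, 0 < T ∧ ∃ u : ℝ → ℝ → ℝ,
      u 0 = φ ∧
      IsSolutionReg ε γ0 γ1 γ2 j0 lam a b c d 0 T u ∧
      (∀ t ∈ Set.Icc (0:ℝ) T, MemHs s (u t)) ∧
      ContInHs s (Set.Icc (0:ℝ) T) u ∧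
      (∀ v : ℝ → ℝ → ℝ, v 0 = φ →
        IsSolutionReg ε γ0 γ1 γ2 j0 lam a b c d 0 T v →
        (∀ t ∈ Set.Icc (0:ℝ) T, MemHs s (v t)) →
        ContInHs s (Set.Icc (0:ℝ) T) v →
        ∀ t ∈ Set.Icc (0:ℝ) T, ∀ x : ℝ, v t x = u t x)) ∧
    -- maximal extension and blow-up alternative
    (∃ Tmax : ENNReal, 0 < Tmax ∧ ∃ u : ℝ → ℝ → ℝ,
      u 0 = φ ∧
      (∀ T : ℝ, 0 < T → ENNReal.ofReal T < Tmax →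
        IsSolutionReg ε γ0 γ1 γ2 j0 lam a b c d 0 T u ∧
        (∀ t ∈ Set.Icc (0:ℝ) T, MemHs s (u t)) ∧
        ContInHs s (Set.Icc (0:ℝ) T) u) ∧
      (∀ v : ℝ → ℝ → ℝ, ∀ T : ℝ, 0 < T → ENNReal.ofReal T < Tmax → v 0 = φ →
        IsSolutionReg ε γ0 γ1 γ2 j0 lam a b c d 0 T v →
        (∀ t ∈ Set.Icc (0:ℝ) T, MemHs s (v t)) →
        ContInHs s (Set.Icc (0:ℝ) T) v →
        ∀ t ∈ Set.Icc (0:ℝ) T, ∀ x : ℝ, v t x = u t x) ∧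
      (Tmax = ⊤ ∨ ∀ M : ℝ, ∃ t₀ : ℝ, 0 ≤ t₀ ∧ ENNReal.ofReal t₀ < Tmax ∧
        ∀ t : ℝ, t₀ < t → ENNReal.ofReal t < Tmax → M ≤ hsNorm 4 (u t))) :=
  lwp_regularized_general γ0 γ1 γ2 j0 lam a b c d ε hε.1 s hs φ hφ

end FifthOrderStmt14
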